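/- The number of isomorphism classes of 6-dimensional nilpotent Lie algebras over a field k with char(k) ≠ 2 equals 26 + 4r, where r is the cardinality of k*/(k*)². -/

import Mathlib

/-- `br` is a Lie bracket on `kⁿ`: bilinear, alternating, and satisfying the Jacobi
identity (in Leibniz form). -/
def IsLieBracket (k : Type*) [Field k] {n : ℕ}
    (br : (Fin n → k) → (Fin n → k) → (Fin n → k)) : Prop :=
  (∀ x y z, br (x + y) z = br x z + br y z) ∧
  (∀ (c : k) (x y), br (c • x) y = c • br x y) ∧
  (∀ x y z, br x (y + z) = br x y + br x z) ∧
  (∀ (c : k) (x y), br x (c • y) = c • br x y) ∧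
  (∀ x, br x x = 0) ∧
  (∀ x y z, br x (br y z) = br (br x y) z + br y (br x z))

/-- The lower central series of a bracket on `kⁿ`. -/
noncomputable def lcs {k : Type*} [Field k] {n : ℕ}
    (br : (Fin n → k) → (Fin n → k) → (Fin n → k)) : ℕ → Submodule k (Fin n → k)
  | 0 => ⊤
  | m + 1 => Submodule.span k {w | ∃ x y, y ∈ lcs br m ∧ w = br x y}

/-- A bracket is nilpotent if its lower central series reaches `0`. -/
def IsNilpotentBracket {k : Type*} [Field k] {n : ℕ}
    (br : (Fin n → k) → (Fin n → k) → (Fin n → k)) : Prop :=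
  ∃ m, lcs br m = ⊥

/-- Two brackets on `kⁿ` are isomorphic if some linear automorphism of `kⁿ`
intertwines them. -/
def BracketIso {k : Type*} [Field k] {n : ℕ}
    (br br' : (Fin n → k) → (Fin n → k) → (Fin n → k)) : Prop :=
  ∃ e : (Fin n → k) ≃ₗ[k] (Fin n → k), ∀ x y, e (br x y) = br' (e x) (e y)

/-- The type of nilpotent Lie algebra structures on `kⁿ`. -/
def NilpLieStr (k : Type*) [Field k] (n : ℕ) : Type _ :=
  {br : (Fin n → k) → (Fin n → k) → (Fin n → k) // IsLieBracket k br ∧ IsNilpotentBracket br}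

/-!
A nilpotent Lie algebra is generated by any lift of a basis of `L / ⁅L, L⁆`. Distinguishing the
dimensions of the terms of the lower central series and normalizing the generators, one brings a
nilpotent Lie algebra of dimension 6 to one of 26 multiplication tables, four of which contain a
parameter `ε ∈ k`. The tables are told apart by the dimensions of five subspaces defined in every
Lie algebra. Within each of the four families, comparing determinants, discriminants or Pfaffians
shows that `ε` and `δ` give isomorphic algebras exactly if they differ by a non-zero square. The
non-zero squares have `1 + r` orbits on `k`, so there are `22 + 4 (1 + r)` isomorphism classes.
-/

namespace NilpotentLie

open Module

/-- The space `kⁿ`, equipped with the Lie algebra structure of a given bracket. -/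
def BracketSpace {k : Type*} [Field k] {n : ℕ} {br : (Fin n → k) → (Fin n → k) → (Fin n → k)}
    (_ : IsLieBracket k br) : Type _ := Fin n → k

namespace BracketSpace

variable {k : Type*} [Field k] {n : ℕ} {br : (Fin n → k) → (Fin n → k) → (Fin n → k)}
  (h : IsLieBracket k br)

instance : AddCommGroup (BracketSpace h) := inferInstanceAs (AddCommGroup (Fin n → k))

instance : Module k (BracketSpace h) := inferInstanceAs (Module k (Fin n → k))

instance : Module.Finite k (BracketSpace h) := inferInstanceAs (Module.Finite k (Fin n → k))

instance : LieRing (BracketSpace h) where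
  bracket := br
  add_lie := h.1
  lie_add := h.2.2.1
  lie_self := h.2.2.2.2.1
  leibniz_lie := h.2.2.2.2.2

instance : LieAlgebra k (BracketSpace h) where
  lie_smul := h.2.2.2.1

theorem finrank_eq : finrank k (BracketSpace h) = n :=
  (Module.finrank_fin_fun k : finrank k (Fin n → k) = n)

end BracketSpace

/-- An entry of a multiplication table on a basis `x₀, …, xₙ₋₁`. It prescribes
`⁅x_left, x_right⁆ = x_value` or, if it is `scaled`, `⁅x_left, x_right⁆ = ε x_value` for a
parameter `ε` common to the whole table. -/
structure Entry (n : ℕ) where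
  left : Fin n
  right : Fin n
  value : Fin n
  scaled : Bool

section Table

variable {k : Type*} [Field k] {n : ℕ} (ε : k) (T : List (Entry n))

/-- The coefficient of `x_value` prescribed by an entry. -/
def Entry.coeff (t : Entry n) : k :=
  bif t.scaled then ε else 1

/-- The bracket on `kⁿ` with the multiplication table `T`; brackets of basis vectors which are not
in the table vanish. -/
def tableBracket (x y : Fin n → k) (l : Fin n) : k :=
  (T.map fun t => if t.value = l then
    t.coeff ε * (x t.left * y t.right - x t.right * y t.left) else 0).sum

/-- A table is simple if no pair of basis vectors occurs twice, or with itself. -/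
def IsSimple : Prop :=
  (T.map fun t => s(t.left, t.right)).Nodup ∧ ∀ t ∈ T, t.left ≠ t.right

instance : Decidable (IsSimple T) := inferInstanceAs (Decidable (_ ∧ _))

/-- The entry of the table for the ordered pair `(i, j)`. -/
def lookup (i j : Fin n) : Option (Entry n) :=
  T.find? fun t => t.left = i ∧ t.right = j

/-- The value which an entry prescribes for a bracket of members of the family `y`. -/
def Entry.eval {L : Type*} [AddCommGroup L] [Module k L] (t : Entry n) (y : Fin n → L) : L :=
  bif t.scaled then ε • y t.value else y t.value

/-- The value which a table prescribes for the bracket of the `i`-th and the `j`-th member of the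
family `y`. -/
def tableValue {L : Type*} [AddCommGroup L] [Module k L] (y : Fin n → L) (i j : Fin n) : L :=
  match lookup T i j, lookup T j i with
  | some t, _ => t.eval ε y
  | none, some t => -t.eval ε y
  | none, none => 0

variable {ε T}

theorem tableBracket_cons (t : Entry n) (x y : Fin n → k) (l : Fin n) :
    tableBracket ε (t :: T) x y l = (if t.value = l then
      t.coeff ε * (x t.left * y t.right - x t.right * y t.left) else 0) + tableBracket ε T x y l :=
  rfl

theorem tableBracket_single_of_forall_ne {i j : Fin n}
    (h : ∀ t ∈ T, s(t.left, t.right) ≠ s(i, j)) :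
    tableBracket ε T (Pi.single i 1) (Pi.single j 1) = 0 := by
  ext l
  refine List.sum_eq_zero fun a ha => ?_
  obtain ⟨t, ht, rfl⟩ := List.mem_map.1 ha
  have hij := h t ht
  simp only [ne_eq, Sym2.eq_iff, not_or, not_and] at hij
  simp only [Pi.single_apply]
  split_ifs <;> grind

theorem IsSimple.tableBracket_single (hT : IsSimple T) {t : Entry n} (ht : t ∈ T) :
    tableBracket ε T (Pi.single t.left 1) (Pi.single t.right 1) =
      Pi.single t.value (t.coeff ε) := by
  obtain ⟨hT, hne⟩ := hT
  induction T with
  | nil => cases ht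
  | cons u T ih =>
    rw [List.map_cons, List.nodup_cons, List.mem_map] at hT
    ext l
    rw [tableBracket_cons]
    rcases List.mem_cons.1 ht with rfl | ht
    · have h0 := tableBracket_single_of_forall_ne (ε := ε) (T := T) fun u hu h => hT.1 ⟨u, hu, h⟩
      have hlr := hne t ht
      simp [h0, Pi.single_apply, hlr, hlr.symm, eq_comm]
    · rw [ih ht hT.2 fun t ht => hne t (List.mem_cons_of_mem _ ht), ite_eq_right_iff.2, zero_add]
      have hu : s(u.left, u.right) ≠ s(t.left, t.right) := fun h => hT.1 ⟨t, ht, h.symm⟩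
      simp only [ne_eq, Sym2.eq_iff, not_or, not_and] at hu
      intro
      simp only [Pi.single_apply]
      split_ifs <;> grind

theorem tableBracket_neg_swap (x y : Fin n → k) : tableBracket ε T y x = -tableBracket ε T x y := by
  ext l
  rw [Pi.neg_apply, tableBracket, tableBracket, List.sum_neg, List.map_map]
  refine congrArg List.sum (List.map_congr_left fun t _ => ?_)
  simp only [Function.comp_apply]
  split_ifs <;> ring

theorem isLieBracket_tableBracket
    (jacobi : ∀ x y z : Fin n → k, tableBracket ε T x (tableBracket ε T y z) =
      tableBracket ε T (tableBracket ε T x y) z + tableBracket ε T y (tableBracket ε T x z)) :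
    IsLieBracket k (tableBracket (k := k) ε T) := by
  have add_left (x y z : Fin n → k) :
      tableBracket ε T (x + y) z = tableBracket ε T x z + tableBracket ε T y z := by
    ext l
    rw [Pi.add_apply, tableBracket, tableBracket, tableBracket, ← List.sum_map_add]
    refine congrArg List.sum (List.map_congr_left fun t _ => ?_)
    simp only [Pi.add_apply]
    split_ifs <;> ring
  have smul_left (c : k) (x y : Fin n → k) :
      tableBracket ε T (c • x) y = c • tableBracket ε T x y := by
    ext l
    rw [Pi.smul_apply, tableBracket, tableBracket, List.smul_sum, List.map_map]
    refine congrArg List.sum (List.map_congr_left fun t _ => ?_)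
    simp only [Function.comp_apply, Pi.smul_apply, smul_eq_mul]
    split_ifs <;> ring
  refine ⟨add_left, smul_left, fun x y z => ?_, fun c x y => ?_, fun x => ?_, jacobi⟩
  · rw [tableBracket_neg_swap, add_left, neg_add, ← tableBracket_neg_swap, ← tableBracket_neg_swap]
  · rw [tableBracket_neg_swap, smul_left, ← smul_neg, ← tableBracket_neg_swap]
  · ext l
    refine List.sum_eq_zero fun a ha => ?_
    obtain ⟨t, -, rfl⟩ := List.mem_map.1 ha
    rw [mul_comm (x t.left), sub_self, mul_zero, ite_self]

theorem Entry.eval_eq_smul {L : Type*} [AddCommGroup L] [Module k L] (t : Entry n)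
    (y : Fin n → L) : t.eval ε y = t.coeff ε • y t.value := by
  cases h : t.scaled <;> simp [Entry.eval, Entry.coeff, h]

theorem mem_of_lookup_eq_some {i j : Fin n} {t : Entry n} (h : lookup T i j = some t) :
    t ∈ T ∧ t.left = i ∧ t.right = j :=
  ⟨List.mem_of_find?_eq_some h, by simpa using List.find?_some h⟩

theorem sym2_ne_of_lookup_eq_none {i j : Fin n} (hij : lookup T i j = none)
    (hji : lookup T j i = none) : ∀ t ∈ T, s(t.left, t.right) ≠ s(i, j) := by
  intro t ht h
  have h1 := List.find?_eq_none.1 hij t ht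
  have h2 := List.find?_eq_none.1 hji t ht
  simp only [decide_eq_true_eq] at h1 h2
  exact (Sym2.eq_iff.1 h).elim h1 h2

theorem IsSimple.tableBracket_single_single (hT : IsSimple T) (i j : Fin n) :
    tableBracket ε T (Pi.single i 1) (Pi.single j 1) =
      tableValue ε T (fun l => Pi.single l (1 : k)) i j := by
  have eval_single (t : Entry n) :
      t.eval ε (fun l => Pi.single l (1 : k)) = Pi.single t.value (t.coeff ε) := by
    rw [t.eval_eq_smul, ← Pi.single_smul, smul_eq_mul, mul_one]
  unfold tableValue
  split
  case h_1 hij =>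
    obtain ⟨ht, rfl, rfl⟩ := mem_of_lookup_eq_some hij
    rw [hT.tableBracket_single ht, eval_single]
  case h_2 t hij hji =>
    obtain ⟨ht, rfl, rfl⟩ := mem_of_lookup_eq_some hji
    rw [tableBracket_neg_swap, hT.tableBracket_single ht, eval_single]
  case h_3 hij hji => exact tableBracket_single_of_forall_ne (sym2_ne_of_lookup_eq_none hij hji)

theorem map_tableValue {L M : Type*} [AddCommGroup L] [Module k L] [AddCommGroup M] [Module k M]
    (φ : L →ₗ[k] M) (y : Fin n → L) (i j : Fin n) :
    φ (tableValue ε T y i j) = tableValue ε T (fun l => φ (y l)) i j := by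
  unfold tableValue
  split <;> simp only [Entry.eval_eq_smul, map_neg, map_smul, map_zero]

end Table

section CanonicalSubspaces

/-- Formal expressions for subspaces which can be defined in every Lie algebra. The subspace
`colon A B` consists of all `x` with `⁅x, B⁆ ⊆ A`. -/
inductive CanonicalSubspace
  | bot
  | top
  | lieTop (B : CanonicalSubspace)
  | colon (A B : CanonicalSubspace)

namespace CanonicalSubspace

variable (k : Type*) [Field k] (L : Type*) [LieRing L] [LieAlgebra k L]

/-- The subspace of the Lie algebra `L` denoted by a formal expression. -/
def eval : CanonicalSubspace → Submodule k L
  | bot => ⊥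
  | top => ⊤
  | lieTop B => Submodule.span k {w | ∃ x y : L, y ∈ B.eval ∧ ⁅x, y⁆ = w}
  | colon A B =>
    { carrier := {x | ∀ y ∈ B.eval, ⁅x, y⁆ ∈ A.eval}
      add_mem' := fun hx hy z hz => by
        rw [add_lie]; exact add_mem (hx z hz) (hy z hz)
      zero_mem' := fun z _ => by rw [zero_lie]; exact zero_mem _
      smul_mem' := fun c x hx z hz => by rw [smul_lie]; exact Submodule.smul_mem _ c (hx z hz) }

variable {k L} {L' : Type*} [LieRing L'] [LieAlgebra k L']

theorem map_eval (f : L ≃ₗ⁅k⁆ L') (E : CanonicalSubspace) :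
    (E.eval k L).map (f.toLinearEquiv : L →ₗ[k] L') = E.eval k L' := by
  induction E with
  | bot => exact Submodule.map_bot _
  | top => exact (Submodule.map_top _).trans (LinearMap.range_eq_top.2 f.surjective)
  | lieTop B ihB =>
    refine (Submodule.map_span _ _).trans (congrArg _ (Set.ext fun w => ⟨?_, ?_⟩))
    · rintro ⟨_, ⟨x, y, hy, rfl⟩, rfl⟩
      exact ⟨f x, f y, ihB ▸ Submodule.mem_map_of_mem hy, (f.map_lie x y).symm⟩
    · rintro ⟨x, y, hy, rfl⟩
      obtain ⟨y', hy', rfl⟩ := ihB.ge hy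
      obtain ⟨x, rfl⟩ := f.surjective x
      exact ⟨⁅x, y'⁆, ⟨x, y', hy', rfl⟩, f.map_lie x y'⟩
  | colon A B ihA ihB =>
    refine Submodule.ext fun w => ⟨?_, fun hw => ?_⟩
    · rintro ⟨x, hx, rfl⟩ _ hy
      obtain ⟨y, hy', rfl⟩ := ihB.ge hy
      exact ihA ▸ ⟨_, hx y hy', f.map_lie x y⟩
    · obtain ⟨x, rfl⟩ := f.surjective w
      refine ⟨x, fun y hy => ?_, rfl⟩
      obtain ⟨z, hz, hzw⟩ := ihA.ge (hw (f y) (ihB ▸ Submodule.mem_map_of_mem hy))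
      exact f.injective (hzw.trans (f.map_lie x y).symm) ▸ hz

theorem finrank_eval_eq (f : L ≃ₗ⁅k⁆ L') (E : CanonicalSubspace) :
    finrank k (E.eval k L) = finrank k (E.eval k L') := by
  rw [← map_eval f E]
  exact (f.toLinearEquiv.finrank_map_eq _).symm

end CanonicalSubspace
end CanonicalSubspaces

section Shape

variable {k L : Type*} [Field k] [LieRing L] [LieAlgebra k L] {n : ℕ} (b : Basis (Fin n) k L)
  {R : Fin n → Fin n → Option (Fin n)}

/-- The subspace spanned by the members of the basis `b` with index in `S`. -/
def coord (S : Finset (Fin n)) : Submodule k L :=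
  Submodule.span k (b '' S)

/-- The bracket of any two members of the basis `b` is zero or a multiple of another one, as
prescribed by `R`. -/
def HasShape (R : Fin n → Fin n → Option (Fin n)) : Prop :=
  ∀ i j, ∃ c : k, c ≠ 0 ∧ ⁅b i, b j⁆ = (R i j).elim 0 fun l => c • b l

namespace CanonicalSubspace

/-- The indices of the basis vectors which span a canonical subspace of a Lie algebra of shape `R`,
provided that the expression is triangular. -/
def support (R : Fin n → Fin n → Option (Fin n)) : CanonicalSubspace → Finset (Fin n)
  | bot => ∅
  | top => Finset.univ
  | lieTop B => Finset.univ.biUnion fun i => (B.support R).biUnion fun j => (R i j).toFinset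
  | colon A B => {i | ∀ j ∈ B.support R, ∀ l ∈ R i j, l ∈ A.support R}

/-- The linear equations defining every occurring subspace `colon A B` are triangular, so that it
is spanned by basis vectors. -/
def IsTriangular (R : Fin n → Fin n → Option (Fin n)) : CanonicalSubspace → Prop
  | bot => True
  | top => True
  | lieTop B => B.IsTriangular R
  | colon A B => A.IsTriangular R ∧ B.IsTriangular R ∧ ∀ i ∉ (colon A B).support R,
      ∃ j ∈ B.support R, ∃ l ∈ R i j, l ∉ A.support R ∧ ∀ i', l ∈ R i' j → i' ≤ i

instance decidableIsTriangular (R : Fin n → Fin n → Option (Fin n)) :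
    ∀ E : CanonicalSubspace, Decidable (E.IsTriangular R)
  | bot => inferInstanceAs (Decidable True)
  | top => inferInstanceAs (Decidable True)
  | lieTop B => decidableIsTriangular R B
  | colon A B =>
    have := decidableIsTriangular R A
    have := decidableIsTriangular R B
    inferInstanceAs (Decidable (_ ∧ _ ∧ _))

end CanonicalSubspace

variable {b}

theorem mem_coord {S : Finset (Fin n)} {x : L} : x ∈ coord b S ↔ ∀ i ∉ S, b.repr x i = 0 := by
  rw [coord, b.mem_span_image]
  exact ⟨fun h i hi => by_contra fun hx => hi (h (Finsupp.mem_support_iff.2 hx)),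
    fun h i hi => by_contra fun hS => Finsupp.mem_support_iff.1 hi (h i hS)⟩

theorem basis_mem_coord {S : Finset (Fin n)} {i : Fin n} (hi : i ∈ S) : b i ∈ coord b S :=
  Submodule.subset_span (Set.mem_image_of_mem b hi)

theorem finrank_coord (S : Finset (Fin n)) : finrank k (coord b S) = S.card := by
  have hli : LinearIndependent k fun i : S => b i :=
    b.linearIndependent.comp _ Subtype.val_injective
  rw [coord, Set.image_eq_range]
  exact (finrank_span_eq_card hli).trans (Fintype.card_coe S)

theorem lie_mem_of_forall_basis {A : Submodule k L} {S : Finset (Fin n)} {x : L}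
    (hA : ∀ j ∈ S, ⁅x, b j⁆ ∈ A) {y : L} (hy : y ∈ coord b S) : ⁅x, y⁆ ∈ A := by
  have hle : coord b S ≤ A.comap (LieModule.toEnd k L L x) := by
    refine Submodule.span_le.2 ?_
    rintro _ ⟨j, hj, rfl⟩
    exact hA j hj
  exact hle hy

theorem repr_lie_basis (x : L) (j l : Fin n) :
    b.repr ⁅x, b j⁆ l = ∑ i, b.repr x i * b.repr ⁅b i, b j⁆ l := by
  conv_lhs => rw [← b.sum_repr x]
  simp only [sum_lie, smul_lie, map_sum, map_smul, Finsupp.coe_finsetSum, Finset.sum_apply,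
    Finsupp.smul_apply, smul_eq_mul]

theorem HasShape.exists_eq_smul (hR : HasShape b R) {i j l : Fin n} (hl : l ∈ R i j) :
    ∃ c : k, c ≠ 0 ∧ ⁅b i, b j⁆ = c • b l := by
  obtain ⟨c, hc, h⟩ := hR i j
  exact ⟨c, hc, by rw [h, Option.mem_def.1 hl]; rfl⟩

theorem HasShape.repr_eq_zero (hR : HasShape b R) {i j l : Fin n} (hl : l ∉ R i j) :
    b.repr ⁅b i, b j⁆ l = 0 := by
  obtain ⟨c, -, h⟩ := hR i j
  rw [h]
  cases hm : R i j with
  | none => rw [Option.elim_none, map_zero, Finsupp.zero_apply]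
  | some m =>
    have hml : m ≠ l := by rintro rfl; exact hl hm
    rw [Option.elim_some, map_smul, Finsupp.smul_apply, b.repr_self, Finsupp.single_eq_of_ne' hml,
      smul_zero]

open CanonicalSubspace

theorem HasShape.eval_lieTop (hR : HasShape b R) {B : CanonicalSubspace}
    (hB : B.eval k L = coord b (B.support R)) :
    (lieTop B).eval k L = coord b ((lieTop B).support R) := by
  apply le_antisymm <;> refine Submodule.span_le.2 ?_
  · rintro _ ⟨x, y, hy, rfl⟩
    refine lie_mem_of_forall_basis (fun j hj => mem_coord.2 fun l hl => ?_) (hB.le hy)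
    rw [repr_lie_basis]
    refine Finset.sum_eq_zero fun i _ => mul_eq_zero_of_right _ (hR.repr_eq_zero fun hij => hl ?_)
    exact Finset.mem_biUnion.2 ⟨i, Finset.mem_univ i, Finset.mem_biUnion.2
      ⟨j, hj, Option.mem_toFinset.2 hij⟩⟩
  · rintro _ ⟨l, hl, rfl⟩
    obtain ⟨i, -, hl⟩ := Finset.mem_biUnion.1 hl
    obtain ⟨j, hj, hl⟩ := Finset.mem_biUnion.1 hl
    obtain ⟨c, hc, hij⟩ := hR.exists_eq_smul (Option.mem_toFinset.1 hl)
    rw [← inv_smul_smul₀ hc (b l), ← hij]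
    exact Submodule.smul_mem _ _ (Submodule.subset_span
      ⟨_, _, hB.ge (basis_mem_coord hj), rfl⟩)

theorem HasShape.eval_colon (hR : HasShape b R) {A B : CanonicalSubspace}
    (hA : A.eval k L = coord b (A.support R)) (hB : B.eval k L = coord b (B.support R))
    (htri : ∀ i ∉ (colon A B).support R, ∃ j ∈ B.support R, ∃ l ∈ R i j, l ∉ A.support R ∧
      ∀ i', l ∈ R i' j → i' ≤ i) :
    (colon A B).eval k L = coord b ((colon A B).support R) := by
  ext x
  constructor
  · intro hx
    refine mem_coord.2 fun i => ?_
    induction i using WellFoundedLT.induction with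
    | ind i ih =>
      intro hi
      obtain ⟨j, hj, l, hl, hlA, hmax⟩ := htri i hi
      obtain ⟨c, hc, hij⟩ := hR.exists_eq_smul hl
      have hsum : b.repr ⁅x, b j⁆ l = 0 :=
        mem_coord.1 (hA.le (hx _ (hB.ge (basis_mem_coord hj)))) l hlA
      rw [repr_lie_basis, Finset.sum_eq_single i _ (fun h => (h (Finset.mem_univ i)).elim), hij,
        map_smul, Finsupp.smul_apply, b.repr_self, Finsupp.single_eq_same, smul_eq_mul, mul_one]
        at hsum
      · exact (mul_eq_zero.1 hsum).resolve_right hc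
      · intro i' _ hi'
        by_cases hl' : l ∈ R i' j
        · exact mul_eq_zero_of_left (ih i' (lt_of_le_of_ne (hmax i' hl') hi') fun hmem =>
            hlA ((Finset.mem_filter.1 hmem).2 j hj l hl')) _
        · exact mul_eq_zero_of_right _ (hR.repr_eq_zero hl')
  · intro hx y hy
    refine lie_mem_of_forall_basis (fun j hj => hA.ge (mem_coord.2 fun l hl => ?_)) (hB.le hy)
    rw [repr_lie_basis]
    refine Finset.sum_eq_zero fun i _ => ?_
    by_cases hi : i ∈ (colon A B).support R
    · exact mul_eq_zero_of_right _ (hR.repr_eq_zero fun hij =>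
        hl ((Finset.mem_filter.1 hi).2 j hj l hij))
    · exact mul_eq_zero_of_left (mem_coord.1 hx i hi) _

theorem HasShape.eval_eq_coord (hR : HasShape b R) {E : CanonicalSubspace}
    (hE : E.IsTriangular R) : E.eval k L = coord b (E.support R) := by
  induction E with
  | bot =>
    rw [coord, CanonicalSubspace.support, Finset.coe_empty, Set.image_empty, Submodule.span_empty]
    rfl
  | top =>
    rw [coord, CanonicalSubspace.support, Finset.coe_univ, Set.image_univ, b.span_eq]
    rfl
  | lieTop B ihB => exact hR.eval_lieTop (ihB hE)
  | colon A B ihA ihB => exact hR.eval_colon (ihA hE.1) (ihB hE.2.1) hE.2.2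

theorem HasShape.finrank_eval (hR : HasShape b R) {E : CanonicalSubspace}
    (hE : E.IsTriangular R) : finrank k (E.eval k L) = (E.support R).card := by
  rw [hR.eval_eq_coord hE, finrank_coord]

end Shape

/-- The isomorphism types of nilpotent Lie algebras of dimension 6 in the notation of de Graaf's
classification, with `L5_i` for the sum of `L_{5,i}` and an abelian line. -/
inductive ModelType
  | L5_1 | L5_2 | L5_3 | L5_4 | L5_5 | L5_6 | L5_7 | L5_8 | L5_9
  | L6_10 | L6_11 | L6_12 | L6_13 | L6_14 | L6_15 | L6_16 | L6_17 | L6_18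
  | L6_19 | L6_20 | L6_21 | L6_22 | L6_23 | L6_24 | L6_25 | L6_26
  deriving DecidableEq

/-- The multiplication tables of the classification. -/
def ModelType.table : ModelType → List (Entry 6)
  | L5_1 => []
  | L5_2 => [⟨0, 1, 2, false⟩]
  | L5_3 => [⟨0, 1, 2, false⟩, ⟨0, 2, 3, false⟩]
  | L5_4 => [⟨0, 1, 4, false⟩, ⟨2, 3, 4, false⟩]
  | L5_5 => [⟨0, 1, 2, false⟩, ⟨0, 2, 4, false⟩, ⟨1, 3, 4, false⟩]
  | L5_6 => [⟨0, 1, 2, false⟩, ⟨0, 2, 4, false⟩, ⟨0, 4, 5, false⟩, ⟨1, 2, 5, false⟩]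
  | L5_7 => [⟨0, 1, 2, false⟩, ⟨0, 2, 4, false⟩, ⟨0, 4, 5, false⟩]
  | L5_8 => [⟨0, 1, 3, false⟩, ⟨0, 2, 4, false⟩]
  | L5_9 => [⟨0, 1, 2, false⟩, ⟨0, 2, 4, false⟩, ⟨1, 2, 5, false⟩]
  | L6_10 => [⟨0, 1, 2, false⟩, ⟨0, 2, 5, false⟩, ⟨3, 4, 5, false⟩]
  | L6_11 =>
    [⟨0, 1, 2, false⟩, ⟨0, 2, 4, false⟩, ⟨0, 4, 5, false⟩, ⟨1, 2, 5, false⟩, ⟨1, 3, 5, false⟩]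
  | L6_12 => [⟨0, 1, 2, false⟩, ⟨0, 2, 4, false⟩, ⟨0, 4, 5, false⟩, ⟨1, 3, 5, false⟩]
  | L6_13 =>
    [⟨0, 1, 2, false⟩, ⟨0, 2, 4, false⟩, ⟨0, 4, 5, false⟩, ⟨1, 3, 4, false⟩, ⟨2, 3, 5, false⟩]
  | L6_14 =>
    [⟨0, 1, 2, false⟩, ⟨0, 2, 3, false⟩, ⟨0, 3, 4, false⟩, ⟨1, 2, 4, false⟩, ⟨1, 4, 5, false⟩,
      ⟨3, 2, 5, false⟩]
  | L6_15 =>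
    [⟨0, 1, 2, false⟩, ⟨0, 2, 3, false⟩, ⟨0, 3, 4, false⟩, ⟨0, 4, 5, false⟩, ⟨1, 2, 4, false⟩,
      ⟨1, 3, 5, false⟩]
  | L6_16 =>
    [⟨0, 1, 2, false⟩, ⟨0, 2, 3, false⟩, ⟨0, 3, 4, false⟩, ⟨1, 4, 5, false⟩, ⟨3, 2, 5, false⟩]
  | L6_17 =>
    [⟨0, 1, 2, false⟩, ⟨0, 2, 3, false⟩, ⟨0, 3, 4, false⟩, ⟨0, 4, 5, false⟩, ⟨1, 2, 5, false⟩]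
  | L6_18 => [⟨0, 1, 2, false⟩, ⟨0, 2, 3, false⟩, ⟨0, 3, 4, false⟩, ⟨0, 4, 5, false⟩]
  | L6_19 => [⟨0, 1, 3, false⟩, ⟨0, 2, 4, false⟩, ⟨1, 3, 5, false⟩, ⟨2, 4, 5, true⟩]
  | L6_20 => [⟨0, 1, 3, false⟩, ⟨0, 2, 4, false⟩, ⟨0, 4, 5, false⟩, ⟨1, 3, 5, false⟩]
  | L6_21 =>
    [⟨0, 1, 2, false⟩, ⟨0, 2, 3, false⟩, ⟨1, 2, 4, false⟩, ⟨0, 3, 5, false⟩, ⟨1, 4, 5, true⟩]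
  | L6_22 => [⟨0, 1, 4, false⟩, ⟨0, 2, 5, false⟩, ⟨2, 3, 4, false⟩, ⟨1, 3, 5, true⟩]
  | L6_23 => [⟨0, 1, 3, false⟩, ⟨0, 2, 4, false⟩, ⟨0, 3, 5, false⟩, ⟨1, 2, 5, false⟩]
  | L6_24 =>
    [⟨0, 1, 2, false⟩, ⟨0, 2, 4, false⟩, ⟨1, 2, 5, false⟩, ⟨1, 3, 4, false⟩, ⟨0, 3, 5, true⟩]
  | L6_25 => [⟨0, 1, 3, false⟩, ⟨0, 2, 4, false⟩, ⟨0, 3, 5, false⟩]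
  | L6_26 => [⟨0, 1, 3, false⟩, ⟨0, 2, 4, false⟩, ⟨1, 2, 5, false⟩]

instance : Fintype ModelType where
  elems := {.L5_1, .L5_2, .L5_3, .L5_4, .L5_5, .L5_6, .L5_7, .L5_8, .L5_9, .L6_10, .L6_11, .L6_12,
    .L6_13, .L6_14, .L6_15, .L6_16, .L6_17, .L6_18, .L6_19, .L6_20, .L6_21, .L6_22, .L6_23, .L6_24,
    .L6_25, .L6_26}
  complete := fun m => by cases m <;> decide

theorem ModelType.isSimple_table (m : ModelType) : IsSimple m.table := by
  cases m <;> decide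

set_option maxHeartbeats 4000000 in
-- The Jacobi identity is expanded coordinatewise for each of the 26 tables.
theorem tableBracket_jacobi {k : Type*} [Field k] (ε : k) (m : ModelType) (x y z : Fin 6 → k) :
    tableBracket ε m.table x (tableBracket ε m.table y z) =
      tableBracket ε m.table (tableBracket ε m.table x y) z +
        tableBracket ε m.table y (tableBracket ε m.table x z) := by
  ext l
  cases m <;>
    simp only [ModelType.table, tableBracket, Entry.coeff, List.map_cons, List.map_nil,
      List.sum_cons, Pi.add_apply, cond_true, cond_false] <;>
    fin_cases l <;>
    simp only [List.sum_nil, Fin.reduceFinMk, Fin.reduceEq, Fin.zero_eta,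
      Fin.mk_one, if_true, if_false] <;>
    ring

section Model

/-- The shape of a bracket with multiplication table `T` and non-zero parameter. -/
def tableShape {n : ℕ} (T : List (Entry n)) (i j : Fin n) : Option (Fin n) :=
  ((lookup T i j).or (lookup T j i)).map Entry.value

theorem hasShape_tableShape {k L : Type*} [Field k] [LieRing L] [LieAlgebra k L] {n : ℕ}
    {b : Basis (Fin n) k L} {ε : k} (hε : ε ≠ 0) {T : List (Entry n)}
    (hT : ∀ i j, ⁅b i, b j⁆ = tableValue ε T b i j) : HasShape b (tableShape T) := by
  have coeff_ne_zero (t : Entry n) : t.coeff ε ≠ 0 := by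
    cases h : t.scaled <;> simp [Entry.coeff, h, hε]
  intro i j
  rw [hT, tableShape, tableValue]
  split
  case h_1 _ t hij =>
    exact ⟨t.coeff ε, coeff_ne_zero t, by rw [hij, t.eval_eq_smul]; rfl⟩
  case h_2 t hij hji =>
    exact ⟨-t.coeff ε, neg_ne_zero.2 (coeff_ne_zero t), by
      rw [hij, hji, t.eval_eq_smul, ← neg_smul]; rfl⟩
  case h_3 hij hji => exact ⟨1, one_ne_zero, by rw [hij, hji]; rfl⟩

theorem tableBracket_zero {k : Type*} [Field k] {n : ℕ} (ε : k) (T : List (Entry n)) :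
    tableBracket 0 T = tableBracket ε (T.filter (!·.scaled)) := by
  induction T with
  | nil => rfl
  | cons t T ih =>
    ext x y l
    cases ht : t.scaled <;> simp [ht, tableBracket_cons, ih, Entry.coeff]

/-- The Lie algebra of type `m` over `k` with parameter `ε`, which matters for four types only. -/
abbrev Model {k : Type*} [Field k] (ε : k) (m : ModelType) : Type _ :=
  BracketSpace (isLieBracket_tableBracket (tableBracket_jacobi ε m))

namespace Model

variable {k : Type*} [Field k] {ε δ : k} {m m' : ModelType}

variable (ε m) in
/-- The basis of a model to which its multiplication table refers. -/
noncomputable def basis : Basis (Fin 6) k (Model ε m) := Pi.basisFun k (Fin 6)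

theorem basis_apply (i : Fin 6) : basis ε m i = (Pi.single i 1 : Fin 6 → k) :=
  Pi.basisFun_apply k (Fin 6) i

theorem lie_basis (i j : Fin 6) :
    ⁅basis ε m i, basis ε m j⁆ = tableValue ε m.table (basis ε m) i j := by
  rw [funext (basis_apply (ε := ε) (m := m))]
  exact m.isSimple_table.tableBracket_single_single i j

end Model

/-- The entries of the multiplication table which do not vanish, where `z` tells whether the
parameter is zero. -/
def ModelType.activeTable (m : ModelType) (z : Bool) : List (Entry 6) :=
  bif z then m.table.filter (!·.scaled) else m.table

theorem Model.exists_hasShape {k : Type*} [Field k] (ε : k) (m : ModelType) :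
    ∃ z, HasShape (basis ε m) (tableShape (m.activeTable z)) := by
  by_cases hε : ε = 0
  · refine ⟨true, hasShape_tableShape one_ne_zero fun i j => ?_⟩
    have hT : IsSimple (m.activeTable true) := by
      refine ⟨m.isSimple_table.1.sublist (List.filter_sublist.map _), fun t ht => ?_⟩
      exact m.isSimple_table.2 t (List.mem_of_mem_filter ht)
    subst hε
    have hbr := congrFun₂ (tableBracket_zero 1 m.table) (Pi.single i (1 : k)) (Pi.single j 1)
    rw [funext (basis_apply (ε := (0 : k)) (m := m))]
    exact hbr.trans (hT.tableBracket_single_single i j)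
  · exact ⟨false, hasShape_tableShape hε lie_basis⟩

section Separation

open CanonicalSubspace

/-- Five canonical subspaces whose dimensions separate the types of the classification; they were
found by a search through expressions of small size. -/
def separatingSubspace : Fin 5 → CanonicalSubspace :=
  ![lieTop top,
    colon bot (colon bot (lieTop top)),
    colon bot (colon bot (lieTop (lieTop (lieTop top)))),
    colon (lieTop (lieTop top)) (colon bot (lieTop top)),
    colon (colon bot top) (lieTop top)]

theorem isTriangular_separatingSubspace (m : ModelType) (z : Bool) (i : Fin 5) :
    (separatingSubspace i).IsTriangular (tableShape (m.activeTable z)) := by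
  revert m z i
  decide +kernel

theorem ModelType.eq_of_card_support_eq {m m' : ModelType} {z z' : Bool}
    (h : ∀ i, ((separatingSubspace i).support (tableShape (m.activeTable z))).card =
      ((separatingSubspace i).support (tableShape (m'.activeTable z'))).card) : m = m' := by
  revert m m' z z'
  decide +kernel

theorem Model.type_eq {k : Type*} [Field k] {ε δ : k} {m m' : ModelType}
    (f : Model ε m ≃ₗ⁅k⁆ Model δ m') : m = m' := by
  obtain ⟨z, hz⟩ := exists_hasShape ε m
  obtain ⟨z', hz'⟩ := exists_hasShape δ m'
  refine ModelType.eq_of_card_support_eq (z := z) (z' := z') fun i => ?_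
  rw [← hz.finrank_eval (isTriangular_separatingSubspace m z i),
    ← hz'.finrank_eval (isTriangular_separatingSubspace m' z' i), finrank_eval_eq f]

end Separation
end Model

section Families

variable {k : Type*} [Field k] {ε δ : k}

theorem tableBracket_L6_19 (x y : Fin 6 → k) : tableBracket δ ModelType.L6_19.table x y =
    ![0, 0, 0, x 0 * y 1 - x 1 * y 0, x 0 * y 2 - x 2 * y 0,
      x 1 * y 3 - x 3 * y 1 + δ * (x 2 * y 4 - x 4 * y 2)] := by
  ext l
  fin_cases l <;> simp [ModelType.table, tableBracket, Entry.coeff]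

theorem tableBracket_L6_21 (x y : Fin 6 → k) : tableBracket δ ModelType.L6_21.table x y =
    ![0, 0, x 0 * y 1 - x 1 * y 0, x 0 * y 2 - x 2 * y 0, x 1 * y 2 - x 2 * y 1,
      x 0 * y 3 - x 3 * y 0 + δ * (x 1 * y 4 - x 4 * y 1)] := by
  ext l
  fin_cases l <;> simp [ModelType.table, tableBracket, Entry.coeff]

theorem tableBracket_L6_22 (x y : Fin 6 → k) : tableBracket δ ModelType.L6_22.table x y =
    ![0, 0, 0, 0, x 0 * y 1 - x 1 * y 0 + (x 2 * y 3 - x 3 * y 2),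
      x 0 * y 2 - x 2 * y 0 + δ * (x 1 * y 3 - x 3 * y 1)] := by
  ext l
  fin_cases l <;> simp [ModelType.table, tableBracket, Entry.coeff]

theorem tableBracket_L6_24 (x y : Fin 6 → k) : tableBracket δ ModelType.L6_24.table x y =
    ![0, 0, x 0 * y 1 - x 1 * y 0, 0, x 0 * y 2 - x 2 * y 0 + (x 1 * y 3 - x 3 * y 1),
      x 1 * y 2 - x 2 * y 1 + δ * (x 0 * y 3 - x 3 * y 0)] := by
  ext l
  fin_cases l <;> simp [ModelType.table, tableBracket, Entry.coeff]

theorem discriminant_identity {q₁ q₂ r₁ r₂ a b c d N : k} (h₁₁ : q₁ * a + δ * (q₂ * b) = N)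
    (h₁₂ : q₁ * c + δ * (q₂ * d) = 0) (h₂₂ : r₁ * c + δ * (r₂ * d) = ε * N) :
    ε * N ^ 2 = δ * ((q₁ * r₂ - q₂ * r₁) * (a * d - b * c)) := by
  linear_combination (-N) * h₂₂ - (r₁ * c + δ * (r₂ * d)) * h₁₁ + (r₁ * a + δ * (r₂ * b)) * h₁₂

theorem tableBracket_tableBracket_L6_19 (x y z : Fin 6 → k) :
    tableBracket δ ModelType.L6_19.table x (tableBracket δ ModelType.L6_19.table y z) =
      Pi.single 5 (x 1 * (y 0 * z 1 - y 1 * z 0) + δ * (x 2 * (y 0 * z 2 - y 2 * z 0))) := by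
  rw [tableBracket_L6_19, tableBracket_L6_19]
  ext l
  fin_cases l <;> simp

theorem tableBracket_tableBracket_L6_21 (x y z w : Fin 6 → k) :
    tableBracket δ ModelType.L6_21.table x (tableBracket δ ModelType.L6_21.table y
      (tableBracket δ ModelType.L6_21.table z w)) =
        Pi.single 5 (x 0 * (y 0 * (z 0 * w 1 - z 1 * w 0)) +
          δ * (x 1 * (y 1 * (z 0 * w 1 - z 1 * w 0)))) := by
  rw [tableBracket_L6_21, tableBracket_L6_21, tableBracket_L6_21]
  ext l
  fin_cases l <;> simp

variable {y : Fin 6 → Fin 6 → k}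

theorem exists_sq_of_L6_19 (h0 : y 5 ≠ 0) (hy : ∀ i j,
    tableBracket δ ModelType.L6_19.table (y i) (y j) = tableValue ε ModelType.L6_19.table y i j) :
    ∃ s t : k, s ≠ 0 ∧ ε * s ^ 2 = δ * t ^ 2 := by
  have h₁₁ : _ = y 5 := (congrArg _ (hy 0 1)).trans (hy 1 3)
  have h₁₂ : _ = (0 : Fin 6 → k) := (congrArg _ (hy 0 2)).trans (hy 1 4)
  have h₂₂ : _ = ε • y 5 := (congrArg _ (hy 0 2)).trans (hy 2 4)
  have hcomm : _ = (0 : Fin 6 → k) := hy 1 2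
  simp only [tableBracket_tableBracket_L6_19] at h₁₁ h₁₂ h₂₂
  rw [Pi.single_eq_zero_iff] at h₁₂
  rw [← h₁₁, ← Pi.single_smul, Pi.single_inj, smul_eq_mul] at h₂₂
  rw [tableBracket_L6_19] at hcomm
  have hcomm₃ : y 1 0 * y 2 1 - y 1 1 * y 2 0 = 0 := congrFun hcomm 3
  have hcomm₄ : y 1 0 * y 2 2 - y 1 2 * y 2 0 = 0 := congrFun hcomm 4
  refine ⟨_, y 0 0 * (y 1 1 * y 2 2 - y 1 2 * y 2 1), ?_,
    (discriminant_identity rfl h₁₂ h₂₂).trans ?_⟩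
  · intro hN
    exact h0 (by rw [← h₁₁, hN, Pi.single_zero])
  · linear_combination δ * (y 1 1 * y 2 2 - y 1 2 * y 2 1) * y 0 0 *
      (y 0 2 * hcomm₃ - y 0 1 * hcomm₄)

theorem exists_sq_of_L6_21 (h0 : y 5 ≠ 0) (hy : ∀ i j,
    tableBracket δ ModelType.L6_21.table (y i) (y j) = tableValue ε ModelType.L6_21.table y i j) :
    ∃ s t : k, s ≠ 0 ∧ ε * s ^ 2 = δ * t ^ 2 := by
  have h₂ : _ = y 2 := hy 0 1
  have h₃ : _ = y 3 := (congrArg _ h₂).trans (hy 0 2)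
  have h₄ : _ = y 4 := (congrArg _ h₂).trans (hy 1 2)
  have h₁₁ : _ = y 5 := (congrArg _ h₃).trans (hy 0 3)
  have h₁₂ : _ = (0 : Fin 6 → k) := (congrArg _ h₄).trans (hy 0 4)
  have h₂₂ : _ = ε • y 5 := (congrArg _ h₄).trans (hy 1 4)
  simp only [tableBracket_tableBracket_L6_21] at h₁₁ h₁₂ h₂₂
  rw [Pi.single_eq_zero_iff] at h₁₂
  rw [← h₁₁, ← Pi.single_smul, Pi.single_inj, smul_eq_mul] at h₂₂
  refine ⟨_, (y 0 0 * y 1 1 - y 0 1 * y 1 0) ^ 2, ?_,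
    (discriminant_identity rfl h₁₂ h₂₂).trans (by ring)⟩
  intro hN
  exact h0 (by rw [← h₁₁, hN, Pi.single_zero])

/-- The Pfaffian of the Gram matrix of the vectors `x 0, x 1, x 2, x 3` with respect to an
alternating form. -/
def pfaffian {V : Type*} (ω : V → V → k) (x : Fin 4 → V) : k :=
  ω (x 0) (x 1) * ω (x 2) (x 3) - ω (x 0) (x 2) * ω (x 1) (x 3) + ω (x 0) (x 3) * ω (x 1) (x 2)

/-- A member of the pencil of alternating forms defining the Lie algebras of type `L6_22`. -/
def pencil (δ c d : k) (x y : Fin 6 → k) : k :=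
  c * tableBracket δ ModelType.L6_22.table x y 4 + d * tableBracket δ ModelType.L6_22.table x y 5

theorem pfaffian_pencil (c d : k) (x : Fin 4 → Fin 6 → k) :
    pfaffian (pencil δ c d) x = (c ^ 2 - δ * d ^ 2) * pfaffian (pencil δ 1 0) x := by
  have pencil_eq (c d : k) (u v : Fin 6 → k) : pencil δ c d u v =
      c * (u 0 * v 1 - u 1 * v 0 + (u 2 * v 3 - u 3 * v 2)) +
        d * (u 0 * v 2 - u 2 * v 0 + δ * (u 1 * v 3 - u 3 * v 1)) := by
    rw [pencil, tableBracket_L6_22]; rfl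
  simp only [pfaffian, pencil_eq]
  ring

theorem pfaffian_pencil_of_relations (hy : ∀ i j,
    tableBracket δ ModelType.L6_22.table (y i) (y j) = tableValue ε ModelType.L6_22.table y i j)
    (c d : k) : pfaffian (pencil δ c d) ![y 0, y 1, y 2, y 3] =
      (c * y 4 4 + d * y 4 5) ^ 2 - ε * (c * y 5 4 + d * y 5 5) ^ 2 := by
  have h₀₁ : pencil δ c d (y 0) (y 1) = c * y 4 4 + d * y 4 5 := by rw [pencil, hy 0 1]; rfl
  have h₀₂ : pencil δ c d (y 0) (y 2) = c * y 5 4 + d * y 5 5 := by rw [pencil, hy 0 2]; rfl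
  have h₀₃ : pencil δ c d (y 0) (y 3) = c * 0 + d * 0 := by rw [pencil, hy 0 3]; rfl
  have h₁₂ : pencil δ c d (y 1) (y 2) = c * 0 + d * 0 := by rw [pencil, hy 1 2]; rfl
  have h₁₃ : pencil δ c d (y 1) (y 3) = c * (ε * y 5 4) + d * (ε * y 5 5) := by
    rw [pencil, hy 1 3]; rfl
  have h₂₃ : pencil δ c d (y 2) (y 3) = c * y 4 4 + d * y 4 5 := by rw [pencil, hy 2 3]; rfl
  change pencil δ c d (y 0) (y 1) * pencil δ c d (y 2) (y 3) -
    pencil δ c d (y 0) (y 2) * pencil δ c d (y 1) (y 3) +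
    pencil δ c d (y 0) (y 3) * pencil δ c d (y 1) (y 2) = _
  rw [h₀₁, h₂₃, h₀₂, h₁₃, h₀₃, h₁₂]
  ring

theorem det_ne_zero_of_linearIndependent {u v : Fin 6 → k} (huv : LinearIndependent k ![u, v])
    (hu : u = ![0, 0, 0, 0, u 4, u 5]) (hv : v = ![0, 0, 0, 0, v 4, v 5]) :
    u 4 * v 5 - u 5 * v 4 ≠ 0 := by
  intro hdet
  rw [LinearIndependent.pair_iff] at huv
  have combination (a b : k) (h₄ : a * u 4 + b * v 4 = 0) (h₅ : a * u 5 + b * v 5 = 0) :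
      a = 0 ∧ b = 0 := by
    refine huv a b ?_
    rw [hu, hv]
    ext l
    fin_cases l <;> simp [h₄, h₅]
  obtain ⟨-, hu₅⟩ := combination (v 5) (-u 5) (by linear_combination hdet) (by ring)
  obtain ⟨-, hu₄⟩ := combination (v 4) (-u 4) (by ring) (by linear_combination -hdet)
  rw [neg_eq_zero] at hu₄ hu₅
  exact one_ne_zero (combination 1 0 (by rw [hu₄]; ring) (by rw [hu₅]; ring)).1

theorem exists_sq_of_L6_22 (h2 : (2 : k) ≠ 0) (hli : LinearIndependent k ![y 4, y 5]) (hy : ∀ i j,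
    tableBracket δ ModelType.L6_22.table (y i) (y j) = tableValue ε ModelType.L6_22.table y i j) :
    ∃ s t : k, s ≠ 0 ∧ ε * s ^ 2 = δ * t ^ 2 := by
  have hpf (c d : k) := (pfaffian_pencil_of_relations hy c d).symm.trans (pfaffian_pencil c d _)
  have hpolar : y 4 4 * y 4 5 - ε * (y 5 4 * y 5 5) = 0 := by
    refine (mul_eq_zero.1 ?_).resolve_left h2
    linear_combination hpf 1 1 - hpf 1 0 - hpf 0 1
  have h₄ : _ = y 4 := hy 0 1
  have h₅ : _ = y 5 := hy 0 2
  rw [tableBracket_L6_22] at h₄ h₅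
  refine ⟨_, y 4 4 ^ 2 - ε * y 5 4 ^ 2,
    det_ne_zero_of_linearIndependent hli (by rw [← h₄]; rfl) (by rw [← h₅]; rfl), ?_⟩
  linear_combination (y 4 4 * y 4 5 - ε * (y 5 4 * y 5 5)) * hpolar -
    (y 4 4 ^ 2 - ε * y 5 4 ^ 2) * (hpf 0 1 + δ * hpf 1 0)

theorem tableBracket_tableBracket_L6_24 (x y z : Fin 6 → k) :
    tableBracket δ ModelType.L6_24.table x (tableBracket δ ModelType.L6_24.table y z) =
      ![0, 0, 0, 0, x 0 * (y 0 * z 1 - y 1 * z 0), x 1 * (y 0 * z 1 - y 1 * z 0)] := by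
  rw [tableBracket_L6_24, tableBracket_L6_24]
  ext l
  fin_cases l <;> simp

/-- The operator `v` with matrix `!![a, b; δ * b, a]` has trace zero, as it exchanges the lines
spanned by `p` and `q`; comparing determinants gives the claim. -/
theorem sq_eq_of_exchange (h2 : (2 : k) ≠ 0) {p₀ p₁ q₀ q₁ a b D : k} (hD : D = p₀ * q₁ - p₁ * q₀)
    (hD0 : D ≠ 0) (hp₀ : p₀ * a + p₁ * b = ε * (q₀ * D))
    (hp₁ : p₁ * a + δ * (p₀ * b) = ε * (q₁ * D))
    (hq₀ : q₀ * a + q₁ * b = p₀ * D) (hq₁ : q₁ * a + δ * (q₀ * b) = p₁ * D) :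
    ε * D ^ 2 = δ * b ^ 2 := by
  have htrace : a = 0 := by
    refine (mul_eq_zero.1 ?_).resolve_left (mul_ne_zero h2 hD0)
    rw [hD]
    linear_combination q₁ * hp₀ - q₀ * hp₁ + p₀ * hq₁ - p₁ * hq₀
  subst htrace
  refine mul_left_cancel₀ hD0 ?_
  linear_combination (q₁ * 0 + δ * (q₀ * b)) * hp₀ + ε * (q₀ * D) * hq₁ -
    (q₀ * 0 + q₁ * b) * hp₁ - ε * (q₁ * D) * hq₀ + (ε * D ^ 2 - δ * b ^ 2) * hD

theorem exists_sq_of_L6_24 (h2 : (2 : k) ≠ 0) (h0 : y 5 ≠ 0) (hy : ∀ i j,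
    tableBracket δ ModelType.L6_24.table (y i) (y j) = tableValue ε ModelType.L6_24.table y i j) :
    ∃ s t : k, s ≠ 0 ∧ ε * s ^ 2 = δ * t ^ 2 := by
  have h₂ : _ = y 2 := hy 0 1
  have h₄ : _ = y 4 := (congrArg _ h₂).trans (hy 0 2)
  have h₅ : _ = y 5 := (congrArg _ h₂).trans (hy 1 2)
  have h₃₂ : _ = (0 : Fin 6 → k) := (congrArg _ h₂).trans (hy 3 2)
  have h₀₃ : _ = ε • y 5 := hy 0 3
  have h₁₃ : _ = y 4 := hy 1 3
  rw [tableBracket_tableBracket_L6_24] at h₄ h₅ h₃₂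
  set D := y 0 0 * y 1 1 - y 0 1 * y 1 0 with hD
  have D_ne_zero : D ≠ 0 := by
    intro h
    refine h0 (h₅.symm.trans ?_)
    rw [h, mul_zero, mul_zero]
    ext l
    fin_cases l <;> rfl
  have h₃₀ : y 3 0 = 0 := (mul_eq_zero.1 (congrFun h₃₂ 4 : _ * D = 0)).resolve_right D_ne_zero
  have h₃₁ : y 3 1 = 0 := (mul_eq_zero.1 (congrFun h₃₂ 5 : _ * D = 0)).resolve_right D_ne_zero
  rw [← h₅, tableBracket_L6_24, h₃₀, h₃₁] at h₀₃
  rw [← h₄, tableBracket_L6_24, h₃₀, h₃₁] at h₁₃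
  simp only [mul_zero, sub_zero] at h₀₃ h₁₃
  exact ⟨D, y 3 3, D_ne_zero, sq_eq_of_exchange h2 hD D_ne_zero (congrFun h₀₃ 4) (congrFun h₀₃ 5)
    (congrFun h₁₃ 4) (congrFun h₁₃ 5)⟩

end Families

section Equivalence

variable {k : Type*} [Field k] {n : ℕ}

theorem nonempty_lieEquiv_iff_bracketIso {br br' : (Fin n → k) → (Fin n → k) → (Fin n → k)}
    (h : IsLieBracket k br) (h' : IsLieBracket k br') :
    Nonempty (BracketSpace h ≃ₗ⁅k⁆ BracketSpace h') ↔ BracketIso br br' :=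
  ⟨fun ⟨f⟩ => ⟨f.toLinearEquiv, f.map_lie⟩,
    fun ⟨e, he⟩ => ⟨{ (show BracketSpace h ≃ₗ[k] BracketSpace h' from e) with
      map_lie' := he _ _ }⟩⟩

theorem bracketIso_tableBracket_of_weight (ε : k) {T : List (Entry n)} (s : kˣ) (w : Fin n → ℕ)
    (hw : ∀ t ∈ T, w t.value + (bif t.scaled then 2 else 0) = w t.left + w t.right) :
    BracketIso (tableBracket (s ^ 2 * ε) T) (tableBracket ε T) := by
  refine ⟨LinearEquiv.piCongrRight fun i => LinearEquiv.smulOfUnit (s ^ w i), fun x y => ?_⟩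
  ext l
  change (s ^ w l : kˣ) * tableBracket (s ^ 2 * ε) T x y l =
    tableBracket ε T (fun i => (s ^ w i : kˣ) * x i) (fun i => (s ^ w i : kˣ) * y i) l
  rw [tableBracket, tableBracket, ← List.sum_map_mul_left]
  refine congrArg List.sum (List.map_congr_left fun t ht => ?_)
  rcases eq_or_ne t.value l with rfl | hl
  · have hcoeff : (s ^ w t.value : k) * t.coeff (s ^ 2 * ε) =
        t.coeff ε * (s ^ w t.left * s ^ w t.right) := by
      rw [← pow_add, ← hw t ht, pow_add]
      cases h : t.scaled <;> simp only [Entry.coeff, h, cond_true, cond_false] <;> ring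
    rw [if_pos rfl, if_pos rfl]
    push_cast
    linear_combination (x t.left * y t.right - x t.right * y t.left) * hcoeff
  · rw [if_neg hl, if_neg hl, mul_zero]

end Equivalence

/-- The types whose algebras depend on the parameter. -/
def ModelType.IsFamily (m : ModelType) : Prop :=
  ∃ t ∈ m.table, t.scaled

instance : DecidablePred ModelType.IsFamily := fun m =>
  inferInstanceAs (Decidable (∃ t ∈ m.table, t.scaled))

theorem ModelType.IsFamily.eq_or {m : ModelType} (hm : m.IsFamily) :
    m = .L6_19 ∨ m = .L6_21 ∨ m = .L6_22 ∨ m = .L6_24 := by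
  revert m
  decide

theorem ModelType.IsFamily.exists_weight {m : ModelType} (hm : m.IsFamily) :
    ∃ w : Fin 6 → ℕ, ∀ t ∈ m.table,
      w t.value + (bif t.scaled then 2 else 0) = w t.left + w t.right := by
  rcases hm.eq_or with rfl | rfl | rfl | rfl
  · exact ⟨![0, 0, 1, 0, 1, 0], by decide⟩
  · exact ⟨![0, 1, 1, 1, 2, 1], by decide⟩
  · exact ⟨![0, 1, 0, 1, 1, 0], by decide⟩
  · exact ⟨![1, 0, 1, 2, 2, 1], by decide⟩

namespace Model

variable {k : Type*} [Field k] {ε δ : k} {m m' : ModelType}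

theorem tableBracket_eq_of_not_isFamily (hm : ¬m.IsFamily) :
    tableBracket ε m.table = tableBracket δ m.table := by
  ext x y l
  refine congrArg List.sum (List.map_congr_left fun t ht => ?_)
  have hs : t.scaled = false := Bool.eq_false_iff.2 fun h => hm ⟨t, ht, h⟩
  simp only [Entry.coeff, hs, cond_false]

theorem exists_sq_of_lieEquiv (h2 : (2 : k) ≠ 0) (hm : m.IsFamily)
    (f : Model ε m ≃ₗ⁅k⁆ Model δ m) : ∃ s t : k, s ≠ 0 ∧ ε * s ^ 2 = δ * t ^ 2 := by
  let b := (basis ε m).map f.toLinearEquiv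
  have hb (i j : Fin 6) :
      tableBracket δ m.table (b i) (b j) = tableValue ε m.table (fun l => b l) i j := by
    have hij : ⁅f (basis ε m i), f (basis ε m j)⁆ =
        tableValue ε m.table (fun l => f (basis ε m l)) i j := by
      rw [← f.map_lie, lie_basis]
      exact map_tableValue f.toLinearEquiv.toLinearMap _ i j
    exact hij
  rcases hm.eq_or with rfl | rfl | rfl | rfl
  · exact exists_sq_of_L6_19 (b.ne_zero 5) hb
  · exact exists_sq_of_L6_21 (b.ne_zero 5) hb
  · have hb₄₅ : (b : Fin 6 → _) ∘ ![4, 5] = ![b 4, b 5] := (FinVec.map_eq _ _).symm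
    exact exists_sq_of_L6_22 h2 (hb₄₅ ▸ b.linearIndependent.comp ![4, 5] (by decide)) hb
  · exact exists_sq_of_L6_24 h2 (b.ne_zero 5) hb

theorem exists_unit_of_lieEquiv (h2 : (2 : k) ≠ 0) (hm : m.IsFamily)
    (f : Model ε m ≃ₗ⁅k⁆ Model δ m) : ∃ s : kˣ, ε = s ^ 2 * δ := by
  obtain ⟨s, t, hs, hst⟩ := exists_sq_of_lieEquiv h2 hm f
  by_cases ht : t = 0
  · have hε : ε = 0 := by simpa [ht, hs] using hst
    obtain ⟨s', t', hs', hst'⟩ := exists_sq_of_lieEquiv h2 hm f.symm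
    have hδ : δ = 0 := by simpa [hε, hs'] using hst'
    exact ⟨1, by rw [hε, hδ, mul_zero]⟩
  · refine ⟨Units.mk0 (t / s) (div_ne_zero ht hs), ?_⟩
    rw [Units.val_mk0, div_pow, div_mul_eq_mul_div, eq_div_iff (pow_ne_zero 2 hs), hst, mul_comm]

theorem bracketIso_iff (h2 : (2 : k) ≠ 0) :
    BracketIso (tableBracket ε m.table) (tableBracket δ m'.table) ↔
      m = m' ∧ (m.IsFamily → ∃ s : kˣ, ε = s ^ 2 * δ) := by
  constructor
  · intro h
    obtain ⟨f⟩ := (nonempty_lieEquiv_iff_bracketIso (isLieBracket_tableBracket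
      (tableBracket_jacobi ε m)) (isLieBracket_tableBracket (tableBracket_jacobi δ m'))).2 h
    obtain rfl := type_eq f
    exact ⟨rfl, fun hm => exists_unit_of_lieEquiv h2 hm f⟩
  · rintro ⟨rfl, hs⟩
    by_cases hm : m.IsFamily
    · obtain ⟨s, rfl⟩ := hs hm
      obtain ⟨w, hw⟩ := hm.exists_weight
      exact bracketIso_tableBracket_of_weight δ s w hw
    · rw [tableBracket_eq_of_not_isFamily (ε := ε) (δ := δ) hm]
      exact ⟨LinearEquiv.refl k _, fun _ _ => rfl⟩

end Model

section Nilpotency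

variable {k : Type*} [Field k] {n : ℕ} {ε : k} {T : List (Entry n)}

theorem apply_eq_zero_of_mem_lcs_tableBracket
    (hT : ∀ t ∈ T, t.left < t.value ∧ t.right < t.value) {m : ℕ} {x : Fin n → k}
    (hx : x ∈ lcs (tableBracket ε T) m) {l : Fin n} (hl : l < m) : x l = 0 := by
  induction m generalizing x l with
  | zero => exact absurd hl (Nat.not_lt_zero _)
  | succ m ih =>
    suffices h : lcs (tableBracket ε T) (m + 1) ≤ LinearMap.ker (LinearMap.proj l) from h hx
    refine Submodule.span_le.2 ?_
    rintro _ ⟨x, y, hy, rfl⟩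
    refine List.sum_eq_zero fun a ha => ?_
    obtain ⟨t, ht, rfl⟩ := List.mem_map.1 ha
    rcases eq_or_ne t.value l with rfl | hne
    · have := hT t ht
      rw [ih hy (l := t.left) (by lia), ih hy (l := t.right) (by lia)]
      simp
    · rw [if_neg hne]

theorem isNilpotentBracket_tableBracket (hT : ∀ t ∈ T, t.left < t.value ∧ t.right < t.value) :
    IsNilpotentBracket (tableBracket ε T) :=
  ⟨n, (Submodule.eq_bot_iff _).2 fun _ hx => funext fun l =>
    apply_eq_zero_of_mem_lcs_tableBracket hT hx l.2⟩

theorem ModelType.lt_value_of_mem_table (m : ModelType) :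
    ∀ t ∈ m.table, t.left < t.value ∧ t.right < t.value := by
  cases m <;> decide

end Nilpotency

section LowerCentralSeries

open Submodule

variable (k : Type*) [Field k] (L : Type*) [LieRing L] [LieAlgebra k L]

/-- The lower central series of `L`, as subspaces. It starts with `lc k L 0 = L`. -/
abbrev lc (m : ℕ) : Submodule k L :=
  (LieModule.lowerCentralSeries k L L m).toSubmodule

/-- The Lie bracket as a bilinear map. -/
def lieBilin : L →ₗ[k] L →ₗ[k] L :=
  LinearMap.mk₂ k (fun x y => ⁅x, y⁆) add_lie smul_lie lie_add lie_smul

variable {k L}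

theorem lc_succ_le_iff {m : ℕ} {S : Submodule k L} :
    lc k L (m + 1) ≤ S ↔ ∀ x : L, ∀ y ∈ lc k L m, ⁅x, y⁆ ∈ S := by
  rw [lc, LieModule.lowerCentralSeries_succ, LieSubmodule.lieIdeal_oper_eq_linear_span', span_le]
  exact ⟨fun h x y hy => h ⟨x, trivial, y, hy, rfl⟩, fun h _ ⟨x, _, y, hy, hxy⟩ => hxy ▸ h x y hy⟩

theorem lie_mem_lc_succ {m : ℕ} (x : L) {y : L} (hy : y ∈ lc k L m) : ⁅x, y⁆ ∈ lc k L (m + 1) :=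
  lc_succ_le_iff.1 le_rfl x y hy

theorem lc_succ_eq_span (m : ℕ) :
    lc k L (m + 1) = span k {w | ∃ x y : L, y ∈ lc k L m ∧ w = ⁅x, y⁆} := by
  refine le_antisymm (lc_succ_le_iff.2 fun x y hy => ?_) (span_le.2 ?_)
  · exact subset_span ⟨x, y, hy, rfl⟩
  · rintro _ ⟨x, y, hy, rfl⟩
    exact lie_mem_lc_succ x hy

theorem lie_mem_lc_one (x y : L) : ⁅x, y⁆ ∈ lc k L 1 :=
  lie_mem_lc_succ x (mem_top : y ∈ ⊤)

theorem lc_antitone : Antitone (lc k L) :=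
  LieModule.antitone_lowerCentralSeries k L L

theorem lie_mem_lc {i j m : ℕ} (h : m ≤ i + j + 1) {x y : L} (hx : x ∈ lc k L i)
    (hy : y ∈ lc k L j) : ⁅x, y⁆ ∈ lc k L m := by
  refine lc_antitone h ?_
  clear h
  induction i generalizing x y j with
  | zero => simpa only [zero_add] using lie_mem_lc_succ x hy
  | succ i ih =>
    suffices h : lc k L (i + 1) ≤ (lc k L (i + 1 + j + 1)).comap ((lieBilin k L).flip y) from h hx
    refine lc_succ_le_iff.2 fun u v hv => ?_
    change ⁅⁅u, v⁆, y⁆ ∈ lc k L (i + 1 + j + 1)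
    rw [lie_lie]
    refine sub_mem (lc_antitone (by lia) (lie_mem_lc_succ u (ih hv hy))) ?_
    exact lc_antitone (by lia) (ih hv (lie_mem_lc_succ u hy))

theorem lc_succ_lt [LieRing.IsNilpotent L] {m : ℕ} (hm : lc k L m ≠ ⊥) :
    lc k L (m + 1) < lc k L m := by
  refine lt_of_le_of_ne (lc_antitone m.le_succ) fun h => hm ?_
  obtain ⟨N, hN⟩ := LieModule.IsNilpotent.nilpotent k L L
  have le_lc_add (i : ℕ) : lc k L m ≤ lc k L (m + i) := by
    induction i with
    | zero => exact le_rfl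
    | succ i ih =>
      exact h.ge.trans (lc_succ_le_iff.2 fun x y hy => lie_mem_lc_succ x (ih hy))
  refine eq_bot_iff.2 ((le_lc_add N).trans ((lc_antitone (Nat.le_add_left N m)).trans ?_))
  rw [lc, hN, LieSubmodule.bot_toSubmodule]

theorem finrank_lc_succ_lt [LieRing.IsNilpotent L] [Module.Finite k L] {m : ℕ}
    (hm : finrank k (lc k L m) ≠ 0) : finrank k (lc k L (m + 1)) < finrank k (lc k L m) :=
  finrank_lt_finrank_of_lt (lc_succ_lt fun h => hm (by rw [h, finrank_bot]))

variable (k) in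
/-- The set `X` spans the `m`-th term of the lower central series modulo the next term. If `m = 0`
and `L` is nilpotent, this means that `X` generates `L`. -/
def SpansLayer (m : ℕ) (X : Set L) : Prop :=
  lc k L m ≤ span k X ⊔ lc k L (m + 1)

theorem SpansLayer.of_subset {m : ℕ} {X Y : Set L} (hX : SpansLayer k m X)
    (h : ∀ x ∈ X, x ∈ span k Y ⊔ lc k L (m + 1)) : SpansLayer k m Y :=
  hX.trans (sup_le (span_le.2 h) le_sup_right)

theorem SpansLayer.lc_succ_le {m : ℕ} {X V : Set L} {S : Submodule k L} (hX : SpansLayer k 0 X)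
    (hV : SpansLayer k m V) (h : ∀ x ∈ X, ∀ v ∈ V, ⁅x, v⁆ ∈ S) (hS : lc k L (m + 2) ≤ S) :
    lc k L (m + 1) ≤ S := by
  refine lc_succ_le_iff.2 fun x y hy => ?_
  obtain ⟨a, ha, b, hb, rfl⟩ := mem_sup.1 (hX (mem_top : x ∈ _))
  obtain ⟨c, hc, d, hd, rfl⟩ := mem_sup.1 (hV hy)
  rw [add_lie, lie_add]
  refine add_mem (add_mem ?_ (hS (lie_mem_lc_succ a hd))) (hS (lie_mem_lc (by lia) hb hy))
  exact LinearMap.BilinMap.apply_apply_mem_of_mem_span S X V (lieBilin k L) h a c ha hc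

theorem eq_top_of_sup_lc_one [LieRing.IsNilpotent L] {S : LieSubalgebra k L}
    (hS : S.toSubmodule ⊔ lc k L 1 = ⊤) : S = ⊤ := by
  have hspan : span k (S : Set L) = S.toSubmodule := span_eq S.toSubmodule
  have hS₀ : SpansLayer k 0 (S : Set L) := by
    rw [SpansLayer, hspan, hS]
    exact le_top
  have le_sup (m : ℕ) : lc k L m ≤ S.toSubmodule ⊔ lc k L (m + 1) := by
    rw [← hspan]
    induction m with
    | zero => exact hS₀
    | succ m ih =>
      exact hS₀.lc_succ_le ih (fun x hx y hy => mem_sup_left (subset_span (S.lie_mem hx hy)))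
        le_sup_right
  have top_le (m : ℕ) : ⊤ ≤ S.toSubmodule ⊔ lc k L m := by
    induction m with
    | zero => exact le_sup_right
    | succ m ih => exact ih.trans (sup_le le_sup_left (le_sup m))
  obtain ⟨m, hm⟩ := LieModule.IsNilpotent.nilpotent k L L
  refine LieSubalgebra.toSubmodule_injective (top_le_iff.1 ((top_le m).trans ?_))
  rw [lc, hm, LieSubmodule.bot_toSubmodule, sup_bot_eq]

end LowerCentralSeries

section Dimension

open Submodule

variable {k V : Type*} [Field k] [AddCommGroup V] [Module k V] {A B : Submodule k V}

theorem mem_span_singleton_sup {u w : V} :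
    w ∈ span k {u} ⊔ B ↔ ∃ a : k, ∃ b ∈ B, w = a • u + b := by
  simp only [mem_sup, mem_span_singleton, exists_exists_eq_and, @eq_comm _ w]

theorem lt_span_singleton_sup {x : V} (hx : x ∉ B) : B < span k {x} ⊔ B :=
  lt_of_le_of_ne le_sup_right fun h => hx (h ▸ mem_sup_left (mem_span_singleton_self x))

variable [Module.Finite k V]

theorem exists_span_sup (d : ℕ) (hBA : B ≤ A) (h : finrank k A ≤ finrank k B + d) :
    ∃ v : Fin d → V, (∀ i, v i ∈ A) ∧ A ≤ span k (Set.range v) ⊔ B := by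
  induction d generalizing B with
  | zero =>
    exact ⟨Fin.elim0, fun i => i.elim0, (eq_of_le_of_finrank_le hBA h).ge.trans le_sup_right⟩
  | succ d ih =>
    by_cases hAB : A ≤ B
    · exact ⟨0, fun _ => A.zero_mem, hAB.trans le_sup_right⟩
    obtain ⟨x, hxA, hxB⟩ := SetLike.not_le_iff_exists.1 hAB
    have hdim := finrank_lt_finrank_of_lt (lt_span_singleton_sup hxB)
    obtain ⟨v, hv, hv'⟩ := ih (B := span k {x} ⊔ B)
      (sup_le ((span_singleton_le_iff_mem _ _).2 hxA) hBA) (by lia)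
    refine ⟨Fin.cons x v, Fin.cases hxA hv, hv'.trans (le_of_eq ?_)⟩
    rw [Fin.range_cons, span_insert, ← sup_assoc, sup_comm (span k {x})]

theorem exists_singleton_span_sup (hBA : B ≤ A) (h : finrank k A ≤ finrank k B + 1) :
    ∃ x ∈ A, A ≤ span k {x} ⊔ B := by
  obtain ⟨v, hv, hA⟩ := exists_span_sup 1 hBA h
  exact ⟨v 0, hv 0, Set.range_unique (f := v) ▸ hA⟩

theorem exists_pair_span_sup (hBA : B ≤ A) (h : finrank k A ≤ finrank k B + 2) :
    ∃ x ∈ A, ∃ y ∈ A, A ≤ span k {x, y} ⊔ B := by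
  obtain ⟨v, hv, hA⟩ := exists_span_sup 2 hBA h
  refine ⟨v 0, hv 0, v 1, hv 1, hA.trans_eq ?_⟩
  congr 2
  ext x
  simp [Fin.exists_fin_succ, eq_comm]

theorem exists_triple_span_sup (hBA : B ≤ A) (h : finrank k A ≤ finrank k B + 3) :
    ∃ x ∈ A, ∃ y ∈ A, ∃ z ∈ A, A ≤ span k {x, y, z} ⊔ B := by
  obtain ⟨v, hv, hA⟩ := exists_span_sup 3 hBA h
  refine ⟨v 0, hv 0, v 1, hv 1, v 2, hv 2, hA.trans_eq ?_⟩
  congr 2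
  ext x
  simp [Fin.exists_fin_succ, eq_comm]

theorem le_span_singleton_sup (hBA : B ≤ A) (h : finrank k A ≤ finrank k B + 1) {x : V}
    (hxA : x ∈ A) (hxB : x ∉ B) : A ≤ span k {x} ⊔ B := by
  have hlt := finrank_lt_finrank_of_lt (lt_span_singleton_sup hxB)
  exact (eq_of_le_of_finrank_le (sup_le ((span_singleton_le_iff_mem _ _).2 hxA) hBA) (by lia)).ge

theorem exists_relation (d : ℕ) (hBA : B ≤ A) (h : finrank k A < finrank k B + d) {v : Fin d → V}
    (hv : ∀ i, v i ∈ A) : ∃ c : Fin d → k, c ≠ 0 ∧ ∑ i, c i • v i ∈ B := by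
  let φ : (Fin d → k) × B →ₗ[k] A :=
    (Fintype.linearCombination k fun i => ⟨v i, hv i⟩).coprod (inclusion hBA)
  have hφ : LinearMap.ker φ ≠ ⊥ := LinearMap.ker_ne_bot_of_finrank_lt (by
    rw [finrank_prod, finrank_fin_fun]
    lia)
  obtain ⟨⟨c, b⟩, hcb, hne⟩ := (Submodule.ne_bot_iff _).1 hφ
  have hsum : ∑ i, c i • v i + b = 0 := by
    simpa [φ, Fintype.linearCombination_apply] using congrArg Subtype.val hcb
  refine ⟨c, fun hc => hne ?_, eq_neg_of_add_eq_zero_left hsum ▸ B.neg_mem b.2⟩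
  have hb : b = 0 := by simpa [hc] using hsum
  rw [hc, hb, Prod.mk_zero_zero]

end Dimension

section Recognition

open Submodule

theorem map_lie_of_basis {k L M ι : Type*} [Field k] [LieRing L] [LieAlgebra k L] [LieRing M]
    [LieAlgebra k M] [LinearOrder ι] (b : Basis ι k M) (φ : M →ₗ[k] L)
    (h : ∀ i j, i < j → φ ⁅b i, b j⁆ = ⁅φ (b i), φ (b j)⁆) (x y : M) : φ ⁅x, y⁆ = ⁅φ x, φ y⁆ := by
  suffices hφ : (lieBilin k M).compr₂ φ = (lieBilin k L).compl₁₂ φ φ from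
    LinearMap.congr_fun₂ hφ x y
  refine LinearMap.ext_basis b b fun i j => ?_
  change φ ⁅b i, b j⁆ = ⁅φ (b i), φ (b j)⁆
  rcases lt_trichotomy i j with hij | rfl | hij
  · exact h i j hij
  · rw [lie_self, lie_self, map_zero]
  · rw [← lie_skew, ← lie_skew (φ (b i)), map_neg, h j i hij]

variable (k : Type*) [Field k] (L : Type*) [LieRing L] [LieAlgebra k L]

/-- The Lie algebra `L` is isomorphic to one of the models of the classification. -/
def IsModel : Prop :=
  ∃ (m : ModelType) (ε : k), Nonempty (Model ε m ≃ₗ⁅k⁆ L)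

variable {k L}

theorem isModel_of_relations [LieRing.IsNilpotent L] [Module.Finite k L] (hL : finrank k L = 6)
    (m : ModelType) (ε : k) (y : Fin 6 → L) (hy : SpansLayer k 0 (Set.range y))
    (h : ∀ i j, i < j → ⁅y i, y j⁆ = tableValue ε m.table y i j) : IsModel k L := by
  let φ : Model ε m →ₗ[k] L := (Model.basis ε m).constr k y
  have hφ (i : Fin 6) : φ (Model.basis ε m i) = y i := Basis.constr_basis _ _ _ _
  have map_lie (a b : Model ε m) : φ ⁅a, b⁆ = ⁅φ a, φ b⁆ := by
    refine map_lie_of_basis (Model.basis ε m) φ (fun i j hij => ?_) a b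
    rw [Model.lie_basis, map_tableValue, hφ, hφ, h i j hij, funext hφ]
  let f : Model ε m →ₗ⁅k⁆ L := { φ with map_lie' := map_lie _ _ }
  have hrange : f.range = ⊤ := by
    refine eq_top_of_sup_lc_one (top_le_iff.1 (hy.trans (sup_le_sup_right (span_le.2 ?_) _)))
    rintro _ ⟨i, rfl⟩
    exact ⟨_, hφ i⟩
  have hsurj : Function.Surjective φ := LieHom.range_eq_top f |>.1 hrange
  have hinj : Function.Injective φ := (LinearMap.injective_iff_surjective_of_finrank_eq_finrank
    (by rw [hL]; exact BracketSpace.finrank_eq _)).2 hsurj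
  exact ⟨m, ε, ⟨LieEquiv.ofBijective f ⟨hinj, hsurj⟩⟩⟩

theorem forall_lt_fin_six {P : Fin 6 → Fin 6 → Prop} :
    (∀ i j, i < j → P i j) ↔ (P 0 1 ∧ P 0 2 ∧ P 0 3 ∧ P 0 4 ∧ P 0 5) ∧
      (P 1 2 ∧ P 1 3 ∧ P 1 4 ∧ P 1 5) ∧ (P 2 3 ∧ P 2 4 ∧ P 2 5) ∧ (P 3 4 ∧ P 3 5) ∧ P 4 5 := by
  refine ⟨fun h => by simp [h], fun h i j hij => ?_⟩
  fin_cases i <;> fin_cases j <;> first | exact absurd hij (by decide) | simp [h]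

end Recognition

section Layers

open Submodule

variable {k : Type*} [Field k] {L : Type*} [LieRing L] [LieAlgebra k L]

theorem SpansLayer.lie {m : ℕ} {X V : Set L} (hX : SpansLayer k 0 X) (hV : SpansLayer k m V) :
    SpansLayer k (m + 1) (Set.image2 (⁅·, ·⁆) X V) :=
  hX.lc_succ_le hV (fun _ hx _ hv => mem_sup_left (subset_span ⟨_, hx, _, hv, rfl⟩)) le_sup_right

theorem SpansLayer.of_subset_span {m : ℕ} {X Y : Set L} (hX : SpansLayer k m X)
    (h : X ⊆ span k Y) : SpansLayer k m Y :=
  hX.of_subset fun _ hx => mem_sup_left (h hx)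

theorem SpansLayer.singleton_of_pair {m : ℕ} {u v : L} (h : SpansLayer k m {u, v})
    (hv : v ∈ lc k L (m + 1)) : SpansLayer k m {u} := by
  refine h.of_subset ?_
  rintro x (rfl | rfl)
  · exact mem_sup_left (mem_span_singleton_self _)
  · exact mem_sup_right hv

theorem SpansLayer.lie_pair {x₁ x₂ : L} (hX : SpansLayer k 0 {x₁, x₂}) :
    SpansLayer k 1 {⁅x₁, x₂⁆} := by
  refine (hX.lie hX).of_subset_span ?_
  rw [Set.image2_subset_iff]
  have h : ⁅x₁, x₂⁆ ∈ span k {⁅x₁, x₂⁆} := mem_span_singleton_self _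
  rintro x (rfl | rfl) y (rfl | rfl)
  · rw [lie_self]
    exact zero_mem _
  · exact h
  · rw [← lie_skew x y]
    exact neg_mem h
  · rw [lie_self]
    exact zero_mem _

theorem SpansLayer.pair_lie {m : ℕ} {x₁ x₂ v : L} (hX : SpansLayer k 0 {x₁, x₂})
    (hv : SpansLayer k m {v}) : SpansLayer k (m + 1) {⁅x₁, v⁆, ⁅x₂, v⁆} := by
  simpa only [Set.image2_singleton_right, Set.image_pair] using hX.lie hv

theorem exists_spansLayer_pair [Module.Finite k L] (h : finrank k L ≤ finrank k (lc k L 1) + 2) :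
    ∃ x₁ x₂ : L, SpansLayer k 0 {x₁, x₂} := by
  obtain ⟨x₁, -, x₂, -, hX⟩ := exists_pair_span_sup (le_top : lc k L 1 ≤ ⊤) (by rwa [finrank_top])
  exact ⟨x₁, x₂, hX⟩

theorem exists_spansLayer_triple [Module.Finite k L]
    (h : finrank k L ≤ finrank k (lc k L 1) + 3) :
    ∃ x₁ x₂ x₃ : L, SpansLayer k 0 {x₁, x₂, x₃} := by
  obtain ⟨x₁, -, x₂, -, x₃, -, hX⟩ := exists_triple_span_sup (le_top : lc k L 1 ≤ ⊤)
    (by rwa [finrank_top])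
  exact ⟨x₁, x₂, x₃, hX⟩

theorem mem_span_range_of_eq {y : Fin 6 → L} {x : L} (c : Fin 6 → k)
    (h : x = c 0 • y 0 + c 1 • y 1 + c 2 • y 2 + c 3 • y 3 + c 4 • y 4 + c 5 • y 5) :
    x ∈ span k (Set.range y) :=
  mem_span_range_iff_exists_fun k |>.2 ⟨c, by rw [Fin.sum_univ_six, h]⟩

end Layers

section Generators

open Submodule

variable {k : Type*} [Field k] {L : Type*} [LieRing L] [LieAlgebra k L]

theorem lie_lie_lie_swap (x y : L) : ⁅y, ⁅x, ⁅x, y⁆⁆⁆ = ⁅x, ⁅y, ⁅x, y⁆⁆⁆ := by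
  rw [leibniz_lie, ← lie_skew y x, neg_lie, lie_self, neg_zero, zero_add]

theorem SpansLayer.lc_eq_bot [LieRing.IsNilpotent L] {m : ℕ} {X : Set L} (h : SpansLayer k m X)
    (hX : X ⊆ lc k L (m + 1)) : lc k L m = ⊥ := by
  by_contra hm
  exact (lc_succ_lt hm).not_ge (h.trans (sup_le (span_le.2 hX) le_rfl))

theorem exists_central_generator [Module.Finite k L] {m : ℕ} (hm : finrank k (lc k L m) = 1)
    (hbot : lc k L (m + 1) = ⊥) :
    ∃ z : L, (∀ x : L, ⁅x, z⁆ = 0) ∧ ∀ w ∈ lc k L m, ∃ c : k, w = c • z := by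
  obtain ⟨z, hz, hspan⟩ := exists_singleton_span_sup (bot_le : ⊥ ≤ lc k L m)
    (by rw [hm, finrank_bot])
  refine ⟨z, fun x => ?_, fun w hw => ?_⟩
  · simpa only [hbot, mem_bot] using lie_mem_lc_succ x hz
  · obtain ⟨c, rfl⟩ := mem_span_singleton.1 (sup_bot_eq (span k {z}) ▸ hspan hw)
    exact ⟨c, rfl⟩

theorem span_pair_add_smul_right (x y : L) (t : k) : span k {x, y + t • x} = span k {x, y} := by
  refine le_antisymm (span_le.2 ?_) (span_le.2 ?_)
  · rintro v (rfl | rfl)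
    · exact mem_span_pair.2 ⟨1, 0, by module⟩
    · exact mem_span_pair.2 ⟨t, 1, by module⟩
  · rintro v (rfl | rfl)
    · exact mem_span_pair.2 ⟨1, 0, by module⟩
    · exact mem_span_pair.2 ⟨-t, 1, by module⟩

theorem exists_span_pair_eq_lie_mem [Module.Finite k L] {B : Submodule k L} (hB : B ≤ lc k L 2)
    (h : finrank k (lc k L 2) < finrank k B + 2) (x₁ x₂ : L) :
    ∃ y₁ y₂ : L, span k {y₁, y₂} = span k {x₁, x₂} ∧ ⁅y₂, ⁅y₁, y₂⁆⁆ ∈ B := by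
  obtain ⟨c, hc, hcB⟩ := exists_relation 2 hB h (v := ![⁅x₁, ⁅x₁, x₂⁆⁆, ⁅x₂, ⁅x₁, x₂⁆⁆])
    (Fin.forall_fin_two.2 ⟨lie_mem_lc_succ _ (lie_mem_lc_one _ _),
      lie_mem_lc_succ _ (lie_mem_lc_one _ _)⟩)
  rw [Fin.sum_univ_two] at hcB
  change c 0 • ⁅x₁, ⁅x₁, x₂⁆⁆ + c 1 • ⁅x₂, ⁅x₁, x₂⁆⁆ ∈ B at hcB
  by_cases hc1 : c 1 = 0
  · have hc0 : c 0 ≠ 0 := fun hc0 => hc (funext (Fin.forall_fin_two.2 ⟨hc0, hc1⟩))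
    refine ⟨x₂, x₁, by rw [Set.pair_comm], ?_⟩
    rw [hc1, zero_smul, add_zero] at hcB
    rw [← lie_skew x₂, lie_neg]
    exact neg_mem ((smul_mem_iff _ hc0).1 hcB)
  · refine ⟨x₁, x₂ + (c 0 / c 1) • x₁, span_pair_add_smul_right x₁ x₂ _, (smul_mem_iff _ hc1).1 ?_⟩
    · convert hcB using 1
      simp only [lie_add, add_lie, lie_smul, smul_lie, lie_self, smul_zero, add_zero]
      match_scalars <;> grind

theorem SpansLayer.exists_adapted_pair [Module.Finite k L] {x₁ x₂ : L}
    (hX : SpansLayer k 0 {x₁, x₂}) (h : finrank k (lc k L 2) ≤ finrank k (lc k L 3) + 1) :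
    ∃ y₁ y₂ : L, SpansLayer k 0 {y₁, y₂} ∧ ⁅y₂, ⁅y₁, y₂⁆⁆ ∈ lc k L 3 ∧
      SpansLayer k 3 {⁅y₁, ⁅y₁, ⁅y₁, y₂⁆⁆⁆} := by
  obtain ⟨y₁, y₂, hspan, hmem⟩ := exists_span_pair_eq_lie_mem
    (lc_antitone (by lia) : lc k L 3 ≤ lc k L 2) (by lia) x₁ x₂
  have hY : SpansLayer k 0 {y₁, y₂} := by rwa [SpansLayer, hspan]
  have hY₂ := (hY.pair_lie hY.lie_pair).singleton_of_pair hmem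
  refine ⟨y₁, y₂, hY, hmem, (hY.pair_lie hY₂).singleton_of_pair ?_⟩
  rw [lie_lie_lie_swap]
  exact lie_mem_lc_succ y₁ hmem

end Generators

section MaximalClass

open Submodule

variable {k : Type*} [Field k] {L : Type*} [LieRing L] [LieAlgebra k L] [LieRing.IsNilpotent L]
  [Module.Finite k L] {x₁ x₂ x₃ x₄ x₅ z : L} {a b p q : k}

theorem isModel_maximalClass_of_eq_zero (h2 : (2 : k) ≠ 0) (hL : finrank k L = 6)
    (hX : SpansLayer k 0 {x₁, x₂}) (h₁₂ : ⁅x₁, x₂⁆ = x₃) (h₁₃ : ⁅x₁, x₃⁆ = x₄)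
    (h₁₄ : ⁅x₁, x₄⁆ = x₅) (h₁₅ : ⁅x₁, x₅⁆ = 0) (h₂₃ : ⁅x₂, x₃⁆ = a • x₅ + b • z)
    (h₂₄ : ⁅x₂, x₄⁆ = 0) (h₂₅ : ⁅x₂, x₅⁆ = q • z) (h₃₄ : ⁅x₃, x₄⁆ = -(q • z))
    (h₃₅ : ⁅x₃, x₅⁆ = 0) (h₄₅ : ⁅x₄, x₅⁆ = 0) (hz : ∀ x : L, ⁅x, z⁆ = 0) (hq : q ≠ 0) :
    IsModel k L := by
  have h₄₃ : ⁅x₄, x₃⁆ = q • z := by rw [← lie_skew, h₃₄, neg_neg]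
  have h₅₄ : ⁅x₅, x₄⁆ = 0 := by rw [← lie_skew, h₄₅, neg_zero]
  have main (m : ModelType) (μ : k) (hμ : μ ≠ 0)
      (hm : μ * a = 0 ∧ m = .L6_16 ∨ μ * a = 1 ∧ m = .L6_14) : IsModel k L := by
    obtain ⟨s, hs⟩ : ∃ s, 2 * q * s = -b := ⟨-b / (2 * q), by field_simp⟩
    refine isModel_of_relations hL m 0 ![x₁, μ • (x₂ + s • x₄), μ • (x₃ + s • x₅), μ • x₄, μ • x₅,
      (μ ^ 2 * q) • z] (hX.of_subset_span ?_) ?_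
    · rintro x (rfl | rfl)
      · exact mem_span_range_of_eq ![1, 0, 0, 0, 0, 0] (by simp)
      · refine mem_span_range_of_eq ![0, μ⁻¹, 0, -s / μ, 0, 0] ?_
        simp only [Matrix.cons_val]
        match_scalars <;> grind
    · rcases hm with ⟨hμa, rfl⟩ | ⟨hμa, rfl⟩
      all_goals
        simp only [forall_lt_fin_six, tableValue, lookup, Entry.eval, ModelType.table,
          List.find?_cons, List.find?_nil, Matrix.cons_val, Fin.reduceEq, Fin.isValue, and_self,
          and_true, and_false, decide_true, decide_false, cond_false, lie_add, add_lie,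
          lie_smul, smul_lie, h₁₂, h₁₃, h₁₄, h₁₅, h₂₃, h₂₄, h₂₅, h₃₄, h₃₅, h₄₃, h₄₅, h₅₄, hz,
          lie_self, smul_zero, add_zero, true_and]
        and_intros <;> match_scalars <;> grind
  by_cases ha : a = 0
  · exact main .L6_16 1 one_ne_zero (.inl ⟨by rw [ha, mul_zero], rfl⟩)
  · exact main .L6_14 a⁻¹ (inv_ne_zero ha) (.inr ⟨inv_mul_cancel₀ ha, rfl⟩)

theorem isModel_maximalClass_of_ne_zero (h2 : (2 : k) ≠ 0) (hL : finrank k L = 6)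
    (hX : SpansLayer k 0 {x₁, x₂}) (h₁₂ : ⁅x₁, x₂⁆ = x₃) (h₁₃ : ⁅x₁, x₃⁆ = x₄)
    (h₁₄ : ⁅x₁, x₄⁆ = x₅) (h₁₅ : ⁅x₁, x₅⁆ = p • z) (h₂₃ : ⁅x₂, x₃⁆ = a • x₅ + b • z)
    (h₂₄ : ⁅x₂, x₄⁆ = (a * p) • z) (h₂₅ : ⁅x₂, x₅⁆ = q • z) (h₃₄ : ⁅x₃, x₄⁆ = -(q • z))
    (h₃₅ : ⁅x₃, x₅⁆ = 0) (h₄₅ : ⁅x₄, x₅⁆ = 0) (hz : ∀ x : L, ⁅x, z⁆ = 0) (hq : q ≠ 0) :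
    IsModel k L := by
  have hz' (x : L) : ⁅z, x⁆ = 0 := by rw [← lie_skew, hz, neg_zero]
  obtain ⟨t, ht⟩ : ∃ t, t * q = -p := ⟨-p / q, by field_simp⟩
  have hX' : SpansLayer k 0 {x₁ + t • x₂, x₂} := by
    refine hX.of_subset_span ?_
    rintro x (rfl | rfl)
    · exact mem_span_pair.2 ⟨1, -t, by module⟩
    · exact mem_span_pair.2 ⟨0, 1, by module⟩
  refine isModel_maximalClass_of_eq_zero (a := a) (b := b - t * a ^ 2 * p) (x₃ := x₃)
    (x₄ := x₄ + t • (a • x₅ + b • z)) (x₅ := x₅ + (t * a * p) • z) h2 hL hX' ?_ ?_ ?_ ?_ ?_ ?_ ?_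
    ?_ ?_ ?_ hz hq
  all_goals
    simp only [lie_add, add_lie, lie_smul, smul_lie, h₁₂, h₁₃, h₁₄, h₁₅, h₂₃, h₂₄, h₂₅, h₃₄,
      h₃₅, h₄₅, hz, hz', lie_self, smul_zero, add_zero] <;>
    match_scalars <;> grind

theorem isModel_maximalClass_of_abelian (h2 : (2 : k) ≠ 0) (hL : finrank k L = 6)
    (hX : SpansLayer k 0 {x₁, x₂}) (h₁₂ : ⁅x₁, x₂⁆ = x₃) (h₁₃ : ⁅x₁, x₃⁆ = x₄)
    (h₁₄ : ⁅x₁, x₄⁆ = x₅) (h₁₅ : ⁅x₁, x₅⁆ = p • z) (h₂₃ : ⁅x₂, x₃⁆ = a • x₅ + b • z)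
    (h₂₄ : ⁅x₂, x₄⁆ = (a * p) • z) (h₂₅ : ⁅x₂, x₅⁆ = 0) (h₃₄ : ⁅x₃, x₄⁆ = 0)
    (h₃₅ : ⁅x₃, x₅⁆ = 0) (h₄₅ : ⁅x₄, x₅⁆ = 0) (hz : ∀ x : L, ⁅x, z⁆ = 0) (hp : p ≠ 0) :
    IsModel k L := by
  have hz' (x : L) : ⁅z, x⁆ = 0 := by rw [← lie_skew, hz, neg_zero]
  have main (m : ModelType) (μ s : k) (hμ : μ ≠ 0)
      (hm : a = 0 ∧ b = 0 ∧ s = 0 ∧ m = .L6_18 ∨ a = 0 ∧ μ * b = p ∧ s = 0 ∧ m = .L6_17 ∨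
        μ * a = 1 ∧ b = 2 * s * a ^ 2 * p ∧ m = .L6_15) : IsModel k L := by
    refine isModel_of_relations hL m 0 ![x₁ + s • x₂, μ • x₂, μ • x₃,
      μ • (x₄ + (s * a) • x₅ + (s * b) • z), μ • (x₅ + (2 * s * a * p) • z), (μ * p) • z]
      (hX.of_subset_span ?_) ?_
    · rintro x (rfl | rfl)
      · refine mem_span_range_of_eq ![1, -s / μ, 0, 0, 0, 0] ?_
        simp only [Matrix.cons_val]
        match_scalars <;> grind
      · refine mem_span_range_of_eq ![0, μ⁻¹, 0, 0, 0, 0] ?_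
        simp only [Matrix.cons_val]
        match_scalars <;> grind
    · rcases hm with ⟨ha, hb, _, rfl⟩ | ⟨ha, hb, _, rfl⟩ | ⟨ha, hb, rfl⟩
      all_goals
        simp only [forall_lt_fin_six, tableValue, lookup, Entry.eval, ModelType.table,
          List.find?_cons, List.find?_nil, Matrix.cons_val, Fin.reduceEq, Fin.isValue, and_self,
          and_true, and_false, decide_true, decide_false, cond_false, lie_add, add_lie,
          lie_smul, smul_lie, h₁₂, h₁₃, h₁₄, h₁₅, h₂₃, h₂₄, h₂₅, h₃₄, h₃₅, h₄₅, hz, hz',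
          lie_self, smul_zero, add_zero, true_and]
        and_intros <;> match_scalars <;> grind
  by_cases ha : a = 0
  · by_cases hb : b = 0
    · exact main .L6_18 1 0 one_ne_zero (.inl ⟨ha, hb, rfl, rfl⟩)
    · exact main .L6_17 (p / b) 0 (div_ne_zero hp hb) (.inr (.inl ⟨ha, by field_simp, rfl, rfl⟩))
  · exact main .L6_15 a⁻¹ (b / (2 * a ^ 2 * p)) (inv_ne_zero ha)
      (.inr (.inr ⟨inv_mul_cancel₀ ha, by field_simp, rfl⟩))

theorem isModel_maximalClass (h2 : (2 : k) ≠ 0) (hL : finrank k L = 6)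
    (h₁ : finrank k (lc k L 1) = 4) (h₂ : finrank k (lc k L 2) = 3) (h₃ : finrank k (lc k L 3) = 2)
    (h₄ : finrank k (lc k L 4) = 1) (h₅ : lc k L 5 = ⊥) : IsModel k L := by
  obtain ⟨w₁, w₂, hW⟩ := exists_spansLayer_pair (k := k) (L := L) (by lia)
  obtain ⟨x₁, x₂, hX, m₂₃, hX₃⟩ := hW.exists_adapted_pair (by lia)
  obtain ⟨z, hz, hspan⟩ := exists_central_generator h₄ h₅
  have eq_zero {x : L} (hx : x ∈ lc k L 5) : x = 0 := by rwa [h₅, mem_bot] at hx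
  have m₃ := lie_mem_lc_one (k := k) x₁ x₂
  have h₂₄ := lie_lie_lie_swap x₁ x₂
  have h₃₄ := lie_lie x₁ x₂ ⁅x₁, ⁅x₁, x₂⁆⁆
  generalize h₁₂ : ⁅x₁, x₂⁆ = x₃ at *
  generalize h₁₃ : ⁅x₁, x₃⁆ = x₄ at *
  generalize h₁₄ : ⁅x₁, x₄⁆ = x₅ at *
  have m₄ : x₄ ∈ lc k L 2 := h₁₃ ▸ lie_mem_lc_succ x₁ m₃
  have m₅ : x₅ ∈ lc k L 3 := h₁₄ ▸ lie_mem_lc_succ x₁ m₄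
  obtain ⟨p, h₁₅⟩ := hspan _ (lie_mem_lc_succ x₁ m₅)
  obtain ⟨q, h₂₅⟩ := hspan _ (lie_mem_lc_succ x₂ m₅)
  obtain ⟨a, w, hw, h₂₃⟩ := mem_span_singleton_sup.1 (hX₃ m₂₃)
  obtain ⟨b, rfl⟩ := hspan w hw
  rw [h₂₃, lie_add, lie_smul, lie_smul, hz, h₁₅, smul_zero, add_zero, smul_smul] at h₂₄
  rw [h₂₄, h₂₅, lie_smul, hz, smul_zero, zero_sub] at h₃₄
  have h₃₅ : ⁅x₃, x₅⁆ = 0 := eq_zero (lie_mem_lc (i := 1) (by lia) m₃ m₅)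
  have h₄₅ : ⁅x₄, x₅⁆ = 0 := eq_zero (lie_mem_lc (i := 2) (by lia) m₄ m₅)
  by_cases hq : q = 0
  · rw [hq, zero_smul] at h₂₅ h₃₄
    refine isModel_maximalClass_of_abelian h2 hL hX h₁₂ h₁₃ h₁₄ h₁₅ h₂₃ h₂₄ h₂₅
      (h₃₄.trans neg_zero) h₃₅ h₄₅ hz fun hp => ?_
    have hbot : lc k L 4 = ⊥ := (hX.pair_lie hX₃).lc_eq_bot (by
      rw [h₁₅, h₂₅, hp, zero_smul, Set.pair_eq_singleton, Set.singleton_subset_iff]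
      exact zero_mem _)
    rw [hbot, finrank_bot] at h₄
    exact zero_ne_one h₄
  · exact isModel_maximalClass_of_ne_zero h2 hL hX h₁₂ h₁₃ h₁₄ h₁₅ h₂₃ h₂₄ h₂₅ h₃₄ h₃₅ h₄₅ hz hq

end MaximalClass

section QuadraticForm

variable {k : Type*} [Field k]

theorem exists_quadratic_ne_zero (h2 : (2 : k) ≠ 0) {p q r : k} (h : p ≠ 0 ∨ q ≠ 0 ∨ r ≠ 0) :
    ∃ a b : k, p * a ^ 2 + 2 * q * (a * b) + r * b ^ 2 ≠ 0 := by
  by_cases hp : p = 0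
  · by_cases hr : r = 0
    · refine ⟨1, 1, ?_⟩
      have hq : q ≠ 0 := by
        simpa only [hp, hr, ne_eq, not_true_eq_false, false_or, or_false] using h
      simpa only [hp, hr, one_pow, mul_one, zero_add, add_zero] using mul_ne_zero h2 hq
    · exact ⟨0, 1, by simpa using hr⟩
  · exact ⟨1, 0, by simpa using hp⟩

theorem exists_orthogonal_basis (h2 : (2 : k) ≠ 0) {p q r : k} (h : p ≠ 0 ∨ q ≠ 0 ∨ r ≠ 0) :
    ∃ a b c d : k, a * d - b * c ≠ 0 ∧ p * a ^ 2 + 2 * q * (a * b) + r * b ^ 2 ≠ 0 ∧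
      p * (a * c) + q * (a * d + b * c) + r * (b * d) = 0 := by
  obtain ⟨a, b, hab⟩ := exists_quadratic_ne_zero h2 h
  refine ⟨a, b, -(q * a + r * b), p * a + q * b, ?_, hab, by ring⟩
  convert hab using 1
  ring

end QuadraticForm

section TwoGenerators

open Submodule

variable {k : Type*} [Field k] {L : Type*} [LieRing L] [LieAlgebra k L] [LieRing.IsNilpotent L]
  [Module.Finite k L] {x₁ x₂ x₃ x₄ x₅ z : L} {p q r : k}

theorem isModel_twoGenerators_of_relations (h2 : (2 : k) ≠ 0) (hL : finrank k L = 6)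
    (hX : SpansLayer k 0 {x₁, x₂}) (h₁₂ : ⁅x₁, x₂⁆ = x₃) (h₁₃ : ⁅x₁, x₃⁆ = x₄)
    (h₂₃ : ⁅x₂, x₃⁆ = x₅) (h₁₄ : ⁅x₁, x₄⁆ = p • z) (h₁₅ : ⁅x₁, x₅⁆ = q • z)
    (h₂₄ : ⁅x₂, x₄⁆ = q • z) (h₂₅ : ⁅x₂, x₅⁆ = r • z) (h₃₄ : ⁅x₃, x₄⁆ = 0)
    (h₃₅ : ⁅x₃, x₅⁆ = 0) (h₄₅ : ⁅x₄, x₅⁆ = 0) (hz : ∀ x : L, ⁅x, z⁆ = 0)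
    (hQ : p ≠ 0 ∨ q ≠ 0 ∨ r ≠ 0) : IsModel k L := by
  have h₂₁ : ⁅x₂, x₁⁆ = -x₃ := by rw [← lie_skew, h₁₂]
  have h₅₄ : ⁅x₅, x₄⁆ = 0 := by rw [← lie_skew, h₄₅, neg_zero]
  obtain ⟨a, b, c, d, hD, hP, hac⟩ := exists_orthogonal_basis h2 hQ
  generalize hD' : a * d - b * c = D at hD
  generalize hP' : p * a ^ 2 + 2 * q * (a * b) + r * b ^ 2 = P at hP
  obtain ⟨ε, hε⟩ : ∃ ε, ε * P = p * c ^ 2 + 2 * q * (c * d) + r * d ^ 2 :=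
    ⟨_ / P, div_mul_cancel₀ _ hP⟩
  refine isModel_of_relations hL .L6_21 ε ![a • x₁ + b • x₂, c • x₁ + d • x₂, D • x₃,
    D • (a • x₄ + b • x₅), D • (c • x₄ + d • x₅), (D * P) • z] (hX.of_subset_span ?_) ?_
  · rintro x (rfl | rfl)
    · refine mem_span_range_of_eq ![d / D, -b / D, 0, 0, 0, 0] ?_
      simp only [Matrix.cons_val]
      match_scalars <;> grind
    · refine mem_span_range_of_eq ![-c / D, a / D, 0, 0, 0, 0] ?_
      simp only [Matrix.cons_val]
      match_scalars <;> grind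
  · simp only [forall_lt_fin_six, tableValue, lookup, Entry.eval, ModelType.table,
      List.find?_cons, List.find?_nil, Matrix.cons_val, Fin.reduceEq, Fin.isValue, and_self,
      and_true, and_false, decide_true, decide_false, cond_false, cond_true, lie_add, add_lie,
      lie_smul, smul_lie, h₁₂, h₁₃, h₁₄, h₁₅, h₂₁, h₂₃, h₂₄, h₂₅, h₃₄, h₃₅, h₄₅, h₅₄, hz,
      lie_self, smul_zero, add_zero, true_and]
    and_intros <;> match_scalars <;> grind

theorem isModel_twoGenerators (h2 : (2 : k) ≠ 0) (hL : finrank k L = 6)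
    (h₁ : finrank k (lc k L 1) = 4) (h₃ : finrank k (lc k L 3) = 1) (h₄ : lc k L 4 = ⊥) :
    IsModel k L := by
  obtain ⟨x₁, x₂, hX⟩ := exists_spansLayer_pair (k := k) (L := L) (by lia)
  obtain ⟨z, hz, hspan⟩ := exists_central_generator h₃ h₄
  have eq_zero {x : L} (hx : x ∈ lc k L 4) : x = 0 := by rwa [h₄, mem_bot] at hx
  have m₃ := lie_mem_lc_one (k := k) x₁ x₂
  have hX₃ := hX.lie (hX.pair_lie hX.lie_pair)
  have h₂₄ := lie_lie_lie_swap x₁ x₂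
  generalize h₁₂ : ⁅x₁, x₂⁆ = x₃ at *
  generalize h₁₃ : ⁅x₁, x₃⁆ = x₄ at *
  generalize h₂₃ : ⁅x₂, x₃⁆ = x₅ at *
  have m₄ : x₄ ∈ lc k L 2 := h₁₃ ▸ lie_mem_lc_succ x₁ m₃
  have m₅ : x₅ ∈ lc k L 2 := h₂₃ ▸ lie_mem_lc_succ x₂ m₃
  obtain ⟨p, h₁₄⟩ := hspan _ (lie_mem_lc_succ x₁ m₄)
  obtain ⟨q, h₁₅⟩ := hspan _ (lie_mem_lc_succ x₁ m₅)
  obtain ⟨r, h₂₅⟩ := hspan _ (lie_mem_lc_succ x₂ m₅)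
  rw [h₁₅] at h₂₄
  refine isModel_twoGenerators_of_relations h2 hL hX h₁₂ h₁₃ h₂₃ h₁₄ h₁₅ h₂₄ h₂₅
    (eq_zero (lie_mem_lc (i := 1) (by lia) m₃ m₄)) (eq_zero (lie_mem_lc (i := 1) (by lia) m₃ m₅))
    (eq_zero (lie_mem_lc (i := 2) (by lia) m₄ m₅)) hz ?_
  by_contra! h₀
  obtain ⟨rfl, rfl, rfl⟩ := h₀
  have hbot : lc k L 3 = ⊥ := hX₃.lc_eq_bot (by
    simp only [Set.image2_insert_left, Set.image2_singleton_left, Set.image_pair, h₁₄, h₁₅, h₂₄,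
      h₂₅, zero_smul, Set.pair_eq_singleton, Set.union_self, Set.singleton_subset_iff]
    exact zero_mem _)
  rw [hbot, finrank_bot] at h₃
  exact zero_ne_one h₃

end TwoGenerators

section Triples

open Submodule

variable {k : Type*} [Field k] {L : Type*} [LieRing L] [LieAlgebra k L] {x₁ x₂ x₃ : L}

theorem SpansLayer.rotate {m : ℕ} (h : SpansLayer k m {x₁, x₂, x₃}) :
    SpansLayer k m {x₂, x₃, x₁} := by
  rwa [Set.insert_comm, Set.pair_comm] at h

theorem SpansLayer.lie_triple (hX : SpansLayer k 0 {x₁, x₂, x₃}) :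
    SpansLayer k 1 {⁅x₁, x₂⁆, ⁅x₁, x₃⁆, ⁅x₂, x₃⁆} := by
  refine (hX.lie hX).of_subset_span ?_
  rw [Set.image2_subset_iff]
  have swap {x y : L} {S : Submodule k L} (h : ⁅x, y⁆ ∈ S) : ⁅y, x⁆ ∈ S := by
    rw [← lie_skew]
    exact neg_mem h
  have h₁₂ : ⁅x₁, x₂⁆ ∈ span k {⁅x₁, x₂⁆, ⁅x₁, x₃⁆, ⁅x₂, x₃⁆} := subset_span (.inl rfl)
  have h₁₃ : ⁅x₁, x₃⁆ ∈ span k {⁅x₁, x₂⁆, ⁅x₁, x₃⁆, ⁅x₂, x₃⁆} := subset_span (.inr (.inl rfl))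
  have h₂₃ : ⁅x₂, x₃⁆ ∈ span k {⁅x₁, x₂⁆, ⁅x₁, x₃⁆, ⁅x₂, x₃⁆} := subset_span (.inr (.inr rfl))
  rintro x (rfl | rfl | rfl) y (rfl | rfl | rfl) <;>
    first | assumption | exact swap (by assumption) | (rw [lie_self]; exact zero_mem _)

theorem SpansLayer.lie_triple_of_lie_mem (hX : SpansLayer k 0 {x₁, x₂, x₃})
    (h : ⁅x₂, x₃⁆ ∈ lc k L 2) : SpansLayer k 1 {⁅x₁, x₂⁆, ⁅x₁, x₃⁆} := by
  refine hX.lie_triple.of_subset ?_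
  rintro x (rfl | rfl | rfl)
  · exact mem_sup_left (subset_span (.inl rfl))
  · exact mem_sup_left (subset_span (.inr rfl))
  · exact mem_sup_right h

theorem SpansLayer.exists_triple_of_relation {m : ℕ} {B : Submodule k L} {a b c : k}
    (hX : SpansLayer k m {x₁, x₂, x₃}) (ha : a ≠ 0)
    (h : a • ⁅x₂, x₃⁆ + b • ⁅x₃, x₁⁆ + c • ⁅x₁, x₂⁆ ∈ B) :
    ∃ y₁ y₂ y₃ : L, SpansLayer k m {y₁, y₂, y₃} ∧ ⁅y₂, y₃⁆ ∈ B := by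
  refine ⟨x₁, x₂ - (b / a) • x₁, x₃ - (c / a) • x₁, hX.of_subset_span ?_, ?_⟩
  · rintro x (rfl | rfl | rfl)
    · exact subset_span (.inl rfl)
    · exact mem_span_triple.2 ⟨b / a, 1, 0, by module⟩
    · exact mem_span_triple.2 ⟨c / a, 0, 1, by module⟩
  · refine (smul_mem_iff _ ha).1 ?_
    convert h using 1
    simp only [sub_lie, lie_sub, smul_lie, lie_smul, lie_self, ← lie_skew x₂ x₁,
      ← lie_skew x₃ x₁]
    match_scalars <;> field_simp

theorem SpansLayer.exists_triple_of_proportional {m : ℕ} {B : Submodule k L} {a b c : k}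
    (hX : SpansLayer k m {x₁, x₂, x₃}) (ha : a ≠ 0) (hb : b • ⁅x₁, x₂⁆ - a • ⁅x₃, x₁⁆ ∈ B)
    (hc : a • ⁅x₂, x₃⁆ - c • ⁅x₁, x₂⁆ ∈ B) :
    ∃ y₁ y₂ y₃ : L, SpansLayer k m {y₁, y₂, y₃} ∧ ⁅y₁, y₃⁆ ∈ B ∧ ⁅y₂, y₃⁆ ∈ B := by
  refine ⟨x₁, x₂, c • x₁ + b • x₂ + a • x₃, hX.of_subset_span ?_, ?_, ?_⟩
  · rintro x (rfl | rfl | rfl)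
    · exact subset_span (.inl rfl)
    · exact subset_span (.inr (.inl rfl))
    · exact mem_span_triple.2 ⟨-c / a, -b / a, 1 / a, by match_scalars <;> grind⟩
  · convert hb using 1
    simp only [lie_add, lie_smul, lie_self, ← lie_skew x₁ x₃]
    module
  · convert hc using 1
    simp only [lie_add, lie_smul, lie_self, ← lie_skew x₂ x₁]
    module

variable [Module.Finite k L] {B : Submodule k L}

theorem SpansLayer.exists_triple_lie_mem {m : ℕ} (hX : SpansLayer k m {x₁, x₂, x₃})
    (hB : B ≤ lc k L 1) (h : finrank k (lc k L 1) < finrank k B + 3) :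
    ∃ y₁ y₂ y₃ : L, SpansLayer k m {y₁, y₂, y₃} ∧ ⁅y₂, y₃⁆ ∈ B := by
  obtain ⟨c, hc, hcB⟩ := exists_relation 3 hB h (v := ![⁅x₂, x₃⁆, ⁅x₃, x₁⁆, ⁅x₁, x₂⁆])
    (by
      intro i
      fin_cases i <;> exact lie_mem_lc_one _ _)
  simp only [Fin.sum_univ_three, Matrix.cons_val] at hcB
  obtain ⟨i, hi⟩ := Function.ne_iff.1 hc
  fin_cases i
  · exact hX.exists_triple_of_relation hi hcB
  · exact hX.rotate.exists_triple_of_relation (b := c 2) (c := c 0) hi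
      (by rwa [add_assoc, add_comm] at hcB)
  · exact hX.rotate.rotate.exists_triple_of_relation (b := c 0) (c := c 1) hi
      (by rwa [add_comm, ← add_assoc] at hcB)

theorem SpansLayer.exists_triple_lie_lie_mem {m : ℕ} (hX : SpansLayer k m {x₁, x₂, x₃})
    (hB : B ≤ lc k L 1) (h : finrank k (lc k L 1) ≤ finrank k B + 1) :
    ∃ y₁ y₂ y₃ : L, SpansLayer k m {y₁, y₂, y₃} ∧ ⁅y₁, y₃⁆ ∈ B ∧ ⁅y₂, y₃⁆ ∈ B := by
  obtain ⟨v, -, hv⟩ := exists_singleton_span_sup hB h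
  have exists_coord (x y : L) : ∃ a : k, ∃ b ∈ B, ⁅x, y⁆ = a • v + b :=
    mem_span_singleton_sup.1 (hv (lie_mem_lc_one x y))
  have cross_mem {p q : L} (a b : k) (hp : p ∈ B) (hq : q ∈ B) :
      b • (a • v + p) - a • (b • v + q) ∈ B := by
    convert sub_mem (B.smul_mem b hp) (B.smul_mem a hq) using 1
    module
  obtain ⟨a, p, hp, h₁₂⟩ := exists_coord x₁ x₂
  obtain ⟨b, q, hq, h₃₁⟩ := exists_coord x₃ x₁
  obtain ⟨c, r, hr, h₂₃⟩ := exists_coord x₂ x₃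
  by_cases ha : a = 0
  · by_cases hb : b = 0
    · by_cases hc : c = 0
      · rw [hb, zero_smul, zero_add] at h₃₁
        rw [hc, zero_smul, zero_add] at h₂₃
        exact ⟨x₁, x₂, x₃, hX, by rw [← lie_skew, h₃₁]; exact neg_mem hq, h₂₃ ▸ hr⟩
      · exact hX.rotate.exists_triple_of_proportional hc (h₂₃ ▸ h₁₂ ▸ cross_mem c a hr hp)
          (h₂₃ ▸ h₃₁ ▸ cross_mem b c hq hr)
    · exact hX.rotate.rotate.exists_triple_of_proportional hb (h₂₃ ▸ h₃₁ ▸ cross_mem b c hq hr)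
        (h₁₂ ▸ h₃₁ ▸ cross_mem a b hp hq)
  · exact hX.exists_triple_of_proportional ha (h₁₂ ▸ h₃₁ ▸ cross_mem a b hp hq)
      (h₂₃ ▸ h₁₂ ▸ cross_mem c a hr hp)

end Triples

section ThreeGenerators

open Submodule

variable {k : Type*} [Field k] {L : Type*} [LieRing L] [LieAlgebra k L] [LieRing.IsNilpotent L]
  [Module.Finite k L] {x₁ x₂ x₃ x₄ x₅ z : L} {s l₂ l₃ p q r : k}

theorem isModel_freeTwoStep (hL : finrank k L = 6) (h₁ : finrank k (lc k L 1) = 3)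
    (h₂ : lc k L 2 = ⊥) : IsModel k L := by
  obtain ⟨x₁, x₂, x₃, hX⟩ := exists_spansLayer_triple (k := k) (L := L) (by lia)
  have lie_lie_eq_zero (x y z : L) : ⁅x, ⁅y, z⁆⁆ = 0 := by
    have h := lie_mem_lc_succ x (lie_mem_lc_one (k := k) y z)
    rwa [h₂, mem_bot] at h
  refine isModel_of_relations hL .L6_26 0 ![x₁, x₂, x₃, ⁅x₁, x₂⁆, ⁅x₁, x₃⁆, ⁅x₂, x₃⁆]
    (hX.of_subset_span ?_) ?_
  · rintro x (rfl | rfl | rfl)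
    · exact mem_span_range_of_eq ![1, 0, 0, 0, 0, 0] (by simp)
    · exact mem_span_range_of_eq ![0, 1, 0, 0, 0, 0] (by simp)
    · exact mem_span_range_of_eq ![0, 0, 1, 0, 0, 0] (by simp)
  · simp only [forall_lt_fin_six, tableValue, lookup, Entry.eval, ModelType.table,
      List.find?_cons, List.find?_nil, Matrix.cons_val, Fin.reduceEq, Fin.isValue, and_self,
      and_true, and_false, decide_true, decide_false, cond_false, lie_lie_eq_zero]

theorem isModel_threeGenerators_of_diag (hL : finrank k L = 6)
    (hX : SpansLayer k 0 {x₁, x₂, x₃}) (h₁₂ : ⁅x₁, x₂⁆ = x₄) (h₁₃ : ⁅x₁, x₃⁆ = x₅)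
    (h₂₃ : ⁅x₂, x₃⁆ = s • z) (h₁₄ : ⁅x₁, x₄⁆ = l₂ • z) (h₁₅ : ⁅x₁, x₅⁆ = l₃ • z)
    (h₂₄ : ⁅x₂, x₄⁆ = p • z) (h₂₅ : ⁅x₂, x₅⁆ = 0) (h₃₄ : ⁅x₃, x₄⁆ = 0) (h₃₅ : ⁅x₃, x₅⁆ = r • z)
    (h₄₅ : ⁅x₄, x₅⁆ = 0) (hz : ∀ x : L, ⁅x, z⁆ = 0) (hp : p ≠ 0) : IsModel k L := by
  have hz' (x : L) : ⁅z, x⁆ = 0 := by rw [← lie_skew, hz, neg_zero]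
  have h₃₂ : ⁅x₃, x₂⁆ = -(s • z) := by rw [← lie_skew, h₂₃]
  obtain ⟨α, hα⟩ : ∃ α, α * p = -l₂ := ⟨_ / p, div_mul_cancel₀ _ hp⟩
  obtain ⟨t, ht⟩ : ∃ t, t * p = -s := ⟨_ / p, div_mul_cancel₀ _ hp⟩
  have main (m : ModelType) (ε μ β : k) (hμ : μ ≠ 0)
      (hm : r = ε * p ∧ μ = 1 ∧ l₃ + β * r = 0 ∧ m = .L6_19 ∨
        r = 0 ∧ μ * l₃ = p ∧ m = .L6_20) : IsModel k L := by
    refine isModel_of_relations hL m ε ![x₁ + α • x₂ + β • x₃, x₂, μ • (x₃ + t • x₄),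
      x₄ - (β * s) • z, μ • (x₅ + (α * s) • z), p • z] (hX.of_subset_span ?_) ?_
    · rintro x (rfl | rfl | rfl)
      · refine mem_span_range_of_eq ![1, -α, -β / μ, β * t, 0, β * t * β * s / p] ?_
        simp only [Matrix.cons_val]
        match_scalars <;> grind
      · exact mem_span_range_of_eq ![0, 1, 0, 0, 0, 0] (by simp)
      · refine mem_span_range_of_eq ![0, 0, μ⁻¹, -t, 0, -t * β * s / p] ?_
        simp only [Matrix.cons_val]
        match_scalars <;> grind
    · rcases hm with ⟨hr, hμ', hβ, rfl⟩ | ⟨hr, hl, rfl⟩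
      all_goals
        simp only [forall_lt_fin_six, tableValue, lookup, Entry.eval, ModelType.table,
          List.find?_cons, List.find?_nil, Matrix.cons_val, Fin.reduceEq, Fin.isValue, and_self,
          and_true, and_false, decide_true, decide_false, cond_false, cond_true, lie_add, add_lie,
          lie_sub, sub_lie, lie_smul, smul_lie, h₁₂, h₁₃, h₁₄, h₁₅, h₂₃, h₂₄, h₂₅, h₃₂, h₃₄, h₃₅,
          h₄₅, hz, hz', lie_self, smul_zero, add_zero]
        and_intros <;> match_scalars <;> grind
  by_cases hr : r = 0
  · by_cases hl : l₃ = 0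
    · exact main .L6_19 0 1 0 one_ne_zero (.inl ⟨by simp [hr], rfl, by simp [hl], rfl⟩)
    · exact main .L6_20 0 (p / l₃) 0 (div_ne_zero hp hl) (.inr ⟨hr, div_mul_cancel₀ _ hl, rfl⟩)
  · exact main .L6_19 (r / p) 1 (-l₃ / r) one_ne_zero
      (.inl ⟨(div_mul_cancel₀ _ hp).symm, rfl, by field_simp; ring, rfl⟩)

theorem isModel_threeGenerators_of_form_ne_zero (h2 : (2 : k) ≠ 0) (hL : finrank k L = 6)
    (hX : SpansLayer k 0 {x₁, x₂, x₃}) (h₁₂ : ⁅x₁, x₂⁆ = x₄) (h₁₃ : ⁅x₁, x₃⁆ = x₅)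
    (h₂₃ : ⁅x₂, x₃⁆ = s • z) (h₁₄ : ⁅x₁, x₄⁆ = l₂ • z) (h₁₅ : ⁅x₁, x₅⁆ = l₃ • z)
    (h₂₄ : ⁅x₂, x₄⁆ = p • z) (h₂₅ : ⁅x₂, x₅⁆ = q • z) (h₃₄ : ⁅x₃, x₄⁆ = q • z)
    (h₃₅ : ⁅x₃, x₅⁆ = r • z) (h₄₅ : ⁅x₄, x₅⁆ = 0) (hz : ∀ x : L, ⁅x, z⁆ = 0)
    (hQ : p ≠ 0 ∨ q ≠ 0 ∨ r ≠ 0) : IsModel k L := by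
  have h₃₂ : ⁅x₃, x₂⁆ = -(s • z) := by rw [← lie_skew, h₂₃]
  have h₅₄ : ⁅x₅, x₄⁆ = 0 := by rw [← lie_skew, h₄₅, neg_zero]
  obtain ⟨a, b, c, d, hD, hP, hac⟩ := exists_orthogonal_basis h2 hQ
  have hX' : SpansLayer k 0 {x₁, a • x₂ + b • x₃, c • x₂ + d • x₃} := by
    refine hX.of_subset_span ?_
    rintro x (rfl | rfl | rfl)
    · exact subset_span (.inl rfl)
    · exact mem_span_triple.2
        ⟨0, d / (a * d - b * c), -b / (a * d - b * c), by match_scalars <;> grind⟩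
    · exact mem_span_triple.2
        ⟨0, -c / (a * d - b * c), a / (a * d - b * c), by match_scalars <;> grind⟩
  refine isModel_threeGenerators_of_diag hL hX' rfl rfl (z := z) (s := (a * d - b * c) * s)
    (l₂ := a * l₂ + b * l₃) (l₃ := c * l₂ + d * l₃)
    (r := p * c ^ 2 + 2 * q * (c * d) + r * d ^ 2) ?_ ?_ ?_ ?_ ?_ ?_ ?_ ?_ hz hP
  all_goals
    simp only [lie_add, add_lie, lie_smul, smul_lie, h₁₂, h₁₃, h₁₄, h₁₅, h₂₃, h₂₄, h₂₅, h₃₂, h₃₄,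
      h₃₅, h₄₅, h₅₄, lie_self, smul_zero, add_zero] <;>
    match_scalars <;> grind

theorem isModel_threeGenerators_of_left_ne_zero (hL : finrank k L = 6)
    (hX : SpansLayer k 0 {x₁, x₂, x₃}) (h₁₂ : ⁅x₁, x₂⁆ = x₄) (h₁₃ : ⁅x₁, x₃⁆ = x₅)
    (h₂₃ : ⁅x₂, x₃⁆ = s • z) (h₁₄ : ⁅x₁, x₄⁆ = l₂ • z) (h₁₅ : ⁅x₁, x₅⁆ = l₃ • z)
    (h₂₄ : ⁅x₂, x₄⁆ = 0) (h₂₅ : ⁅x₂, x₅⁆ = 0) (h₃₄ : ⁅x₃, x₄⁆ = 0) (h₃₅ : ⁅x₃, x₅⁆ = 0)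
    (h₄₅ : ⁅x₄, x₅⁆ = 0) (hz : ∀ x : L, ⁅x, z⁆ = 0) (hl₂ : l₂ ≠ 0) : IsModel k L := by
  have main (m : ModelType) (μ : k) (hμ : μ ≠ 0)
      (hm : s = 0 ∧ m = .L6_25 ∨ μ * s = l₂ ∧ m = .L6_23) : IsModel k L := by
    refine isModel_of_relations hL m 0 ![x₁, x₂, μ • (x₃ - (l₃ / l₂) • x₂), x₄,
      μ • (x₅ - (l₃ / l₂) • x₄), l₂ • z] (hX.of_subset_span ?_) ?_
    · rintro x (rfl | rfl | rfl)
      · exact mem_span_range_of_eq ![1, 0, 0, 0, 0, 0] (by simp)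
      · exact mem_span_range_of_eq ![0, 1, 0, 0, 0, 0] (by simp)
      · refine mem_span_range_of_eq ![0, l₃ / l₂, μ⁻¹, 0, 0, 0] ?_
        simp only [Matrix.cons_val]
        match_scalars <;> grind
    · rcases hm with ⟨hs, rfl⟩ | ⟨hs, rfl⟩
      all_goals
        simp only [forall_lt_fin_six, tableValue, lookup, Entry.eval, ModelType.table,
          List.find?_cons, List.find?_nil, Matrix.cons_val, Fin.reduceEq, Fin.isValue, and_self,
          and_true, and_false, decide_true, decide_false, cond_false, lie_sub, sub_lie, lie_smul,
          smul_lie, h₁₂, h₁₃, h₁₄, h₁₅, h₂₃, h₂₄, h₂₅, h₃₄, h₃₅, h₄₅, hz, lie_self, smul_zero,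
          sub_zero, true_and]
        and_intros <;> match_scalars <;> grind
  by_cases hs : s = 0
  · exact main .L6_25 1 one_ne_zero (.inl ⟨hs, rfl⟩)
  · exact main .L6_23 (l₂ / s) (div_ne_zero hl₂ hs) (.inr ⟨div_mul_cancel₀ _ hs, rfl⟩)

theorem isModel_threeGenerators_of_form_eq_zero (hL : finrank k L = 6)
    (hX : SpansLayer k 0 {x₁, x₂, x₃}) (h₁₂ : ⁅x₁, x₂⁆ = x₄) (h₁₃ : ⁅x₁, x₃⁆ = x₅)
    (h₂₃ : ⁅x₂, x₃⁆ = s • z) (h₁₄ : ⁅x₁, x₄⁆ = l₂ • z) (h₁₅ : ⁅x₁, x₅⁆ = l₃ • z)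
    (h₂₄ : ⁅x₂, x₄⁆ = 0) (h₂₅ : ⁅x₂, x₅⁆ = 0) (h₃₄ : ⁅x₃, x₄⁆ = 0) (h₃₅ : ⁅x₃, x₅⁆ = 0)
    (h₄₅ : ⁅x₄, x₅⁆ = 0) (hz : ∀ x : L, ⁅x, z⁆ = 0) (hl : l₂ ≠ 0 ∨ l₃ ≠ 0) : IsModel k L := by
  rcases hl with hl₂ | hl₃
  · exact isModel_threeGenerators_of_left_ne_zero hL hX h₁₂ h₁₃ h₂₃ h₁₄ h₁₅ h₂₄ h₂₅ h₃₄ h₃₅ h₄₅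
      hz hl₂
  · have h₃₂ : ⁅x₃, x₂⁆ = (-s) • z := by rw [← lie_skew, h₂₃, neg_smul]
    have h₅₄ : ⁅x₅, x₄⁆ = 0 := by rw [← lie_skew, h₄₅, neg_zero]
    exact isModel_threeGenerators_of_left_ne_zero hL (Set.pair_comm x₂ x₃ ▸ hX) h₁₃ h₁₂ h₃₂ h₁₅ h₁₄
      h₃₅ h₃₄ h₂₅ h₂₄ h₅₄ hz hl₃

theorem isModel_threeGenerators (h2 : (2 : k) ≠ 0) (hL : finrank k L = 6)
    (h₁ : finrank k (lc k L 1) = 3) (h₂ : finrank k (lc k L 2) = 1) (h₃ : lc k L 3 = ⊥) :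
    IsModel k L := by
  obtain ⟨w₁, w₂, w₃, hW⟩ := exists_spansLayer_triple (k := k) (L := L) (by lia)
  obtain ⟨x₁, x₂, x₃, hX, m₂₃⟩ := hW.exists_triple_lie_mem (lc_antitone one_le_two) (by lia)
  obtain ⟨z, hz, hspan⟩ := exists_central_generator h₂ h₃
  have eq_zero {x : L} (hx : x ∈ lc k L 3) : x = 0 := by rwa [h₃, mem_bot] at hx
  obtain ⟨s, h₂₃⟩ := hspan _ m₂₃
  have m₄ := lie_mem_lc_one (k := k) x₁ x₂
  have m₅ := lie_mem_lc_one (k := k) x₁ x₃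
  have h₃₄ : ⁅x₃, ⁅x₁, x₂⁆⁆ = ⁅x₂, ⁅x₁, x₃⁆⁆ := by
    rw [leibniz_lie x₃, ← lie_skew x₃ x₂, h₂₃, lie_neg, lie_smul, hz, smul_zero, neg_zero, add_zero,
      ← lie_skew x₁ x₃, lie_neg, ← lie_skew]
  have hX₃ := hX.lie (hX.lie_triple_of_lie_mem m₂₃)
  generalize h₁₂ : ⁅x₁, x₂⁆ = x₄ at *
  generalize h₁₃ : ⁅x₁, x₃⁆ = x₅ at *
  obtain ⟨l₂, h₁₄⟩ := hspan _ (lie_mem_lc_succ x₁ m₄)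
  obtain ⟨l₃, h₁₅⟩ := hspan _ (lie_mem_lc_succ x₁ m₅)
  obtain ⟨p, h₂₄⟩ := hspan _ (lie_mem_lc_succ x₂ m₄)
  obtain ⟨q, h₂₅⟩ := hspan _ (lie_mem_lc_succ x₂ m₅)
  obtain ⟨r, h₃₅⟩ := hspan _ (lie_mem_lc_succ x₃ m₅)
  have h₄₅ : ⁅x₄, x₅⁆ = 0 := eq_zero (lie_mem_lc (i := 1) le_rfl m₄ m₅)
  rw [h₂₅] at h₃₄
  by_cases hQ : p ≠ 0 ∨ q ≠ 0 ∨ r ≠ 0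
  · exact isModel_threeGenerators_of_form_ne_zero h2 hL hX h₁₂ h₁₃ h₂₃ h₁₄ h₁₅ h₂₄ h₂₅ h₃₄ h₃₅ h₄₅
      hz hQ
  push Not at hQ
  obtain ⟨rfl, rfl, rfl⟩ := hQ
  rw [zero_smul] at h₂₄ h₂₅ h₃₄ h₃₅
  refine isModel_threeGenerators_of_form_eq_zero hL hX h₁₂ h₁₃ h₂₃ h₁₄ h₁₅ h₂₄ h₂₅ h₃₄ h₃₅ h₄₅ hz ?_
  by_contra! hl
  have hbot : lc k L 2 = ⊥ := hX₃.lc_eq_bot (by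
    rw [Set.image2_subset_iff]
    rintro x (rfl | rfl | rfl) v (rfl | rfl) <;>
      simp only [h₁₄, h₁₅, h₂₄, h₂₅, h₃₄, h₃₅, hl, zero_smul, SetLike.mem_coe, zero_mem])
  rw [hbot, finrank_bot] at h₂
  exact zero_ne_one h₂

end ThreeGenerators

section AdaptedTriples

open Submodule

variable {k : Type*} [Field k] {L : Type*} [LieRing L] [LieAlgebra k L] {x₁ x₂ x₃ v : L} {m : ℕ}

theorem SpansLayer.sub_third (hX : SpansLayer k m {x₁, x₂, x₃}) (hv : v ∈ lc k L (m + 1)) :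
    SpansLayer k m {x₁, x₂, x₃ - v} := by
  refine hX.of_subset ?_
  rintro x (rfl | rfl | rfl)
  · exact mem_sup_left (subset_span (.inl rfl))
  · exact mem_sup_left (subset_span (.inr (.inl rfl)))
  · exact mem_sup.2 ⟨_, subset_span (.inr (.inr rfl)), v, hv, sub_add_cancel x v⟩

theorem SpansLayer.lie_of_lie_lie_mem (hX : SpansLayer k 0 {x₁, x₂, x₃})
    (h₁₃ : ⁅x₁, x₃⁆ ∈ lc k L 2) (h₂₃ : ⁅x₂, x₃⁆ ∈ lc k L 2) : SpansLayer k 1 {⁅x₁, x₂⁆} :=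
  (hX.lie_triple_of_lie_mem h₂₃).singleton_of_pair h₁₃

theorem SpansLayer.triple_lie_of_lie_mem (hX : SpansLayer k 0 {x₁, x₂, x₃})
    (hv : SpansLayer k m {v}) (h : ⁅x₃, v⁆ ∈ lc k L (m + 2)) :
    SpansLayer k (m + 1) {⁅x₁, v⁆, ⁅x₂, v⁆} := by
  refine hX.lc_succ_le hv ?_ le_sup_right
  rintro x (rfl | rfl | rfl) _ rfl
  · exact mem_sup_left (subset_span (.inl rfl))
  · exact mem_sup_left (subset_span (.inr rfl))
  · exact mem_sup_right h

theorem SpansLayer.exists_adapted_triple [Module.Finite k L]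
    (hX : SpansLayer k 0 {x₁, x₂, x₃}) (h₁₃ : ⁅x₁, x₃⁆ ∈ lc k L 2) (h₂₃ : ⁅x₂, x₃⁆ ∈ lc k L 2)
    (h : finrank k (lc k L 2) ≤ finrank k (lc k L 3) + 1) :
    ∃ y₁ y₂ : L, SpansLayer k 0 {y₁, y₂, x₃} ∧ ⁅y₂, ⁅y₁, y₂⁆⁆ ∈ lc k L 3 ∧
      ⁅y₁, x₃⁆ ∈ lc k L 2 ∧ ⁅y₂, x₃⁆ ∈ lc k L 2 := by
  obtain ⟨y₁, y₂, hspan, hmem⟩ := exists_span_pair_eq_lie_mem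
    (lc_antitone (by lia) : lc k L 3 ≤ lc k L 2) (by lia) x₁ x₂
  have lie_mem (y : L) (hy : y ∈ span k {y₁, y₂}) : ⁅y, x₃⁆ ∈ lc k L 2 := by
    rw [hspan] at hy
    obtain ⟨a, b, rfl⟩ := mem_span_pair.1 hy
    rw [add_lie, smul_lie, smul_lie]
    exact add_mem (smul_mem _ _ h₁₃) (smul_mem _ _ h₂₃)
  have hle : ({x₁, x₂} : Set L) ⊆ span k {y₁, y₂, x₃} := by
    rw [← span_le, ← hspan]
    exact span_mono (Set.insert_subset_insert (Set.singleton_subset_iff.2 (.inl rfl)))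
  refine ⟨y₁, y₂, hX.of_subset_span ?_, hmem, lie_mem y₁ (subset_span (.inl rfl)),
    lie_mem y₂ (subset_span (.inr rfl))⟩
  rintro x (rfl | rfl | rfl)
  · exact hle (.inl rfl)
  · exact hle (.inr rfl)
  · exact subset_span (.inr (.inr rfl))

theorem lie_lie_mem_lc_three (m₁₃ : ⁅x₁, x₃⁆ ∈ lc k L 2) (m₂₃ : ⁅x₂, x₃⁆ ∈ lc k L 2) :
    ⁅x₃, ⁅x₁, x₂⁆⁆ ∈ lc k L 3 := by
  rw [← lie_skew, lie_lie]
  exact neg_mem (sub_mem (lie_mem_lc_succ x₁ m₂₃) (lie_mem_lc_succ x₂ m₁₃))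

theorem lie_lie_lie_mem_lc_four (m₁₃ : ⁅x₁, x₃⁆ ∈ lc k L 2) (m₂₃ : ⁅x₂, x₃⁆ ∈ lc k L 2) :
    ⁅x₃, ⁅x₁, ⁅x₁, x₂⁆⁆⁆ ∈ lc k L 4 := by
  have m₃₁ : ⁅x₃, x₁⁆ ∈ lc k L 2 := by rw [← lie_skew]; exact neg_mem m₁₃
  rw [leibniz_lie]
  exact add_mem (lie_mem_lc (i := 2) (j := 1) le_rfl m₃₁ (lie_mem_lc_one x₁ x₂))
    (lie_mem_lc_succ x₁ (lie_lie_mem_lc_three m₁₃ m₂₃))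

end AdaptedTriples

section ThreeGeneratorsClassThree

open Submodule

variable {k : Type*} [Field k] {L : Type*} [LieRing L] [LieAlgebra k L] [LieRing.IsNilpotent L]
  [Module.Finite k L] {x₁ x₂ x₃ x₄ x₅ x₆ : L} {m b c : k}

theorem isModel_threeGenerators_classThree_of_traceless (h2 : (2 : k) ≠ 0) (hL : finrank k L = 6)
    (hX : SpansLayer k 0 {x₁, x₂, x₄}) (h₁₂ : ⁅x₁, x₂⁆ = x₃) (h₁₃ : ⁅x₁, x₃⁆ = x₅)
    (h₂₃ : ⁅x₂, x₃⁆ = x₆) (h₁₄ : ⁅x₁, x₄⁆ = m • x₅ + b • x₆) (h₂₄ : ⁅x₂, x₄⁆ = c • x₅ - m • x₆)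
    (h₃₄ : ⁅x₃, x₄⁆ = 0) (h₅ : ∀ x : L, ⁅x, x₅⁆ = 0) (h₆ : ∀ x : L, ⁅x, x₆⁆ = 0)
    (hM : c ≠ 0 ∨ m ≠ 0 ∨ -b ≠ 0) : IsModel k L := by
  have h₂₁ : ⁅x₂, x₁⁆ = -x₃ := by rw [← lie_skew, h₁₂]
  obtain ⟨β, α, hΔ⟩ := exists_quadratic_ne_zero h2 hM
  generalize hΔ' : c * β ^ 2 + 2 * m * (β * α) + -b * α ^ 2 = Δ at hΔ
  refine isModel_of_relations hL .L6_24 (m ^ 2 + b * c)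
    ![(α * m + β * c) • x₁ + (α * b - β * m) • x₂, α • x₁ + β • x₂, Δ • x₃, Δ • x₄,
      (Δ * (α * m + β * c)) • x₅ + (Δ * (α * b - β * m)) • x₆, (Δ * α) • x₅ + (Δ * β) • x₆]
    (hX.of_subset_span ?_) ?_
  · rintro x (rfl | rfl | rfl)
    · refine mem_span_range_of_eq ![β / Δ, -(α * b - β * m) / Δ, 0, 0, 0, 0] ?_
      simp only [Matrix.cons_val]
      match_scalars <;> grind
    · refine mem_span_range_of_eq ![-α / Δ, (α * m + β * c) / Δ, 0, 0, 0, 0] ?_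
      simp only [Matrix.cons_val]
      match_scalars <;> grind
    · refine mem_span_range_of_eq ![0, 0, 0, Δ⁻¹, 0, 0] ?_
      simp only [Matrix.cons_val]
      match_scalars <;> grind
  · simp only [forall_lt_fin_six, tableValue, lookup, Entry.eval, ModelType.table,
      List.find?_cons, List.find?_nil, Matrix.cons_val, Fin.reduceEq, Fin.isValue, and_self,
      and_true, and_false, decide_true, decide_false, cond_false, cond_true, lie_add, add_lie,
      lie_smul, smul_lie, h₁₂, h₁₃, h₁₄, h₂₁, h₂₃, h₂₄, h₃₄, h₅, h₆, lie_self, smul_zero, add_zero]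
    and_intros <;> match_scalars <;> grind

theorem isModel_threeGenerators_classThree_of_lie_eq_zero (hL : finrank k L = 6)
    (hX : SpansLayer k 0 {x₁, x₂, x₄}) (h₁₂ : ⁅x₁, x₂⁆ = x₃) (h₁₃ : ⁅x₁, x₃⁆ = x₅)
    (h₂₃ : ⁅x₂, x₃⁆ = x₆) (h₁₄ : ⁅x₁, x₄⁆ = 0) (h₂₄ : ⁅x₂, x₄⁆ = 0)
    (h₃₄ : ⁅x₃, x₄⁆ = 0) (h₅ : ∀ x : L, ⁅x, x₅⁆ = 0) (h₆ : ∀ x : L, ⁅x, x₆⁆ = 0) :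
    IsModel k L := by
  refine isModel_of_relations hL .L5_9 0 ![x₁, x₂, x₃, x₄, x₅, x₆] (hX.of_subset_span ?_) ?_
  · rintro x (rfl | rfl | rfl)
    · exact mem_span_range_of_eq ![1, 0, 0, 0, 0, 0] (by simp)
    · exact mem_span_range_of_eq ![0, 1, 0, 0, 0, 0] (by simp)
    · exact mem_span_range_of_eq ![0, 0, 0, 1, 0, 0] (by simp)
  · simp only [forall_lt_fin_six, tableValue, lookup, Entry.eval, ModelType.table,
      List.find?_cons, List.find?_nil, Matrix.cons_val, Fin.reduceEq, Fin.isValue, and_self,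
      and_true, and_false, decide_true, decide_false, cond_false, h₁₂, h₁₃, h₁₄, h₂₃, h₂₄, h₃₄, h₅,
      h₆]

theorem isModel_threeGenerators_classThree (h2 : (2 : k) ≠ 0) (hL : finrank k L = 6)
    (hr₁ : finrank k (lc k L 1) = 3) (hr₂ : finrank k (lc k L 2) = 2) (hr₃ : lc k L 3 = ⊥) :
    IsModel k L := by
  obtain ⟨w₁, w₂, w₃, hW⟩ := exists_spansLayer_triple (k := k) (L := L) (by lia)
  obtain ⟨x₁, x₂, x₄, hX, m₁₄, m₂₄⟩ :=
    hW.exists_triple_lie_lie_mem (lc_antitone one_le_two) (by lia)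
  have lie_eq_zero (x : L) {y : L} (hy : y ∈ lc k L 2) : ⁅x, y⁆ = 0 := by
    simpa only [hr₃, mem_bot] using lie_mem_lc_succ x hy
  have h₃₄ : ⁅⁅x₁, x₂⁆, x₄⁆ = 0 := by
    rw [lie_lie, lie_eq_zero x₁ m₂₄, lie_eq_zero x₂ m₁₄, sub_zero]
  have hX₁ := hX.lie_of_lie_lie_mem m₁₄ m₂₄
  have m₃ := lie_mem_lc_one (k := k) x₁ x₂
  generalize h₁₂ : ⁅x₁, x₂⁆ = x₃ at *
  have hX₂ : lc k L 2 ≤ span k {⁅x₁, x₃⁆, ⁅x₂, x₃⁆} ⊔ lc k L 3 :=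
    hX.triple_lie_of_lie_mem hX₁ (by rw [← lie_skew, h₃₄, neg_zero]; exact zero_mem _)
  rw [hr₃, sup_bot_eq] at hX₂
  obtain ⟨a, b, h₁₄⟩ := mem_span_pair.1 (hX₂ m₁₄)
  obtain ⟨c, d, h₂₄⟩ := mem_span_pair.1 (hX₂ m₂₄)
  have hY := hX.sub_third (smul_mem _ ((a + d) / 2) m₃)
  have h₁₄' : ⁅x₁, x₄ - ((a + d) / 2) • x₃⁆ = ((a - d) / 2) • ⁅x₁, x₃⁆ + b • ⁅x₂, x₃⁆ := by
    rw [lie_sub, lie_smul, ← h₁₄]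
    match_scalars <;> grind
  have h₂₄' : ⁅x₂, x₄ - ((a + d) / 2) • x₃⁆ = c • ⁅x₁, x₃⁆ - ((a - d) / 2) • ⁅x₂, x₃⁆ := by
    rw [lie_sub, lie_smul, ← h₂₄]
    match_scalars <;> grind
  have h₃₄' : ⁅x₃, x₄ - ((a + d) / 2) • x₃⁆ = 0 := by
    rw [lie_sub, lie_smul, h₃₄, lie_self, smul_zero, sub_zero]
  have h₅ (x : L) := lie_eq_zero x (lie_mem_lc_succ x₁ m₃)
  have h₆ (x : L) := lie_eq_zero x (lie_mem_lc_succ x₂ m₃)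
  by_cases hM : c ≠ 0 ∨ (a - d) / 2 ≠ 0 ∨ -b ≠ 0
  · exact isModel_threeGenerators_classThree_of_traceless h2 hL hY h₁₂ rfl rfl h₁₄' h₂₄' h₃₄' h₅ h₆
      hM
  · push Not at hM
    obtain ⟨hc, had, hb⟩ := hM
    rw [had, neg_eq_zero.1 hb, zero_smul, zero_smul, add_zero] at h₁₄'
    rw [had, hc, zero_smul, zero_smul, sub_zero] at h₂₄'
    exact isModel_threeGenerators_classThree_of_lie_eq_zero hL hY h₁₂ rfl rfl h₁₄' h₂₄' h₃₄' h₅ h₆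

end ThreeGeneratorsClassThree

section ThreeGeneratorsClassFour

open Submodule

variable {k : Type*} [Field k] {L : Type*} [LieRing L] [LieAlgebra k L] [LieRing.IsNilpotent L]
  [Module.Finite k L] {x₁ x₂ x₃ x₄ x₅ z : L} {b c e : k}

theorem isModel_threeGenerators_classFour_of_eq_zero (hL : finrank k L = 6)
    (hX : SpansLayer k 0 {x₁, x₂, x₄}) (h₁₂ : ⁅x₁, x₂⁆ = x₃) (h₁₃ : ⁅x₁, x₃⁆ = x₅)
    (h₁₄ : ⁅x₁, x₄⁆ = 0) (h₁₅ : ⁅x₁, x₅⁆ = z) (h₂₃ : ⁅x₂, x₃⁆ = c • z)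
    (h₂₄ : ⁅x₂, x₄⁆ = e • z) (h₂₅ : ⁅x₂, x₅⁆ = 0) (h₃₄ : ⁅x₃, x₄⁆ = 0)
    (h₃₅ : ⁅x₃, x₅⁆ = 0) (h₄₅ : ⁅x₄, x₅⁆ = 0) (hz : ∀ x : L, ⁅x, z⁆ = 0) : IsModel k L := by
  have main (s t : k) (m : ModelType) (hs : s ≠ 0) (ht : t ≠ 0)
      (hm : c = 0 ∧ e = 0 ∧ m = .L5_7 ∨ t * c = 1 ∧ e = 0 ∧ m = .L5_6 ∨
        c = 0 ∧ s * e = 1 ∧ m = .L6_12 ∨ t * c = 1 ∧ s * e = 1 ∧ m = .L6_11) : IsModel k L := by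
    refine isModel_of_relations hL m 0 ![x₁, t • x₂, t • x₃, s • x₄, t • x₅, t • z]
      (hX.of_subset_span ?_) ?_
    · rintro x (rfl | rfl | rfl)
      · exact mem_span_range_of_eq ![1, 0, 0, 0, 0, 0] (by simp)
      · exact mem_span_range_of_eq ![0, t⁻¹, 0, 0, 0, 0] (by simp [smul_smul, ht])
      · exact mem_span_range_of_eq ![0, 0, 0, s⁻¹, 0, 0] (by simp [smul_smul, hs])
    · rcases hm with ⟨hc, he, rfl⟩ | ⟨hc, he, rfl⟩ | ⟨hc, he, rfl⟩ | ⟨hc, he, rfl⟩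
      all_goals
        simp only [forall_lt_fin_six, tableValue, lookup, Entry.eval, ModelType.table,
          List.find?_cons, List.find?_nil, Matrix.cons_val, Fin.reduceEq, Fin.isValue, and_self,
          and_true, and_false, decide_true, decide_false, cond_false, lie_smul, smul_lie, h₁₂, h₁₃,
          h₁₄, h₁₅, h₂₃, h₂₄, h₂₅, h₃₄, h₃₅, h₄₅, hz, smul_zero, true_and]
        and_intros <;> match_scalars <;> grind
  by_cases hc : c = 0 <;> by_cases he : e = 0
  · exact main 1 1 .L5_7 one_ne_zero one_ne_zero (.inl ⟨hc, he, rfl⟩)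
  · exact main e⁻¹ 1 .L6_12 (inv_ne_zero he) one_ne_zero
      (.inr (.inr (.inl ⟨hc, inv_mul_cancel₀ he, rfl⟩)))
  · exact main 1 c⁻¹ .L5_6 one_ne_zero (inv_ne_zero hc) (.inr (.inl ⟨inv_mul_cancel₀ hc, he, rfl⟩))
  · exact main e⁻¹ c⁻¹ .L6_11 (inv_ne_zero he) (inv_ne_zero hc)
      (.inr (.inr (.inr ⟨inv_mul_cancel₀ hc, inv_mul_cancel₀ he, rfl⟩)))

theorem isModel_threeGenerators_classFour_of_ne_zero (h2 : (2 : k) ≠ 0) (hL : finrank k L = 6)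
    (hX : SpansLayer k 0 {x₁, x₂, x₄}) (h₁₂ : ⁅x₁, x₂⁆ = x₃) (h₁₃ : ⁅x₁, x₃⁆ = x₅)
    (h₁₄ : ⁅x₁, x₄⁆ = 0) (h₁₅ : ⁅x₁, x₅⁆ = z) (h₂₃ : ⁅x₂, x₃⁆ = c • z)
    (h₂₄ : ⁅x₂, x₄⁆ = b • x₅ + e • z) (h₂₅ : ⁅x₂, x₅⁆ = 0) (h₃₄ : ⁅x₃, x₄⁆ = b • z)
    (h₃₅ : ⁅x₃, x₅⁆ = 0) (h₄₅ : ⁅x₄, x₅⁆ = 0) (hz : ∀ x : L, ⁅x, z⁆ = 0) (hb : b ≠ 0) :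
    IsModel k L := by
  have hz' (x : L) : ⁅z, x⁆ = 0 := by rw [← lie_skew, hz, neg_zero]
  have h₄₂ : ⁅x₄, x₂⁆ = -(b • x₅ + e • z) := by rw [← lie_skew, h₂₄]
  have h₄₃ : ⁅x₄, x₃⁆ = -(b • z) := by rw [← lie_skew, h₃₄]
  have h₅₄ : ⁅x₅, x₄⁆ = 0 := by rw [← lie_skew, h₄₅, neg_zero]
  obtain ⟨s, hs⟩ : ∃ s, s * (2 * b ^ 2) = -e := ⟨_, div_mul_cancel₀ _ (by grind)⟩
  refine isModel_of_relations hL .L6_13 0 ![x₁ + s • x₄, x₂ + (c / b) • x₄,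
    x₃ - s • (b • x₅ + e • z), b⁻¹ • x₄, x₅ - (2 * s * b) • z, z] (hX.of_subset_span ?_) ?_
  · rintro x (rfl | rfl | rfl)
    · refine mem_span_range_of_eq ![1, 0, 0, -s * b, 0, 0] ?_
      simp only [Matrix.cons_val]
      match_scalars <;> grind
    · refine mem_span_range_of_eq ![0, 1, 0, -c, 0, 0] ?_
      simp only [Matrix.cons_val]
      match_scalars <;> grind
    · exact mem_span_range_of_eq ![0, 0, 0, b, 0, 0] (by simp [smul_smul, hb])
  · simp only [forall_lt_fin_six, tableValue, lookup, Entry.eval, ModelType.table,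
      List.find?_cons, List.find?_nil, Matrix.cons_val, Fin.reduceEq, Fin.isValue, and_self,
      and_true, and_false, decide_true, decide_false, cond_false, lie_add, add_lie, lie_sub,
      sub_lie, lie_smul, smul_lie, h₁₂, h₁₃, h₁₄, h₁₅, h₂₃, h₂₄, h₂₅, h₃₄, h₃₅, h₄₂, h₄₃, h₄₅, h₅₄,
      hz, hz', lie_self, smul_zero, add_zero, true_and]
    and_intros <;> match_scalars <;> grind

theorem isModel_threeGenerators_classFour_of_normalized (h2 : (2 : k) ≠ 0) (hL : finrank k L = 6)
    (hX : SpansLayer k 0 {x₁, x₂, x₄}) (h₁₂ : ⁅x₁, x₂⁆ = x₃) (h₁₃ : ⁅x₁, x₃⁆ = x₅)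
    (h₁₄ : ⁅x₁, x₄⁆ = 0) (h₁₅ : ⁅x₁, x₅⁆ = z) (h₂₃ : ⁅x₂, x₃⁆ = c • z)
    (h₂₄ : ⁅x₂, x₄⁆ = b • x₅ + e • z) (h₂₅ : ⁅x₂, x₅⁆ = 0) (h₃₄ : ⁅x₃, x₄⁆ = b • z)
    (h₃₅ : ⁅x₃, x₅⁆ = 0) (h₄₅ : ⁅x₄, x₅⁆ = 0) (hz : ∀ x : L, ⁅x, z⁆ = 0) : IsModel k L := by
  by_cases hb : b = 0
  · rw [hb, zero_smul, zero_add] at h₂₄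
    rw [hb, zero_smul] at h₃₄
    exact isModel_threeGenerators_classFour_of_eq_zero hL hX h₁₂ h₁₃ h₁₄ h₁₅ h₂₃ h₂₄ h₂₅ h₃₄ h₃₅ h₄₅
      hz
  · exact isModel_threeGenerators_classFour_of_ne_zero h2 hL hX h₁₂ h₁₃ h₁₄ h₁₅ h₂₃ h₂₄ h₂₅ h₃₄ h₃₅
      h₄₅ hz hb

theorem isModel_threeGenerators_classFour_of_adapted (h2 : (2 : k) ≠ 0) (hL : finrank k L = 6)
    (hr₄ : lc k L 4 = ⊥) (hX : SpansLayer k 0 {x₁, x₂, x₄})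
    (m₁₄ : ⁅x₁, x₄⁆ ∈ lc k L 2) (m₂₄ : ⁅x₂, x₄⁆ ∈ lc k L 2)
    (m₂₃ : ⁅x₂, ⁅x₁, x₂⁆⁆ ∈ lc k L 3) : IsModel k L := by
  have eq_zero {x : L} (hx : x ∈ lc k L 4) : x = 0 := by rwa [hr₄, mem_bot] at hx
  have m₃ := lie_mem_lc_one (k := k) x₁ x₂
  have m₅ := lie_mem_lc_succ x₁ m₃
  have h₂₅ : ⁅x₂, ⁅x₁, ⁅x₁, x₂⁆⁆⁆ = 0 := by
    rw [lie_lie_lie_swap]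
    exact eq_zero (lie_mem_lc_succ x₁ m₂₃)
  have m₄₃ := lie_lie_mem_lc_three m₁₄ m₂₄
  have h₄₅ := eq_zero (lie_lie_lie_mem_lc_four m₁₄ m₂₄)
  have h₃₅ := eq_zero (lie_mem_lc (i := 1) (j := 2) le_rfl m₃ m₅)
  have hX₁ := hX.lie_of_lie_lie_mem m₁₄ m₂₄
  have hX₂ := (hX.triple_lie_of_lie_mem hX₁ m₄₃).singleton_of_pair m₂₃
  have hX₃ := (hX.triple_lie_of_lie_mem hX₂
    (by rw [h₄₅]; exact zero_mem _)).singleton_of_pair (by rw [h₂₅]; exact zero_mem _)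
  have hlie := lie_lie x₁ x₂ x₄
  have m₆ := lie_mem_lc_succ x₁ m₅
  generalize h₁₂ : ⁅x₁, x₂⁆ = x₃ at *
  generalize h₁₃ : ⁅x₁, x₃⁆ = x₅ at *
  generalize h₁₅ : ⁅x₁, x₅⁆ = z at *
  have hz (x : L) : ⁅x, z⁆ = 0 := eq_zero (lie_mem_lc_succ x m₆)
  have exists_coeff {w : L} (hw : w ∈ lc k L 3) : ∃ c : k, w = c • z := by
    obtain ⟨c, r, hr, rfl⟩ := mem_span_singleton_sup.1 (hX₃ hw)
    exact ⟨c, by rw [eq_zero hr, add_zero]⟩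
  have exists_coeffs {w : L} (hw : w ∈ lc k L 2) : ∃ a b : k, w = a • x₅ + b • z := by
    obtain ⟨a, r, hr, rfl⟩ := mem_span_singleton_sup.1 (hX₂ hw)
    obtain ⟨b, rfl⟩ := exists_coeff hr
    exact ⟨a, b, rfl⟩
  obtain ⟨a, a', h₁₄⟩ := exists_coeffs m₁₄
  obtain ⟨b, e, h₂₄⟩ := exists_coeffs m₂₄
  obtain ⟨c, h₂₃⟩ := exists_coeff m₂₃
  simp only [h₁₄, h₂₄, lie_add, lie_smul, h₁₅, h₂₅, hz, smul_zero, add_zero, sub_zero] at hlie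
  refine isModel_threeGenerators_classFour_of_normalized h2 hL
    (hX.sub_third (v := a • x₃ + a' • x₅)
      (add_mem (smul_mem _ _ m₃) (smul_mem _ _ (lc_antitone one_le_two m₅))))
    h₁₂ h₁₃ ?_ h₁₅ h₂₃ (b := b) (e := e - a * c) ?_ h₂₅ ?_ h₃₅ ?_ hz
  all_goals
    simp only [lie_add, lie_sub, sub_lie, add_lie, lie_smul, smul_lie, h₁₃, h₁₅, h₁₄, h₂₄, h₂₃, h₂₅,
      hlie, h₃₅, h₄₅, lie_self, smul_zero, add_zero, sub_zero]
    try module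

theorem isModel_threeGenerators_classFour (h2 : (2 : k) ≠ 0) (hL : finrank k L = 6)
    (hr₁ : finrank k (lc k L 1) = 3) (hr₂ : finrank k (lc k L 2) = 2)
    (hr₃ : finrank k (lc k L 3) = 1) (hr₄ : lc k L 4 = ⊥) : IsModel k L := by
  obtain ⟨w₁, w₂, w₃, hW⟩ := exists_spansLayer_triple (k := k) (L := L) (by lia)
  obtain ⟨v₁, v₂, x₄, hV, n₁₄, n₂₄⟩ :=
    hW.exists_triple_lie_lie_mem (lc_antitone one_le_two) (by lia)
  obtain ⟨x₁, x₂, hX, m₂₃, m₁₄, m₂₄⟩ := hV.exists_adapted_triple n₁₄ n₂₄ (by lia)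
  exact isModel_threeGenerators_classFour_of_adapted h2 hL hr₄ hX m₁₄ m₂₄ m₂₃

end ThreeGeneratorsClassFour

section Hyperplane

open Submodule

variable {k : Type*} [Field k] {L : Type*} [LieRing L] [LieAlgebra k L]
  {K : Submodule k L} {x₁ : L}

theorem SpansLayer.quadruple_of_insert {x₂ x₄ x₅ u w : L}
    (hX : SpansLayer k 0 (insert x₁ (K : Set L)))
    (hK : K ≤ span k {u, w} ⊔ (span k {x₂} ⊔ lc k L 1))
    (hu : u - x₄ ∈ span k {x₂} ⊔ lc k L 1) (hw : w - x₅ ∈ span k {x₂} ⊔ lc k L 1) :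
    SpansLayer k 0 {x₁, x₂, x₄, x₅} := by
  have hS {x : L} (hx : x ∈ ({x₁, x₂, x₄, x₅} : Set L)) :
      x ∈ span k {x₁, x₂, x₄, x₅} ⊔ lc k L 1 := mem_sup_left (subset_span hx)
  have hBS : span k {x₂} ⊔ lc k L 1 ≤ span k {x₁, x₂, x₄, x₅} ⊔ lc k L 1 :=
    sup_le_sup_right (span_mono (by simp)) _
  refine hX.of_subset ?_
  rintro x (rfl | hx)
  · exact hS (by simp)
  · refine sup_le (span_le.2 ?_) hBS (hK hx)
    rintro y (rfl | rfl)
    · exact (sub_mem_iff_left _ (hS (by simp))).1 (hBS hu)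
    · exact (sub_mem_iff_left _ (hS (by simp))).1 (hBS hw)

theorem exists_mem_lie_eq_zero_of_spansLayer {x₂ : L} (hr₃ : lc k L 3 = ⊥) (hx₂ : x₂ ∈ K)
    (hle : lc k L 1 ≤ K) (hV : SpansLayer k 1 {⁅x₁, x₂⁆})
    (hW : SpansLayer k 2 {⁅x₁, ⁅x₁, x₂⁆⁆}) {u : L} (hu : u ∈ K) :
    ∃ v ∈ K, ⁅x₁, v⁆ = 0 ∧ u - v ∈ span k {x₂} ⊔ lc k L 1 := by
  obtain ⟨p, c, hc, h⟩ := mem_span_singleton_sup.1 (hV (lie_mem_lc_one x₁ u))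
  obtain ⟨q, e, he, rfl⟩ := mem_span_singleton_sup.1 (hW hc)
  obtain rfl : e = 0 := by simpa only [hr₃, mem_bot] using he
  have hmem : q • ⁅x₁, x₂⁆ ∈ lc k L 1 := smul_mem _ q (lie_mem_lc_one _ _)
  refine ⟨u - (p • x₂ + q • ⁅x₁, x₂⁆), sub_mem hu (add_mem (smul_mem _ p hx₂) (hle hmem)), ?_, ?_⟩
  · rw [lie_sub, lie_add, lie_smul, lie_smul, h, add_zero, sub_self]
  · rw [sub_sub_cancel]
    exact mem_span_singleton_sup.2 ⟨p, _, hmem, rfl⟩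

variable [Module.Finite k L]

theorem exists_hyperplane_lie_eq_zero (h₁ : finrank k (lc k L 1) ≤ finrank k (lc k L 2) + 1)
    (hr₂ : finrank k (lc k L 2) = 1) (hr₃ : lc k L 3 = ⊥) :
    ∃ (x₁ : L) (K : Submodule k L), x₁ ∉ K ∧ lc k L 1 ≤ K ∧ SpansLayer k 0 (insert x₁ K) ∧
      ∀ x ∈ K, ∀ y ∈ lc k L 1, ⁅x, y⁆ = 0 := by
  obtain ⟨v, hv, hspan⟩ := exists_singleton_span_sup (lc_antitone one_le_two) h₁
  have lie_eq_zero (x : L) {y : L} (hy : y ∈ lc k L 2) : ⁅x, y⁆ = 0 := by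
    simpa only [hr₃, mem_bot] using lie_mem_lc_succ x hy
  let K : Submodule k L := LinearMap.ker (LieAlgebra.ad k L v)
  have mem_K {x : L} : x ∈ K ↔ ⁅v, x⁆ = 0 := Iff.rfl
  have hK (x : L) (hx : x ∈ K) (y : L) (hy : y ∈ lc k L 1) : ⁅x, y⁆ = 0 := by
    obtain ⟨a, b, hb, rfl⟩ := mem_span_singleton_sup.1 (hspan hy)
    rw [lie_add, lie_smul, lie_eq_zero x hb, ← lie_skew, mem_K.1 hx, neg_zero, smul_zero, add_zero]
  have hle : lc k L 1 ≤ K := fun x hx => mem_K.2 (by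
    simpa only [hr₃, mem_bot] using lie_mem_lc (i := 1) (j := 1) le_rfl hv hx)
  obtain ⟨x₁, hx₁⟩ : ∃ x₁, x₁ ∉ K := by
    by_contra! hall
    have hbot : lc k L 2 ≤ ⊥ := lc_succ_le_iff.2 fun x y hy => hK x (hall x) y hy
    rw [le_bot_iff.1 hbot, finrank_bot] at hr₂
    exact zero_ne_one hr₂
  have hrange : LinearMap.range (LieAlgebra.ad k L v) ≤ lc k L 2 := by
    rintro _ ⟨y, rfl⟩
    rw [LieAlgebra.ad_apply, ← lie_skew]
    exact neg_mem (lie_mem_lc_succ y hv)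
  have hdim := finrank_mono hrange
  have hsum := (LieAlgebra.ad k L v).finrank_range_add_finrank_ker
  have htop : ⊤ ≤ span k {x₁} ⊔ K := by
    refine le_span_singleton_sup le_top ?_ mem_top hx₁
    rw [finrank_top, ← hsum]
    lia
  refine ⟨x₁, K, hx₁, hle, ?_, hK⟩
  rw [SpansLayer, span_insert, span_eq]
  exact htop.trans le_sup_left

theorem mem_lc_two_of_lie_eq_zero (h₁ : finrank k (lc k L 1) ≤ finrank k (lc k L 2) + 1)
    (hr₂ : finrank k (lc k L 2) = 1) (hr₃ : lc k L 3 = ⊥) (hX : SpansLayer k 0 (insert x₁ K))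
    (hK : ∀ x ∈ K, ∀ y ∈ lc k L 1, ⁅x, y⁆ = 0) {w : L} (hw : w ∈ lc k L 1) (h : ⁅x₁, w⁆ = 0) :
    w ∈ lc k L 2 := by
  by_contra hw₂
  have hV : SpansLayer k 1 {w} := le_span_singleton_sup (lc_antitone one_le_two) h₁ hw hw₂
  have hbot : lc k L 2 ≤ ⊥ := by
    refine hX.lc_succ_le hV ?_ hr₃.le
    rintro x (rfl | hx) _ rfl
    · exact (mem_bot k).2 h
    · exact (mem_bot k).2 (hK x hx _ hw)
  rw [le_bot_iff.1 hbot, finrank_bot] at hr₂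
  exact zero_ne_one hr₂

theorem exists_lie_notMem_lc_two (hr₁ : finrank k (lc k L 1) = 2) (hr₂ : finrank k (lc k L 2) = 1)
    (hX : SpansLayer k 0 (insert x₁ K)) (hKK : ∀ x ∈ K, ∀ y ∈ K, ⁅x, y⁆ ∈ lc k L 2) :
    ∃ x₂ ∈ K, ⁅x₁, x₂⁆ ∉ lc k L 2 := by
  by_contra! h
  have hle : lc k L 1 ≤ lc k L 2 := by
    refine hX.lc_succ_le hX ?_ le_rfl
    rintro x (rfl | hx) y (rfl | hy)
    · rw [lie_self]
      exact zero_mem _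
    · exact h y hy
    · rw [← lie_skew]
      exact neg_mem (h x hx)
    · exact hKK x hx y hy
  have hdim := finrank_mono hle
  lia

theorem exists_adapted_hyperplane (hr₁ : finrank k (lc k L 1) = 2)
    (hr₂ : finrank k (lc k L 2) = 1) (hr₃ : lc k L 3 = ⊥) :
    ∃ (x₁ x₂ : L) (K : Submodule k L), x₁ ∉ K ∧ x₂ ∈ K ∧ lc k L 1 ≤ K ∧
      SpansLayer k 0 (insert x₁ K) ∧ SpansLayer k 1 {⁅x₁, x₂⁆} ∧
      SpansLayer k 2 {⁅x₁, ⁅x₁, x₂⁆⁆} ∧ x₂ ∉ lc k L 1 ∧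
      (∀ x ∈ K, ∀ y ∈ lc k L 1, ⁅x, y⁆ = 0) ∧ ∀ x ∈ K, ∀ y ∈ K, ⁅x, y⁆ ∈ lc k L 2 := by
  have h₁ : finrank k (lc k L 1) ≤ finrank k (lc k L 2) + 1 := by lia
  obtain ⟨x₁, K, hx₁, hle, hX, hK⟩ := exists_hyperplane_lie_eq_zero h₁ hr₂ hr₃
  have hKK (x : L) (hx : x ∈ K) (y : L) (hy : y ∈ K) : ⁅x, y⁆ ∈ lc k L 2 := by
    refine mem_lc_two_of_lie_eq_zero h₁ hr₂ hr₃ hX hK (lie_mem_lc_one x y) ?_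
    rw [leibniz_lie, hK x hx _ (lie_mem_lc_one _ _), ← lie_skew, hK y hy _ (lie_mem_lc_one _ _),
      neg_zero, add_zero]
  obtain ⟨x₂, hx₂, hx₁₂⟩ := exists_lie_notMem_lc_two hr₁ hr₂ hX hKK
  have hV : SpansLayer k 1 {⁅x₁, x₂⁆} :=
    le_span_singleton_sup (lc_antitone one_le_two) h₁ (lie_mem_lc_one _ _) hx₁₂
  have hW : SpansLayer k 2 {⁅x₁, ⁅x₁, x₂⁆⁆} := by
    refine hX.lc_succ_le hV ?_ le_sup_right
    rintro x (rfl | hx) _ rfl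
    · exact mem_sup_left (mem_span_singleton_self _)
    · rw [hK x hx _ (lie_mem_lc_one _ _)]
      exact zero_mem _
  exact ⟨x₁, x₂, K, hx₁, hx₂, hle, hX, hV, hW, fun h => hx₁₂ (lie_mem_lc_succ x₁ h), hK, hKK⟩

end Hyperplane

section FourGenerators

open Submodule

variable {k : Type*} [Field k] {L : Type*} [LieRing L] [LieAlgebra k L] [LieRing.IsNilpotent L]
  [Module.Finite k L] {x₁ x₂ x₃ x₄ x₅ z : L} {b c d : k}

theorem isModel_fourGenerators_of_left_ne_zero (hL : finrank k L = 6)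
    (hX : SpansLayer k 0 {x₁, x₂, x₄, x₅}) (h₁₂ : ⁅x₁, x₂⁆ = x₃) (h₁₃ : ⁅x₁, x₃⁆ = z)
    (h₁₄ : ⁅x₁, x₄⁆ = 0) (h₁₅ : ⁅x₁, x₅⁆ = 0) (h₂₃ : ⁅x₂, x₃⁆ = 0) (h₂₄ : ⁅x₂, x₄⁆ = b • z)
    (h₂₅ : ⁅x₂, x₅⁆ = c • z) (h₃₄ : ⁅x₃, x₄⁆ = 0) (h₃₅ : ⁅x₃, x₅⁆ = 0) (h₄₅ : ⁅x₄, x₅⁆ = 0)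
    (hz : ∀ x : L, ⁅x, z⁆ = 0) (hb : b ≠ 0) : IsModel k L := by
  have hz' (x : L) : ⁅z, x⁆ = 0 := by rw [← lie_skew, hz, neg_zero]
  refine isModel_of_relations hL .L5_5 0 ![x₁, x₂, x₃, b⁻¹ • x₄, z, x₅ - (c / b) • x₄]
    (hX.of_subset_span ?_) ?_
  · rintro x (rfl | rfl | rfl | rfl)
    · exact mem_span_range_of_eq ![1, 0, 0, 0, 0, 0] (by simp)
    · exact mem_span_range_of_eq ![0, 1, 0, 0, 0, 0] (by simp)
    · exact mem_span_range_of_eq ![0, 0, 0, b, 0, 0] (by simp [smul_smul, hb])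
    · refine mem_span_range_of_eq ![0, 0, 0, c, 0, 1] ?_
      simp only [Matrix.cons_val]
      match_scalars <;> grind
  · simp only [forall_lt_fin_six, tableValue, lookup, Entry.eval, ModelType.table,
      List.find?_cons, List.find?_nil, Matrix.cons_val, Fin.reduceEq, Fin.isValue, and_self,
      and_true, and_false, decide_true, decide_false, cond_false, lie_sub, lie_smul, smul_lie, h₁₂,
      h₁₃, h₁₄, h₁₅, h₂₃, h₂₄, h₂₅, h₃₄, h₃₅, h₄₅, hz, hz', lie_self, smul_zero, sub_zero, true_and]
    and_intros <;> match_scalars <;> grind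

theorem isModel_fourGenerators_of_lie_eq_zero (hL : finrank k L = 6)
    (hX : SpansLayer k 0 {x₁, x₂, x₄, x₅}) (h₁₂ : ⁅x₁, x₂⁆ = x₃) (h₁₃ : ⁅x₁, x₃⁆ = z)
    (h₁₄ : ⁅x₁, x₄⁆ = 0) (h₁₅ : ⁅x₁, x₅⁆ = 0) (h₂₃ : ⁅x₂, x₃⁆ = 0) (h₂₄ : ⁅x₂, x₄⁆ = b • z)
    (h₂₅ : ⁅x₂, x₅⁆ = c • z) (h₃₄ : ⁅x₃, x₄⁆ = 0) (h₃₅ : ⁅x₃, x₅⁆ = 0) (h₄₅ : ⁅x₄, x₅⁆ = 0)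
    (hz : ∀ x : L, ⁅x, z⁆ = 0) : IsModel k L := by
  by_cases hb : b = 0
  · by_cases hc : c = 0
    · have hz' (x : L) : ⁅z, x⁆ = 0 := by rw [← lie_skew, hz, neg_zero]
      refine isModel_of_relations hL .L5_3 0 ![x₁, x₂, x₃, z, x₄, x₅] (hX.of_subset_span ?_) ?_
      · rintro x (rfl | rfl | rfl | rfl)
        · exact mem_span_range_of_eq ![1, 0, 0, 0, 0, 0] (by simp)
        · exact mem_span_range_of_eq ![0, 1, 0, 0, 0, 0] (by simp)
        · exact mem_span_range_of_eq ![0, 0, 0, 0, 1, 0] (by simp)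
        · exact mem_span_range_of_eq ![0, 0, 0, 0, 0, 1] (by simp)
      · simp only [forall_lt_fin_six, tableValue, lookup, Entry.eval, ModelType.table,
          List.find?_cons, List.find?_nil, Matrix.cons_val, Fin.reduceEq, Fin.isValue, and_self,
          and_true, and_false, decide_true, decide_false, cond_false, h₁₂, h₁₃, h₁₄, h₁₅, h₂₃, h₂₄,
          h₂₅, h₃₄, h₃₅, h₄₅, hz, hz', hb, hc, zero_smul]
    · have h₅₄ : ⁅x₅, x₄⁆ = 0 := by rw [← lie_skew, h₄₅, neg_zero]
      exact isModel_fourGenerators_of_left_ne_zero hL (Set.pair_comm x₄ x₅ ▸ hX) h₁₂ h₁₃ h₁₅ h₁₄ h₂₃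
        h₂₅ h₂₄ h₃₅ h₃₄ h₅₄ hz hc
  · exact isModel_fourGenerators_of_left_ne_zero hL hX h₁₂ h₁₃ h₁₄ h₁₅ h₂₃ h₂₄ h₂₅ h₃₄ h₃₅ h₄₅ hz hb

theorem isModel_fourGenerators_of_lie_ne_zero (hL : finrank k L = 6)
    (hX : SpansLayer k 0 {x₁, x₂, x₄, x₅}) (h₁₂ : ⁅x₁, x₂⁆ = x₃) (h₁₃ : ⁅x₁, x₃⁆ = z)
    (h₁₄ : ⁅x₁, x₄⁆ = 0) (h₁₅ : ⁅x₁, x₅⁆ = 0) (h₂₃ : ⁅x₂, x₃⁆ = 0) (h₂₄ : ⁅x₂, x₄⁆ = b • z)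
    (h₂₅ : ⁅x₂, x₅⁆ = c • z) (h₃₄ : ⁅x₃, x₄⁆ = 0) (h₃₅ : ⁅x₃, x₅⁆ = 0) (h₄₅ : ⁅x₄, x₅⁆ = d • z)
    (hz : ∀ x : L, ⁅x, z⁆ = 0) (hd : d ≠ 0) : IsModel k L := by
  have h₄₃ : ⁅x₄, x₃⁆ = 0 := by rw [← lie_skew, h₃₄, neg_zero]
  have h₅₃ : ⁅x₅, x₃⁆ = 0 := by rw [← lie_skew, h₃₅, neg_zero]
  have h₅₄ : ⁅x₅, x₄⁆ = -(d • z) := by rw [← lie_skew, h₄₅]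
  refine isModel_of_relations hL .L6_10 0
    ![x₁, x₂ - (c / d) • x₄ + (b / d) • x₅, x₃, x₄, d⁻¹ • x₅, z] (hX.of_subset_span ?_) ?_
  · rintro x (rfl | rfl | rfl | rfl)
    · exact mem_span_range_of_eq ![1, 0, 0, 0, 0, 0] (by simp)
    · refine mem_span_range_of_eq ![0, 1, 0, c / d, -b, 0] ?_
      simp only [Matrix.cons_val]
      match_scalars <;> grind
    · exact mem_span_range_of_eq ![0, 0, 0, 1, 0, 0] (by simp)
    · exact mem_span_range_of_eq ![0, 0, 0, 0, d, 0] (by simp [smul_smul, hd])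
  · simp only [forall_lt_fin_six, tableValue, lookup, Entry.eval, ModelType.table,
      List.find?_cons, List.find?_nil, Matrix.cons_val, Fin.reduceEq, Fin.isValue, and_self,
      and_true, and_false, decide_true, decide_false, cond_false, lie_add, add_lie, lie_sub,
      sub_lie, lie_smul, smul_lie, h₁₂, h₁₃, h₁₄, h₁₅, h₂₃, h₂₄, h₂₅, h₃₄, h₃₅, h₄₃, h₄₅, h₅₃, h₅₄,
      hz, lie_self, smul_zero, add_zero, sub_zero, true_and]
    and_intros <;> match_scalars <;> grind

theorem isModel_fourGenerators (hL : finrank k L = 6) (hr₁ : finrank k (lc k L 1) = 2)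
    (hr₂ : finrank k (lc k L 2) = 1) (hr₃ : lc k L 3 = ⊥) : IsModel k L := by
  obtain ⟨x₁, x₂, K, hx₁, hx₂, hle, hX, hV, hW, hx₂', hK, hKK⟩ :=
    exists_adapted_hyperplane hr₁ hr₂ hr₃
  have hB : span k {x₂} ⊔ lc k L 1 ≤ K := sup_le ((span_singleton_le_iff_mem _ _).2 hx₂) hle
  have hBdim := finrank_lt_finrank_of_lt (lt_span_singleton_sup hx₂')
  have hKdim : finrank k K < finrank k L :=
    finrank_lt fun h : K = ⊤ => hx₁ (h ▸ mem_top)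
  obtain ⟨u, hu, w, hw, hspan⟩ := exists_pair_span_sup hB (by lia)
  obtain ⟨x₄, hx₄, h₁₄, hu₄⟩ := exists_mem_lie_eq_zero_of_spansLayer hr₃ hx₂ hle hV hW hu
  obtain ⟨x₅, hx₅, h₁₅, hw₅⟩ := exists_mem_lie_eq_zero_of_spansLayer hr₃ hx₂ hle hV hW hw
  have hX' := hX.quadruple_of_insert hspan hu₄ hw₅
  have lie_eq (x : L) (hx : x ∈ K) (y : L) (hy : y ∈ K) : ∃ c : k, ⁅x, y⁆ = c • ⁅x₁, ⁅x₁, x₂⁆⁆ := by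
    have hxy := hW (hKK x hx y hy)
    rw [hr₃, sup_bot_eq] at hxy
    exact (mem_span_singleton.1 hxy).imp fun c hc => hc.symm
  obtain ⟨b, h₂₄⟩ := lie_eq x₂ hx₂ x₄ hx₄
  obtain ⟨c, h₂₅⟩ := lie_eq x₂ hx₂ x₅ hx₅
  obtain ⟨d, h₄₅⟩ := lie_eq x₄ hx₄ x₅ hx₅
  have h₃ (x : L) (hx : x ∈ K) : ⁅⁅x₁, x₂⁆, x⁆ = 0 := by
    rw [← lie_skew, hK x hx _ (lie_mem_lc_one _ _), neg_zero]
  have hz (x : L) : ⁅x, ⁅x₁, ⁅x₁, x₂⁆⁆⁆ = 0 := by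
    have hmem := lie_mem_lc_succ x (lie_mem_lc_succ x₁ (lie_mem_lc_one (k := k) x₁ x₂))
    simpa only [hr₃, mem_bot] using hmem
  have h₂₃ := hK x₂ hx₂ _ (lie_mem_lc_one x₁ x₂)
  by_cases hd : d = 0
  · rw [hd, zero_smul] at h₄₅
    exact isModel_fourGenerators_of_lie_eq_zero hL hX' rfl rfl h₁₄ h₁₅ h₂₃ h₂₄ h₂₅ (h₃ x₄ hx₄)
      (h₃ x₅ hx₅) h₄₅ hz
  · exact isModel_fourGenerators_of_lie_ne_zero hL hX' rfl rfl h₁₄ h₁₅ h₂₃ h₂₄ h₂₅ (h₃ x₄ hx₄)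
      (h₃ x₅ hx₅) h₄₅ hz hd

end FourGenerators

section TwoStep

open Submodule

variable {k : Type*} [Field k] {L : Type*} [LieRing L] [LieAlgebra k L]

theorem lie_mem_span_singleton_of_forall
    (h : ∀ x y w : L, ⁅x, y⁆ ≠ 0 → ⁅x, w⁆ ∈ span k {⁅x, y⁆}) {x y : L} (hxy : ⁅x, y⁆ ≠ 0)
    (u v : L) : ⁅u, v⁆ ∈ span k {⁅x, y⁆} := by
  have lie_mem {a b : L} (hab : ⁅a, b⁆ ∈ span k {⁅x, y⁆}) (hne : ⁅a, b⁆ ≠ 0) (c : L) :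
      ⁅a, c⁆ ∈ span k {⁅x, y⁆} := (span_singleton_le_iff_mem _ _).2 hab (h a b c hne)
  have lie_symm_mem {a b : L} (hab : ⁅a, b⁆ ∈ span k {⁅x, y⁆}) : ⁅b, a⁆ ∈ span k {⁅x, y⁆} :=
    lie_skew b a ▸ neg_mem hab
  have lie_symm_ne {a b : L} (hab : ⁅a, b⁆ ≠ 0) : ⁅b, a⁆ ≠ 0 := lie_skew b a ▸ neg_ne_zero.2 hab
  have hx (w : L) : ⁅x, w⁆ ∈ span k {⁅x, y⁆} := h x y w hxy
  have hy (w : L) : ⁅w, y⁆ ∈ span k {⁅x, y⁆} :=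
    lie_symm_mem (lie_mem (lie_symm_mem (hx y)) (lie_symm_ne hxy) w)
  by_cases huy : ⁅u, y⁆ = 0
  · by_cases hxv : ⁅x, v⁆ = 0
    · have hsum : ⁅x + u, y⁆ ≠ 0 := by rwa [add_lie, huy, add_zero]
      simpa only [add_lie, hxv, zero_add] using lie_mem (hy (x + u)) hsum v
    · exact lie_symm_mem (lie_mem (lie_symm_mem (hx v)) (lie_symm_ne hxv) u)
  · exact lie_mem (hy u) huy v

variable [Module.Finite k L]

theorem exists_lc_one_le_span_pair (hr₁ : finrank k (lc k L 1) = 2) :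
    ∃ x y₁ y₂ : L, lc k L 1 ≤ span k {⁅x, y₁⁆, ⁅x, y₂⁆} := by
  suffices h : ∃ x y₁ y₂ : L, ⁅x, y₁⁆ ≠ 0 ∧ ⁅x, y₂⁆ ∉ span k {⁅x, y₁⁆} by
    obtain ⟨x, y₁, y₂, h₁, h₂⟩ := h
    have hle : span k {⁅x, y₁⁆} ≤ lc k L 1 :=
      (span_singleton_le_iff_mem _ _).2 (lie_mem_lc_one x y₁)
    refine ⟨x, y₂, y₁, ?_⟩
    rw [span_insert]
    exact le_span_singleton_sup hle (by rw [finrank_span_singleton h₁, hr₁])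
      (lie_mem_lc_one x y₂) h₂
  by_contra! h
  suffices hle : ∃ z : L, lc k L 1 ≤ span k {z} by
    obtain ⟨z, hz⟩ := hle
    have hdim := (finrank_mono hz).trans (finrank_span_le_card ({z} : Set L))
    rw [Set.toFinset_singleton, Finset.card_singleton] at hdim
    lia
  by_cases hab : ∃ x y : L, ⁅x, y⁆ ≠ 0
  · obtain ⟨x, y, hxy⟩ := hab
    exact ⟨_, lc_succ_le_iff.2 fun u v _ => lie_mem_span_singleton_of_forall h hxy u v⟩
  · push Not at hab
    exact ⟨0, lc_succ_le_iff.2 fun u v _ => by rw [hab u v]; exact zero_mem _⟩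

theorem exists_generators_of_lc_one_le_span_pair (hL : finrank k L = 6)
    (hr₁ : finrank k (lc k L 1) = 2) (hr₂ : lc k L 2 = ⊥) :
    ∃ x₁ x₂ x₃ x₄ : L, SpansLayer k 0 {x₁, x₂, x₃, x₄} ∧
      lc k L 1 ≤ span k {⁅x₁, x₂⁆, ⁅x₁, x₃⁆} ∧ ⁅x₁, x₄⁆ = 0 := by
  obtain ⟨x₁, x₂, x₃, hspan⟩ := exists_lc_one_le_span_pair hr₁
  have lie_eq_zero (x : L) {y : L} (hy : y ∈ lc k L 1) : ⁅x, y⁆ = 0 := by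
    simpa only [hr₂, mem_bot] using lie_mem_lc_succ x hy
  let K : Submodule k L := LinearMap.ker (LieAlgebra.ad k L x₁)
  have hB : span k {x₁} ⊔ lc k L 1 ≤ K :=
    sup_le ((span_singleton_le_iff_mem _ _).2 (lie_self x₁)) fun y hy => lie_eq_zero x₁ hy
  have hx₁ : x₁ ∉ lc k L 1 := by
    intro hx₁
    have hzero (y : L) : ⁅x₁, y⁆ = 0 := by rw [← lie_skew, lie_eq_zero y hx₁, neg_zero]
    rw [hzero, hzero, Set.pair_eq_singleton, span_zero_singleton, le_bot_iff] at hspan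
    rw [hspan, finrank_bot] at hr₁
    exact two_ne_zero hr₁.symm
  have hrange : lc k L 1 ≤ LinearMap.range (LieAlgebra.ad k L x₁) := by
    refine hspan.trans (span_le.2 ?_)
    rintro _ (rfl | rfl)
    · exact ⟨x₂, rfl⟩
    · exact ⟨x₃, rfl⟩
  have hKdim : finrank k K ≤ finrank k (span k {x₁} ⊔ lc k L 1 : Submodule k L) + 1 := by
    have hsum : _ + finrank k K = _ := (LieAlgebra.ad k L x₁).finrank_range_add_finrank_ker
    have hdim := finrank_mono hrange
    have hBdim := finrank_lt_finrank_of_lt (lt_span_singleton_sup hx₁)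
    lia
  obtain ⟨x₄, hx₄, hK⟩ := exists_singleton_span_sup hB hKdim
  refine ⟨x₁, x₂, x₃, x₄, fun w _ => ?_, hspan, hx₄⟩
  set S := span k {x₁, x₂, x₃, x₄} ⊔ lc k L 1
  have mem_S {x : L} (hx : x ∈ ({x₁, x₂, x₃, x₄} : Set L)) : x ∈ S :=
    mem_sup_left (subset_span hx)
  have hKS : K ≤ S := by
    refine hK.trans (sup_le ?_ (sup_le ?_ le_sup_right)) <;>
      exact (span_singleton_le_iff_mem _ _).2 (mem_S (by simp))
  obtain ⟨a, b, hab⟩ := mem_span_pair.1 (hspan (lie_mem_lc_one x₁ w))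
  have hw : w - (a • x₂ + b • x₃) ∈ K := by
    change ⁅x₁, w - (a • x₂ + b • x₃)⁆ = 0
    rw [lie_sub, lie_add, lie_smul, lie_smul, hab, sub_self]
  refine (sub_mem_iff_left S ?_).1 (hKS hw)
  exact add_mem (smul_mem _ a (mem_S (by simp))) (smul_mem _ b (mem_S (by simp)))

variable [LieRing.IsNilpotent L] {x₁ x₂ x₃ x₄ z w : L} {m b c α β : k}

theorem isModel_fourGenerators_twoStep_of_form_ne_zero (hL : finrank k L = 6)
    (hX : SpansLayer k 0 {x₁, x₂, x₃, x₄}) (h₁₂ : ⁅x₁, x₂⁆ = z) (h₁₃ : ⁅x₁, x₃⁆ = w)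
    (h₁₄ : ⁅x₁, x₄⁆ = 0) (h₂₃ : ⁅x₂, x₃⁆ = 0) (h₂₄ : ⁅x₂, x₄⁆ = m • z + b • w)
    (h₃₄ : ⁅x₃, x₄⁆ = c • z - m • w) (hz : ∀ x : L, ⁅x, z⁆ = 0) (hw : ∀ x : L, ⁅x, w⁆ = 0)
    (hΔ : c * β ^ 2 + 2 * m * (β * α) + -b * α ^ 2 ≠ 0) : IsModel k L := by
  have h₃₂ : ⁅x₃, x₂⁆ = 0 := by rw [← lie_skew, h₂₃, neg_zero]
  generalize hΔ' : c * β ^ 2 + 2 * m * (β * α) + -b * α ^ 2 = Δ at hΔ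
  refine isModel_of_relations hL .L6_22 (m ^ 2 + b * c)
    ![x₁, (α * m + β * c) • x₂ + (α * b - β * m) • x₃, α • x₂ + β • x₃, x₄,
      (α * m + β * c) • z + (α * b - β * m) • w, α • z + β • w] (hX.of_subset_span ?_) ?_
  · rintro x (rfl | rfl | rfl | rfl)
    · exact mem_span_range_of_eq ![1, 0, 0, 0, 0, 0] (by simp)
    · refine mem_span_range_of_eq ![0, β / Δ, -(α * b - β * m) / Δ, 0, 0, 0] ?_
      simp only [Matrix.cons_val]
      match_scalars <;> grind
    · refine mem_span_range_of_eq ![0, -α / Δ, (α * m + β * c) / Δ, 0, 0, 0] ?_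
      simp only [Matrix.cons_val]
      match_scalars <;> grind
    · exact mem_span_range_of_eq ![0, 0, 0, 1, 0, 0] (by simp)
  · simp only [forall_lt_fin_six, tableValue, lookup, Entry.eval, ModelType.table,
      List.find?_cons, List.find?_nil, Matrix.cons_val, Fin.reduceEq, Fin.isValue, and_self,
      and_true, and_false, decide_true, decide_false, cond_false, cond_true, lie_add, add_lie,
      lie_smul, smul_lie, h₁₂, h₁₃, h₁₄, h₂₃, h₃₂, h₂₄, h₃₄, hz, hw, lie_self, smul_zero, add_zero,
      true_and]
    and_intros <;> match_scalars <;> grind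

theorem isModel_fourGenerators_twoStep_of_traceless (h2 : (2 : k) ≠ 0) (hL : finrank k L = 6)
    (hX : SpansLayer k 0 {x₁, x₂, x₃, x₄}) (h₁₂ : ⁅x₁, x₂⁆ = z) (h₁₃ : ⁅x₁, x₃⁆ = w)
    (h₁₄ : ⁅x₁, x₄⁆ = 0) (h₂₃ : ⁅x₂, x₃⁆ = 0) (h₂₄ : ⁅x₂, x₄⁆ = m • z + b • w)
    (h₃₄ : ⁅x₃, x₄⁆ = c • z - m • w) (hz : ∀ x : L, ⁅x, z⁆ = 0) (hw : ∀ x : L, ⁅x, w⁆ = 0) :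
    IsModel k L := by
  by_cases hform : c ≠ 0 ∨ m ≠ 0 ∨ -b ≠ 0
  · obtain ⟨β, α, hΔ⟩ := exists_quadratic_ne_zero h2 hform
    exact isModel_fourGenerators_twoStep_of_form_ne_zero hL hX h₁₂ h₁₃ h₁₄ h₂₃ h₂₄ h₃₄ hz hw hΔ
  · push Not at hform
    obtain ⟨rfl, rfl, hb⟩ := hform
    obtain rfl : b = 0 := neg_eq_zero.1 hb
    have hz' (x : L) : ⁅z, x⁆ = 0 := by rw [← lie_skew, hz, neg_zero]
    refine isModel_of_relations hL .L5_8 0 ![x₁, x₂, x₃, z, w, x₄] (hX.of_subset_span ?_) ?_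
    · rintro x (rfl | rfl | rfl | rfl)
      · exact mem_span_range_of_eq ![1, 0, 0, 0, 0, 0] (by simp)
      · exact mem_span_range_of_eq ![0, 1, 0, 0, 0, 0] (by simp)
      · exact mem_span_range_of_eq ![0, 0, 1, 0, 0, 0] (by simp)
      · exact mem_span_range_of_eq ![0, 0, 0, 0, 0, 1] (by simp)
    · have hw' (x : L) : ⁅w, x⁆ = 0 := by rw [← lie_skew, hw, neg_zero]
      simp only [forall_lt_fin_six, tableValue, lookup, Entry.eval, ModelType.table,
        List.find?_cons, List.find?_nil, Matrix.cons_val, Fin.reduceEq, Fin.isValue, and_self,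
        and_true, and_false, decide_true, decide_false, cond_false, h₁₂, h₁₃, h₁₄, h₂₃, h₂₄, h₃₄,
        hz, hz', hw, hw', zero_smul, add_zero, sub_zero]

theorem isModel_fourGenerators_twoStep (h2 : (2 : k) ≠ 0) (hL : finrank k L = 6)
    (hr₁ : finrank k (lc k L 1) = 2) (hr₂ : lc k L 2 = ⊥) : IsModel k L := by
  obtain ⟨x₁, x₂, x₃, x₄, hX, hspan, h₁₄⟩ :=
    exists_generators_of_lc_one_le_span_pair hL hr₁ hr₂
  have central (x y u : L) : ⁅u, ⁅x, y⁆⁆ = 0 := by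
    simpa only [hr₂, mem_bot] using lie_mem_lc_succ u (lie_mem_lc_one (k := k) x y)
  have lie_eq (x y : L) : ∃ p q : k, p • ⁅x₁, x₂⁆ + q • ⁅x₁, x₃⁆ = ⁅x, y⁆ :=
    mem_span_pair.1 (hspan (lie_mem_lc_one x y))
  obtain ⟨p, q, h₂₃⟩ := lie_eq x₂ x₃
  obtain ⟨a, b, h₂₄⟩ := lie_eq x₂ x₄
  obtain ⟨c, d, h₃₄⟩ := lie_eq x₃ x₄
  obtain ⟨s, hs⟩ : ∃ s, s * 2 = a + d := ⟨_ / 2, div_mul_cancel₀ _ h2⟩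
  have h₂₁ : ⁅x₂, x₁⁆ = -⁅x₁, x₂⁆ := (lie_skew _ _).symm
  have h₃₁ : ⁅x₃, x₁⁆ = -⁅x₁, x₃⁆ := (lie_skew _ _).symm
  refine isModel_fourGenerators_twoStep_of_traceless (x₁ := x₁) (x₂ := x₂ - q • x₁)
    (x₃ := x₃ + p • x₁) (x₄ := x₄ + s • x₁) (z := ⁅x₁, x₂⁆) (w := ⁅x₁, x₃⁆) (m := a - s) (b := b)
    (c := c) h2 hL (hX.of_subset_span ?_) ?_ ?_ ?_ ?_ ?_ ?_ (central _ _) (central _ _)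
  · have mem_span {x : L} {t : k} {X : Set L} (hx : x + t • x₁ ∈ X) (h₁ : x₁ ∈ X) :
        x ∈ span k X :=
      (add_mem_cancel_right (smul_mem _ t (subset_span h₁))).1 (subset_span hx)
    rintro x (rfl | rfl | rfl | rfl)
    · exact subset_span (by simp)
    · exact mem_span (t := -q) (by simp [sub_eq_add_neg]) (by simp)
    · exact mem_span (t := p) (by simp) (by simp)
    · exact mem_span (t := s) (by simp) (by simp)
  all_goals
    simp only [lie_add, lie_sub, sub_lie, add_lie, lie_smul, smul_lie, h₁₄, ← h₂₃, ← h₂₄,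
      ← h₃₄, h₂₁, h₃₁, lie_self, smul_zero, add_zero, sub_zero]
  all_goals match_scalars <;> grind

end TwoStep

section Heisenberg

open Submodule

variable {k : Type*} [Field k] {L : Type*} [LieRing L] [LieAlgebra k L] {W : Submodule k L}
  {x y z : L}

/-- The vectors of `W` which commute with both `x` and `y`: the orthogonal complement of the plane
spanned by `x` and `y` for the alternating form given by the bracket, when the derived algebra is a
line. -/
def centralizerPair (W : Submodule k L) (x y : L) : Submodule k L :=
  W ⊓ LinearMap.ker (LieAlgebra.ad k L x) ⊓ LinearMap.ker (LieAlgebra.ad k L y)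

theorem mem_centralizerPair {w : L} :
    w ∈ centralizerPair W x y ↔ w ∈ W ∧ ⁅x, w⁆ = 0 ∧ ⁅y, w⁆ = 0 := by
  simp [centralizerPair, and_assoc]

theorem le_span_pair_sup_centralizerPair (hx : x ∈ W) (hy : y ∈ W)
    (hz : ∀ u v : L, ⁅u, v⁆ ∈ span k {z}) (hxy : ⁅x, y⁆ = z) :
    W ≤ span k {x, y} ⊔ centralizerPair W x y := by
  intro w hw
  obtain ⟨a, ha⟩ := mem_span_singleton.1 (hz x w)
  obtain ⟨b, hb⟩ := mem_span_singleton.1 (hz y w)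
  have hyx : ⁅y, x⁆ = -z := by rw [← lie_skew, hxy]
  refine mem_sup.2 ⟨-b • x + a • y, mem_span_pair.2 ⟨-b, a, rfl⟩, w - (-b • x + a • y),
    mem_centralizerPair.2 ⟨?_, ?_, ?_⟩, add_sub_cancel _ _⟩
  · exact sub_mem hw (add_mem (W.smul_mem _ hx) (W.smul_mem _ hy))
  · rw [lie_sub, lie_add, lie_smul, lie_smul, lie_self, hxy, smul_zero, zero_add, ha, sub_self]
  · rw [lie_sub, lie_add, lie_smul, lie_smul, lie_self, hyx, smul_zero, add_zero, neg_smul_neg, hb,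
      sub_self]

theorem lc_one_le_centralizerPair (hr₂ : lc k L 2 = ⊥) (hW : lc k L 1 ≤ W) :
    lc k L 1 ≤ centralizerPair W x y := by
  have lie_eq_zero (x : L) {v : L} (hv : v ∈ lc k L 1) : ⁅x, v⁆ = 0 := by
    simpa only [hr₂, mem_bot] using lie_mem_lc_succ x hv
  exact fun v hv => mem_centralizerPair.2 ⟨hW hv, lie_eq_zero x hv, lie_eq_zero y hv⟩

theorem exists_lie_ne_zero (hr₁ : finrank k (lc k L 1) = 1) : ∃ x y : L, ⁅x, y⁆ ≠ 0 := by
  by_contra! h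
  have hbot : lc k L 1 ≤ ⊥ := lc_succ_le_iff.2 fun x y _ => (mem_bot k).2 (h x y)
  rw [le_bot_iff.1 hbot, finrank_bot] at hr₁
  exact zero_ne_one hr₁

variable [Module.Finite k L]

theorem finrank_centralizerPair_add_two_le (hx : x ∈ W) (hy : y ∈ W) (hxy : ⁅x, y⁆ ≠ 0) :
    finrank k (centralizerPair W x y) + 2 ≤ finrank k W := by
  have hyx : ⁅y, x⁆ ≠ 0 := lie_skew y x ▸ neg_ne_zero.2 hxy
  have hlt₁ : centralizerPair W x y < W ⊓ LinearMap.ker (LieAlgebra.ad k L x) :=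
    lt_of_le_of_ne inf_le_left fun h =>
      hyx (mem_centralizerPair.1 (h.ge ⟨hx, lie_self x⟩)).2.2
  have hlt₂ : W ⊓ LinearMap.ker (LieAlgebra.ad k L x) < W :=
    lt_of_le_of_ne inf_le_left fun h => hxy (h.ge hy).2
  have hdim₁ := finrank_lt_finrank_of_lt hlt₁
  have hdim₂ := finrank_lt_finrank_of_lt hlt₂
  lia

theorem lie_mem_span_singleton (hr₁ : finrank k (lc k L 1) = 1) (hxy : ⁅x, y⁆ ≠ 0) (u v : L) :
    ⁅u, v⁆ ∈ span k {⁅x, y⁆} := by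
  have hle := le_span_singleton_sup bot_le (by rw [hr₁, finrank_bot]) (lie_mem_lc_one (k := k) x y)
    (mt (mem_bot k).1 hxy)
  rw [sup_bot_eq] at hle
  exact hle (lie_mem_lc_one u v)

variable [LieRing.IsNilpotent L] {x₁ x₂ x₃ x₄ x₅ : L}

theorem isModel_fiveGenerators_of_abelian (hL : finrank k L = 6)
    (hr₁ : finrank k (lc k L 1) = 1) (hle : lc k L 1 ≤ W) (hdim : finrank k W ≤ 4)
    (hspan : ⊤ ≤ span k {x₁, x₂} ⊔ W) (h₁₂ : ⁅x₁, x₂⁆ = z) (h₁ : ∀ w ∈ W, ⁅x₁, w⁆ = 0)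
    (h₂ : ∀ w ∈ W, ⁅x₂, w⁆ = 0) (hW : ∀ x ∈ W, ∀ y ∈ W, ⁅x, y⁆ = 0)
    (hz : ∀ x : L, ⁅x, z⁆ = 0) : IsModel k L := by
  obtain ⟨a, ha, b, hb, c, hc, hWspan⟩ := exists_triple_span_sup hle (by lia)
  have hX : SpansLayer k 0 ({x₁, x₂} ∪ {a, b, c}) := by
    rw [SpansLayer, span_union, sup_assoc]
    exact hspan.trans (sup_le_sup_left hWspan _)
  have hz' (x : L) : ⁅z, x⁆ = 0 := by rw [← lie_skew, hz, neg_zero]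
  refine isModel_of_relations hL .L5_2 0 ![x₁, x₂, z, a, b, c] (hX.of_subset_span ?_) ?_
  · rintro x ((rfl | rfl) | (rfl | rfl | rfl))
    · exact mem_span_range_of_eq ![1, 0, 0, 0, 0, 0] (by simp)
    · exact mem_span_range_of_eq ![0, 1, 0, 0, 0, 0] (by simp)
    · exact mem_span_range_of_eq ![0, 0, 0, 1, 0, 0] (by simp)
    · exact mem_span_range_of_eq ![0, 0, 0, 0, 1, 0] (by simp)
    · exact mem_span_range_of_eq ![0, 0, 0, 0, 0, 1] (by simp)
  · simp only [forall_lt_fin_six, tableValue, lookup, Entry.eval, ModelType.table,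
      List.find?_cons, List.find?_nil, Matrix.cons_val, Fin.reduceEq, Fin.isValue, and_self,
      and_true, and_false, decide_true, decide_false, cond_false, h₁₂, hz, hz', h₁ a ha, h₁ b hb,
      h₁ c hc, h₂ a ha, h₂ b hb, h₂ c hc, hW a ha b hb, hW a ha c hc, hW b hb c hc]

theorem isModel_fiveGenerators_of_two_planes (hL : finrank k L = 6)
    (hX : SpansLayer k 0 {x₁, x₂, x₃, x₄, x₅}) (h₁₂ : ⁅x₁, x₂⁆ = z) (h₁₃ : ⁅x₁, x₃⁆ = 0)
    (h₁₄ : ⁅x₁, x₄⁆ = 0) (h₁₅ : ⁅x₁, x₅⁆ = 0) (h₂₃ : ⁅x₂, x₃⁆ = 0) (h₂₄ : ⁅x₂, x₄⁆ = 0)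
    (h₂₅ : ⁅x₂, x₅⁆ = 0) (h₃₄ : ⁅x₃, x₄⁆ = z) (h₃₅ : ⁅x₃, x₅⁆ = 0) (h₄₅ : ⁅x₄, x₅⁆ = 0)
    (hz : ∀ x : L, ⁅x, z⁆ = 0) : IsModel k L := by
  have hz' (x : L) : ⁅z, x⁆ = 0 := by rw [← lie_skew, hz, neg_zero]
  refine isModel_of_relations hL .L5_4 0 ![x₁, x₂, x₃, x₄, z, x₅] (hX.of_subset_span ?_) ?_
  · rintro x (rfl | rfl | rfl | rfl | rfl)
    · exact mem_span_range_of_eq ![1, 0, 0, 0, 0, 0] (by simp)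
    · exact mem_span_range_of_eq ![0, 1, 0, 0, 0, 0] (by simp)
    · exact mem_span_range_of_eq ![0, 0, 1, 0, 0, 0] (by simp)
    · exact mem_span_range_of_eq ![0, 0, 0, 1, 0, 0] (by simp)
    · exact mem_span_range_of_eq ![0, 0, 0, 0, 0, 1] (by simp)
  · simp only [forall_lt_fin_six, tableValue, lookup, Entry.eval, ModelType.table,
      List.find?_cons, List.find?_nil, Matrix.cons_val, Fin.reduceEq, Fin.isValue, and_self,
      and_true, and_false, decide_true, decide_false, cond_false, h₁₂, h₁₃, h₁₄, h₁₅, h₂₃, h₂₄,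
      h₂₅, h₃₄, h₃₅, h₄₅, hz, hz']

theorem isModel_fiveGenerators (hL : finrank k L = 6) (hr₁ : finrank k (lc k L 1) = 1)
    (hr₂ : lc k L 2 = ⊥) : IsModel k L := by
  obtain ⟨x₁, x₂, hne⟩ := exists_lie_ne_zero hr₁
  have hspan := lie_mem_span_singleton hr₁ hne
  have hz (x : L) : ⁅x, ⁅x₁, x₂⁆⁆ = 0 := by
    simpa only [hr₂, mem_bot] using lie_mem_lc_succ x (lie_mem_lc_one (k := k) x₁ x₂)
  generalize h₁₂ : ⁅x₁, x₂⁆ = z at *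
  set W := centralizerPair (⊤ : Submodule k L) x₁ x₂
  have hWle : lc k L 1 ≤ W := lc_one_le_centralizerPair hr₂ le_top
  have hWdim : finrank k W + 2 ≤ finrank k (⊤ : Submodule k L) :=
    finrank_centralizerPair_add_two_le mem_top mem_top (h₁₂ ▸ hne)
  rw [finrank_top, hL] at hWdim
  have htop : ⊤ ≤ span k {x₁, x₂} ⊔ W :=
    le_span_pair_sup_centralizerPair mem_top mem_top hspan h₁₂
  have h₁ (w : L) (hw : w ∈ W) : ⁅x₁, w⁆ = 0 := (mem_centralizerPair.1 hw).2.1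
  have h₂ (w : L) (hw : w ∈ W) : ⁅x₂, w⁆ = 0 := (mem_centralizerPair.1 hw).2.2
  by_cases hab : ∀ x ∈ W, ∀ y ∈ W, ⁅x, y⁆ = 0
  · exact isModel_fiveGenerators_of_abelian hL hr₁ hWle (by lia) htop h₁₂ h₁ h₂ hab hz
  push Not at hab
  obtain ⟨x₃, hx₃, w, hw, hne₃⟩ := hab
  obtain ⟨t, ht⟩ := mem_span_singleton.1 (hspan x₃ w)
  have ht₀ : t ≠ 0 := fun h => hne₃ (by rw [← ht, h, zero_smul])
  have h₃₄ : ⁅x₃, t⁻¹ • w⁆ = z := by rw [lie_smul, ← ht, inv_smul_smul₀ ht₀]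
  have hx₄ : t⁻¹ • w ∈ W := W.smul_mem _ hw
  generalize t⁻¹ • w = x₄ at h₃₄ hx₄
  have hdim := finrank_centralizerPair_add_two_le hx₃ hx₄ (h₃₄ ▸ hne)
  obtain ⟨x₅, hx₅, hV⟩ := exists_singleton_span_sup
    (lc_one_le_centralizerPair (x := x₃) (y := x₄) hr₂ hWle) (by lia)
  obtain ⟨hx₅W, h₃₅, h₄₅⟩ := mem_centralizerPair.1 hx₅
  have hX : SpansLayer k 0 ({x₁, x₂} ∪ ({x₃, x₄} ∪ {x₅})) := by
    rw [SpansLayer, span_union, span_union, sup_assoc, sup_assoc]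
    exact htop.trans (sup_le_sup_left ((le_span_pair_sup_centralizerPair hx₃ hx₄ hspan h₃₄).trans
      (sup_le_sup_left hV _)) _)
  simp only [Set.insert_union, Set.singleton_union] at hX
  exact isModel_fiveGenerators_of_two_planes hL hX h₁₂ (h₁ x₃ hx₃) (h₁ x₄ hx₄) (h₁ x₅ hx₅W)
    (h₂ x₃ hx₃) (h₂ x₄ hx₄) (h₂ x₅ hx₅W) h₃₄ h₃₅ h₄₅ hz

theorem isModel_of_lc_one_eq_bot (hL : finrank k L = 6) (hr₁ : lc k L 1 = ⊥) : IsModel k L := by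
  obtain ⟨v, -, hv⟩ := exists_span_sup 6 (bot_le : ⊥ ≤ (⊤ : Submodule k L))
    (by rw [finrank_top, finrank_bot, hL])
  have lie_eq_zero (x y : L) : ⁅x, y⁆ = 0 := by
    simpa only [hr₁, mem_bot] using lie_mem_lc_one (k := k) x y
  refine isModel_of_relations hL .L5_1 0 v (by rw [SpansLayer, hr₁]; exact hv) fun i j _ => ?_
  rw [lie_eq_zero]
  rfl

end Heisenberg

section Dimensions

variable {k : Type*} [Field k] {L : Type*} [LieRing L] [LieAlgebra k L] [Module.Finite k L]

theorem SpansLayer.finrank_le {m : ℕ} {X : Set L} [Finite X] (hX : SpansLayer k m X) :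
    finrank k (lc k L m) ≤ finrank k (lc k L (m + 1)) + X.ncard := by
  have : Fintype X := Fintype.ofFinite X
  calc finrank k (lc k L m)
      ≤ finrank k ↥(Submodule.span k X ⊔ lc k L (m + 1)) := Submodule.finrank_mono hX
    _ ≤ finrank k (Submodule.span k X) + finrank k (lc k L (m + 1)) :=
      Submodule.finrank_add_le_finrank_add_finrank _ _
    _ ≤ X.ncard + finrank k (lc k L (m + 1)) := by
      rw [Set.ncard_eq_toFinset_card']
      exact Nat.add_le_add_right (finrank_span_le_card X) _
    _ = finrank k (lc k L (m + 1)) + X.ncard := add_comm _ _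

theorem SpansLayer.finrank_le_add_one {m : ℕ} {x : L} (hX : SpansLayer k m {x}) :
    finrank k (lc k L m) ≤ finrank k (lc k L (m + 1)) + 1 := by
  simpa only [Set.ncard_singleton] using hX.finrank_le

theorem SpansLayer.finrank_le_add_two {m : ℕ} {x y : L} (hX : SpansLayer k m {x, y}) :
    finrank k (lc k L m) ≤ finrank k (lc k L (m + 1)) + 2 :=
  hX.finrank_le.trans (Nat.add_le_add_left
    ((Set.ncard_insert_le x {y}).trans_eq (by rw [Set.ncard_singleton])) _)

variable [LieRing.IsNilpotent L]

theorem finrank_lc_one_add_two_le (hr₀ : 2 ≤ finrank k L) :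
    finrank k (lc k L 1) + 2 ≤ finrank k L := by
  have hr : finrank k (lc k L 0) = finrank k L := finrank_top k L
  have hlt₀ : finrank k (lc k L 1) < finrank k (lc k L 0) := finrank_lc_succ_lt (by lia)
  by_contra! h
  obtain ⟨x, -, hX⟩ := exists_singleton_span_sup (le_top : lc k L 1 ≤ ⊤)
    (by rw [finrank_top]; lia)
  have hle : lc k L 1 ≤ lc k L 2 := by
    refine SpansLayer.lc_succ_le hX hX ?_ le_rfl
    rintro x rfl y rfl
    rw [lie_self]
    exact zero_mem _
  exact (finrank_lc_succ_lt (by lia)).not_ge (Submodule.finrank_mono hle)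

theorem isModel_of_finrank_lc_one_eq_four (h2 : (2 : k) ≠ 0) (hL : finrank k L = 6)
    (hr₁ : finrank k (lc k L 1) = 4) : IsModel k L := by
  have hlt (m : ℕ) := finrank_lc_succ_lt (k := k) (L := L) (m := m)
  obtain ⟨x₁, x₂, hX⟩ := exists_spansLayer_pair (k := k) (L := L) (by lia)
  have hr₂ : finrank k (lc k L 2) = 3 := by
    have := hX.lie_pair.finrank_le_add_one
    have := hlt 1
    lia
  have hr₃ := (hX.pair_lie hX.lie_pair).finrank_le_add_two
  have hlt₂ := hlt 2
  have hlt₃ := hlt 3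
  have hlt₄ := hlt 4
  by_cases hr₃' : finrank k (lc k L 3) = 1
  · exact isModel_twoGenerators h2 hL hr₁ hr₃' (Submodule.finrank_eq_zero.1 (by lia))
  · obtain ⟨y₁, y₂, -, -, hY₃⟩ := hX.exists_adapted_pair (by lia)
    have hr₄ := hY₃.finrank_le_add_one
    exact isModel_maximalClass h2 hL hr₁ hr₂ (by lia) (by lia)
      (Submodule.finrank_eq_zero.1 (by lia))

theorem isModel_of_finrank_lc_one_eq_three (h2 : (2 : k) ≠ 0) (hL : finrank k L = 6)
    (hr₁ : finrank k (lc k L 1) = 3) : IsModel k L := by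
  have hlt (m : ℕ) := finrank_lc_succ_lt (k := k) (L := L) (m := m)
  have hlt₁ := hlt 1
  have hlt₂ := hlt 2
  have hlt₃ := hlt 3
  have hr₂ : finrank k (lc k L 2) = 0 ∨ finrank k (lc k L 2) = 1 ∨ finrank k (lc k L 2) = 2 := by
    lia
  rcases hr₂ with hr₂ | hr₂ | hr₂
  · exact isModel_freeTwoStep hL hr₁ (Submodule.finrank_eq_zero.1 hr₂)
  · exact isModel_threeGenerators h2 hL hr₁ hr₂ (Submodule.finrank_eq_zero.1 (by lia))
  · by_cases hr₃ : finrank k (lc k L 3) = 0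
    · exact isModel_threeGenerators_classThree h2 hL hr₁ hr₂ (Submodule.finrank_eq_zero.1 hr₃)
    · exact isModel_threeGenerators_classFour h2 hL hr₁ hr₂ (by lia)
        (Submodule.finrank_eq_zero.1 (by lia))

theorem isModel_of_finrank_eq_six (h2 : (2 : k) ≠ 0) (hL : finrank k L = 6) : IsModel k L := by
  have hle := finrank_lc_one_add_two_le (k := k) (L := L) (by lia)
  have hlt₁ := finrank_lc_succ_lt (k := k) (L := L) (m := 1)
  have hlt₂ := finrank_lc_succ_lt (k := k) (L := L) (m := 2)
  have hr₁ : finrank k (lc k L 1) = 0 ∨ finrank k (lc k L 1) = 1 ∨ finrank k (lc k L 1) = 2 ∨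
      finrank k (lc k L 1) = 3 ∨ finrank k (lc k L 1) = 4 := by
    lia
  rcases hr₁ with hr₁ | hr₁ | hr₁ | hr₁ | hr₁
  · exact isModel_of_lc_one_eq_bot hL (Submodule.finrank_eq_zero.1 hr₁)
  · exact isModel_fiveGenerators hL hr₁ (Submodule.finrank_eq_zero.1 (by lia))
  · by_cases hr₂ : finrank k (lc k L 2) = 0
    · exact isModel_fourGenerators_twoStep h2 hL hr₁ (Submodule.finrank_eq_zero.1 hr₂)
    · exact isModel_fourGenerators hL hr₁ (by lia) (Submodule.finrank_eq_zero.1 (by lia))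
  · exact isModel_of_finrank_lc_one_eq_three h2 hL hr₁
  · exact isModel_of_finrank_lc_one_eq_four h2 hL hr₁

end Dimensions

section Count

variable {k : Type*} [Field k] {n : ℕ} {br : (Fin n → k) → (Fin n → k) → (Fin n → k)}

theorem bracketIso_equivalence : Equivalence (BracketIso (k := k) (n := n)) where
  refl _ := ⟨LinearEquiv.refl k _, fun _ _ => rfl⟩
  symm := fun ⟨e, he⟩ => ⟨e.symm, fun x y => e.injective (by simp [he])⟩
  trans := fun ⟨e, he⟩ ⟨e', he'⟩ => ⟨e.trans e', fun x y => by simp [he, he']⟩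

theorem lcs_eq_lc (h : IsLieBracket k br) (m : ℕ) : lcs br m = lc k (BracketSpace h) m := by
  induction m with
  | zero => rfl
  | succ m ih =>
    rw [lcs, ih]
    exact (lc_succ_eq_span (L := BracketSpace h) m).symm

theorem isNilpotent_bracketSpace (h : IsLieBracket k br) (hn : IsNilpotentBracket br) :
    LieRing.IsNilpotent (BracketSpace h) := by
  obtain ⟨m, hm⟩ := hn
  refine (LieModule.isNilpotent_iff k _ _).2 ⟨m, ?_⟩
  rw [← LieSubmodule.toSubmodule_eq_bot]
  exact (lcs_eq_lc h m).symm.trans hm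

/-- The isomorphism classes of nilpotent Lie algebra structures on `kⁿ`. -/
abbrev IsoClass (k : Type*) [Field k] (n : ℕ) : Type _ :=
  Quot fun L L' : NilpLieStr k n => BracketIso L.1 L'.1

theorem isoClass_mk_eq_iff {L L' : NilpLieStr k n} :
    (Quot.mk _ L : IsoClass k n) = Quot.mk _ L' ↔ BracketIso L.1 L'.1 :=
  ((bracketIso_equivalence.comap Subtype.val).quot_mk_eq_iff L L')

/-- The isomorphism class of `Model ε m`. -/
def modelClass (ε : k) (m : ModelType) : IsoClass k 6 :=
  Quot.mk _ ⟨tableBracket ε m.table, isLieBracket_tableBracket (tableBracket_jacobi ε m),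
    isNilpotentBracket_tableBracket m.lt_value_of_mem_table⟩

theorem modelClass_eq_iff (h2 : (2 : k) ≠ 0) {ε δ : k} {m m' : ModelType} :
    modelClass ε m = modelClass δ m' ↔ m = m' ∧ (m.IsFamily → ∃ s : kˣ, ε = s ^ 2 * δ) :=
  isoClass_mk_eq_iff.trans (Model.bracketIso_iff h2)

theorem exists_modelClass_eq (h2 : (2 : k) ≠ 0) (c : IsoClass k 6) :
    ∃ ε m, modelClass ε m = c := by
  obtain ⟨br, h, hn⟩ := c
  have := isNilpotent_bracketSpace h hn
  obtain ⟨m, ε, e⟩ := isModel_of_finrank_eq_six h2 (BracketSpace.finrank_eq h)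
  exact ⟨ε, m, isoClass_mk_eq_iff.2 ((nonempty_lieEquiv_iff_bracketIso _ h).1 e)⟩

variable (k) in
/-- The group of units of `k` modulo squares. -/
abbrev SquareClass : Type _ :=
  kˣ ⧸ (powMonoidHom 2 : kˣ →* kˣ).range

theorem squareClass_mk_eq_iff {u v : kˣ} :
    (u : SquareClass k) = v ↔ ∃ s : kˣ, (u : k) = s ^ 2 * v := by
  rw [eq_comm, QuotientGroup.eq]
  refine exists_congr fun s => ?_
  rw [powMonoidHom_apply, eq_inv_mul_iff_mul_eq, eq_comm, mul_comm, Units.ext_iff]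
  push_cast
  rfl

/-- A representative in `k` of an orbit of `(kˣ)²` on `k`: either zero or a square class. -/
noncomputable def orbitRep : Option (SquareClass k) → k
  | none => 0
  | some q => (q.out : kˣ)

theorem orbitRep_injective {p q : Option (SquareClass k)}
    (h : ∃ s : kˣ, orbitRep p = s ^ 2 * orbitRep q) : p = q := by
  obtain ⟨s, hs⟩ := h
  cases p with
  | none => cases q with
    | none => rfl
    | some q => simp [orbitRep] at hs
  | some p => cases q with
    | none => simp [orbitRep] at hs
    | some q =>
      rw [← QuotientGroup.out_eq' p, ← QuotientGroup.out_eq' q]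
      exact congrArg some (squareClass_mk_eq_iff.2 ⟨s, hs⟩)

theorem exists_orbitRep (ε : k) :
    ∃ q : Option (SquareClass k), ∃ s : kˣ, orbitRep q = s ^ 2 * ε := by
  by_cases hε : ε = 0
  · exact ⟨none, 1, by rw [hε, mul_zero]; rfl⟩
  · let u := Units.mk0 ε hε
    exact ⟨some u, squareClass_mk_eq_iff.1 (QuotientGroup.out_eq' (u : SquareClass k))⟩

variable (k) in
/-- The index type of the classification. The algebras of the types which are not families do not
depend on the parameter. -/
abbrev ClassIndex : Type _ :=
  {m : ModelType // ¬m.IsFamily} ⊕ {m : ModelType // m.IsFamily} × Option (SquareClass k)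

/-- The isomorphism class with a given index. -/
noncomputable def indexedClass : ClassIndex k → IsoClass k 6
  | .inl m => modelClass 0 m
  | .inr (m, q) => modelClass (orbitRep q) m

theorem indexedClass_injective (h2 : (2 : k) ≠ 0) :
    Function.Injective (indexedClass (k := k)) := by
  rintro (⟨m, hm⟩ | ⟨⟨m, hm⟩, p⟩) (⟨m', hm'⟩ | ⟨⟨m', hm'⟩, q⟩) h <;>
    obtain ⟨rfl, hs⟩ := (modelClass_eq_iff h2).1 h
  · rfl
  · exact absurd hm' hm
  · exact absurd hm hm'
  · rw [orbitRep_injective (hs hm)]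

theorem indexedClass_surjective (h2 : (2 : k) ≠ 0) :
    Function.Surjective (indexedClass (k := k)) := by
  intro c
  obtain ⟨ε, m, rfl⟩ := exists_modelClass_eq h2 c
  by_cases hm : m.IsFamily
  · obtain ⟨q, hq⟩ := exists_orbitRep ε
    exact ⟨.inr (⟨m, hm⟩, q), (modelClass_eq_iff h2).2 ⟨rfl, fun _ => hq⟩⟩
  · exact ⟨.inl ⟨m, hm⟩, (modelClass_eq_iff h2).2 ⟨rfl, fun h => absurd h hm⟩⟩

theorem mk_classIndex :
    Cardinal.mk (ClassIndex k) = 26 + 4 * Cardinal.mk (SquareClass k) := by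
  have card_rigid : Fintype.card {m : ModelType // ¬m.IsFamily} = 22 := by decide
  have card_family : Fintype.card {m : ModelType // m.IsFamily} = 4 := by decide
  have h26 : (26 : Cardinal) = 22 + 4 := by norm_num
  simp only [Cardinal.mk_sum, Cardinal.mk_prod, Cardinal.mk_option, Cardinal.mk_fintype,
    card_rigid, card_family, Cardinal.lift_uzero, Nat.cast_ofNat,
    Cardinal.lift_ofNat]
  rw [mul_add, mul_one, h26, add_assoc, add_comm (4 * _)]

end Count

end NilpotentLie

theorem nilpotent_lie_dim6_card_general (k : Type*) [Field k] (hk : (2 : k) ≠ 0) :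
    Cardinal.mk (Quot (fun L L' : NilpLieStr k 6 => BracketIso L.1 L'.1)) =
      26 + 4 * Cardinal.mk (kˣ ⧸ (powMonoidHom 2 : kˣ →* kˣ).range) :=
  (Cardinal.mk_congr (Equiv.ofBijective _ ⟨NilpotentLie.indexedClass_injective hk,
    NilpotentLie.indexedClass_surjective hk⟩)).symm.trans NilpotentLie.mk_classIndex

/-- Over any field `k` with `char k ≠ 2`, the number of isomorphism
classes of 6-dimensional nilpotent Lie algebras equals `26 + 4r`, where `r` is the
cardinality of `k*/(k*)²` (the units modulo squares). -/
theorem nilpotent_lie_dim6_card (k : Type) [Field k] (hk : (2 : k) ≠ 0) :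
    Cardinal.mk (Quot (fun L L' : NilpLieStr k 6 => BracketIso L.1 L'.1)) =
      26 + 4 * Cardinal.mk (kˣ ⧸ (powMonoidHom 2 : kˣ →* kˣ).range) :=
  nilpotent_lie_dim6_card_general k hk
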